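/- arXiv:1406.0969 — 3 statements merged into one kernel-verified Lean document; each statement's English description precedes it below -/
import Mathlib

section
/- Let 0 < ν ≤ 1/2. Then there exists n₀ such that for all n ≥ n₀ the Hankel determinant Δ_n is nonzero (so the polynomial P_n exists), and the rescaled zeros of P_n equidistribute according to the density ψ: for every bounded continuous function f : ℂ → ℝ, lim_{n→∞} (1/n) ∑_z f(z/(iπn)) = ∫_{−1}^1 f(x) ψ(x) dx, where the sum is over the n roots z of P_n in ℂ counted with multiplicity. -/
open MeasureTheory Filter Real

/-- The limiting moments `m_j = 2^j Γ((1+ν+j)/2)/Γ((1+ν−j)/2)` of the Bessel weight `J_ν`. -/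
noncomputable def besselMoment (ν : ℝ) (j : ℕ) : ℝ :=
  2 ^ j * Real.Gamma ((1 + ν + j) / 2) / Real.Gamma ((1 + ν - j) / 2)

/-- The Hankel determinant `Δ_n = det [m_{i+j}]_{i,j=0}^{n-1}`. -/
noncomputable def hankelDet (ν : ℝ) (n : ℕ) : ℝ :=
  Matrix.det (Matrix.of fun i j : Fin n => besselMoment ν (i + j))

/-- `P` is the monic polynomial of degree `n` orthogonal with respect to the Bessel
weight `J_ν` in the regularized sense of Asheim–Huybrechs: its coefficients `c_k`
satisfy `∑_{k=0}^n c_k m_{j+k} = 0` for `j = 0, …, n-1`. -/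
def IsBesselOP (ν : ℝ) (n : ℕ) (P : Polynomial ℂ) : Prop :=
  P.Monic ∧ P.natDegree = n ∧
    ∀ j < n, ∑ k ∈ Finset.range (n + 1), P.coeff k * (besselMoment ν (j + k) : ℂ) = 0

/-- The equilibrium density `ψ(x) = (1/π) log((1+√(1-x²))/|x|)`. -/
noncomputable def psiDens (x : ℝ) : ℝ :=
  (1 / π) * Real.log ((1 + Real.sqrt (1 - x ^ 2)) / |x|)

/-!
Turning the contour of integration onto the imaginary axis replaces `J_ν` by `K_ν (|y|)` times a
phase `exp (∓ π i ν / 2)`. The real part of the phase is the positive constant `cos (π ν / 2)`, so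
`p (y) = (-i) ^ n P_n (i y)` is, up to a constant factor, extremal for the positive weight
`K_ν (|y|)`, and in particular exists; the imaginary part is odd, which forces all zeros of `p`
into one half plane.

The weight `K_ν (|y|)` is comparable, up to powers of the degree, with `1 / (π cosh y)`, whose
orthogonal polynomials are Meixner–Pollaczek polynomials with the explicit recurrence
`y q_k = q_{k+1} + (π k / 2) ^ 2 q_{k-1}`. Hence the zeros of `p` have size `O(n)`, and
`|p| ≤ C (n + 1) ^ 2 |q_n|` away from the origin. The power sums of the zeros of two monic
polynomials are the Taylor coefficients at infinity of the logarithm of their quotient, so by the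
Borel–Carathéodory inequality such a polynomial bound makes the rescaled moments agree in the limit.
For `q_n` the power sums are traces of powers of a Jacobi matrix, which count weighted walks and
have in the limit the moments of `ψ`.

Finally, the moments determine the limit although the zeros are not real: as the imaginary parts
have constant sign, the limit of the first moment being real makes their mean tend to `0`.
-/

namespace BesselZeros

/-! ### The Beta integral on the line -/

section BetaIntegral

variable {s t : ℝ}

lemma sigmoid_two_mul (x : ℝ) : sigmoid (2 * x) = exp x / (2 * cosh x) := by
  have hexp : exp (-(2 * x)) = exp (-x) / exp x := by rw [← exp_sub]; ring_nf
  rw [sigmoid_def, cosh_eq, hexp]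
  have := exp_pos x
  field_simp

lemma one_sub_sigmoid_two_mul (x : ℝ) : 1 - sigmoid (2 * x) = exp (-x) / (2 * cosh x) := by
  rw [← sigmoid_neg, ← mul_neg, sigmoid_two_mul, cosh_neg]

lemma range_sigmoid_two_mul : Set.range (fun x : ℝ ↦ sigmoid (2 * x)) = Set.Ioo 0 1 := by
  rw [← range_sigmoid]
  exact (mul_left_surjective₀ two_ne_zero).range_comp sigmoid

lemma hasDerivAt_sigmoid_two_mul (x : ℝ) :
    HasDerivAt (fun x ↦ sigmoid (2 * x)) (2 * (sigmoid (2 * x) * (1 - sigmoid (2 * x)))) x := by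
  have h := (hasDerivAt_sigmoid (2 * x)).comp x ((hasDerivAt_id x).const_mul 2)
  exact h.congr_deriv (by rw [mul_one, mul_comm])

lemma ofReal_betaKernel {x : ℝ} (hx : x ∈ Set.Ioo (0 : ℝ) 1) :
    (x : ℂ) ^ ((s : ℂ) - 1) * (1 - (x : ℂ)) ^ ((t : ℂ) - 1)
      = ((x ^ (s - 1) * (1 - x) ^ (t - 1) : ℝ) : ℂ) := by
  have h : 0 ≤ 1 - x := sub_nonneg.2 hx.2.le
  push_cast [Complex.ofReal_cpow hx.1.le, Complex.ofReal_cpow h]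
  rfl

lemma integrableOn_betaKernel (hs : 0 < s) (ht : 0 < t) :
    IntegrableOn (fun x : ℝ ↦ x ^ (s - 1) * (1 - x) ^ (t - 1)) (Set.Ioo 0 1) := by
  have h := Complex.betaIntegral_convergent (u := s) (v := t) (by simpa) (by simpa)
  rw [intervalIntegrable_iff_integrableOn_Ioo_of_le zero_le_one] at h
  have hre := (h.congr_fun (fun x hx ↦ ofReal_betaKernel hx) measurableSet_Ioo).re
  simpa [IntegrableOn] using hre

lemma integral_betaKernel (hs : 0 < s) (ht : 0 < t) :
    ∫ x in Set.Ioo (0 : ℝ) 1, x ^ (s - 1) * (1 - x) ^ (t - 1)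
      = Gamma s * Gamma t / Gamma (s + t) := by
  have h := ProbabilityTheory.beta_eq_betaIntegralReal s t hs ht
  rw [ProbabilityTheory.beta, Complex.betaIntegral,
    intervalIntegral.integral_of_le zero_le_one, integral_Ioc_eq_integral_Ioo,
    setIntegral_congr_fun measurableSet_Ioo fun x hx ↦ ofReal_betaKernel hx,
    integral_complex_ofReal, Complex.ofReal_re] at h
  exact h.symm

lemma jacobian_mul_betaKernel_sigmoid (s t x : ℝ) :
    |2 * (sigmoid (2 * x) * (1 - sigmoid (2 * x)))| •
        (sigmoid (2 * x) ^ (s - 1) * (1 - sigmoid (2 * x)) ^ (t - 1))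
      = 2 * (exp ((s - t) * x) / (2 * cosh x) ^ (s + t)) := by
  have hcosh : 0 < 2 * cosh x := by have := cosh_pos x; positivity
  have h₀ : 0 < sigmoid (2 * x) := sigmoid_pos _
  have h₁ : 0 < 1 - sigmoid (2 * x) := sub_pos.2 (sigmoid_lt_one _)
  calc |2 * (sigmoid (2 * x) * (1 - sigmoid (2 * x)))| •
        (sigmoid (2 * x) ^ (s - 1) * (1 - sigmoid (2 * x)) ^ (t - 1))
      = 2 * (sigmoid (2 * x) ^ s * (1 - sigmoid (2 * x)) ^ t) := by
        rw [abs_of_pos (by positivity), smul_eq_mul, rpow_sub_one h₀.ne', rpow_sub_one h₁.ne']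
        field_simp
    _ = 2 * (exp ((s - t) * x) / (2 * cosh x) ^ (s + t)) := by
        rw [one_sub_sigmoid_two_mul, sigmoid_two_mul, div_rpow (exp_pos _).le hcosh.le,
          div_rpow (exp_pos _).le hcosh.le, ← exp_mul, ← exp_mul, div_mul_div_comm, ← exp_add,
          ← rpow_add hcosh]
        ring_nf

lemma injOn_sigmoid_two_mul : Set.InjOn (fun x : ℝ ↦ sigmoid (2 * x)) Set.univ :=
  (sigmoid_injective.comp (mul_right_injective₀ two_ne_zero)).injOn

lemma integrable_exp_div_two_cosh_rpow (hs : 0 < s) (ht : 0 < t) :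
    Integrable fun x ↦ exp ((s - t) * x) / (2 * cosh x) ^ (s + t) := by
  have h := (integrableOn_image_iff_integrableOn_abs_deriv_smul MeasurableSet.univ
    (fun x _ ↦ (hasDerivAt_sigmoid_two_mul x).hasDerivWithinAt) injOn_sigmoid_two_mul
    fun u ↦ u ^ (s - 1) * (1 - u) ^ (t - 1)).1
    (by rw [Set.image_univ, range_sigmoid_two_mul]; exact integrableOn_betaKernel hs ht)
  simp only [jacobian_mul_betaKernel_sigmoid, integrableOn_univ] at h
  exact (integrable_const_mul_iff two_ne_zero.isUnit _).1 h

lemma integral_exp_div_two_cosh_rpow (hs : 0 < s) (ht : 0 < t) :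
    ∫ x, exp ((s - t) * x) / (2 * cosh x) ^ (s + t)
      = Gamma s * Gamma t / (2 * Gamma (s + t)) := by
  have h := integral_image_eq_integral_abs_deriv_smul MeasurableSet.univ
    (fun x _ ↦ (hasDerivAt_sigmoid_two_mul x).hasDerivWithinAt) injOn_sigmoid_two_mul
    fun u ↦ u ^ (s - 1) * (1 - u) ^ (t - 1)
  rw [Set.image_univ, range_sigmoid_two_mul, integral_betaKernel hs ht] at h
  simp only [jacobian_mul_betaKernel_sigmoid, setIntegral_univ, integral_const_mul] at h
  rw [mul_comm 2 (Gamma (s + t)), ← div_div, h]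
  ring

variable {a : ℝ} {j : ℕ}

lemma exp_div_cosh_pow_eq (a : ℝ) (j : ℕ) (x : ℝ) :
    exp (a * x) / cosh x ^ (j + 1) = 2 ^ (j + 1) *
      (exp (((1 + a + j) / 2 - (1 - a + j) / 2) * x) /
        (2 * cosh x) ^ ((1 + a + j) / 2 + (1 - a + j) / 2)) := by
  have hsum : (1 + a + j) / 2 + (1 - a + j) / 2 = ((j + 1 : ℕ) : ℝ) := by push_cast; ring
  have := cosh_pos x
  rw [hsum, rpow_natCast, mul_pow, show (1 + a + j) / 2 - (1 - a + j) / 2 = a by ring]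
  field_simp

lemma integrable_exp_div_cosh_pow (ha : |a| < j + 1) :
    Integrable fun x ↦ exp (a * x) / cosh x ^ (j + 1) := by
  obtain ⟨hneg, hpos⟩ := abs_lt.1 ha
  simp only [exp_div_cosh_pow_eq]
  exact (integrable_exp_div_two_cosh_rpow (by linarith) (by linarith)).const_mul _

lemma integral_exp_div_cosh_pow (ha : |a| < j + 1) :
    ∫ x, exp (a * x) / cosh x ^ (j + 1)
      = 2 ^ j * Gamma ((1 + a + j) / 2) * Gamma ((1 - a + j) / 2) / j.factorial := by
  obtain ⟨hneg, hpos⟩ := abs_lt.1 ha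
  simp only [exp_div_cosh_pow_eq, integral_const_mul]
  rw [integral_exp_div_two_cosh_rpow (by linarith) (by linarith),
    show (1 + a + j) / 2 + (1 - a + j) / 2 = (j : ℝ) + 1 by ring, Gamma_nat_eq_factorial, pow_succ]
  field_simp

end BetaIntegral

/-! ### Meixner–Pollaczek polynomials -/

section MeixnerPollaczek

open Polynomial

/-- The monic Meixner–Pollaczek polynomials orthogonal with respect to `1 / (π cosh y)`. -/
noncomputable def mpPoly : ℕ → ℝ[X]
  | 0 => 1
  | 1 => X
  | n + 2 => X * mpPoly (n + 1) - C ((π / 2 * ((n : ℝ) + 1)) ^ 2) * mpPoly n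

/-- The `L²` norm of `mpPoly n` with respect to `1 / (π cosh y)`. -/
noncomputable def mpNorm (n : ℕ) : ℝ := n.factorial * (π / 2) ^ n

/-- The probability density `1 / (π cosh y)`. -/
noncomputable def sechWeight (y : ℝ) : ℝ := 1 / (π * cosh y)

/-- The measure with density `sechWeight`, introduced to apply the library's results on moment
generating functions. -/
noncomputable def sechMeasure : Measure ℝ :=
  volume.withDensity fun y ↦ ENNReal.ofReal (sechWeight y)

lemma X_mul_mpPoly (n : ℕ) :
    X * mpPoly n = mpPoly (n + 1) + C ((π / 2 * n) ^ 2) * mpPoly (n - 1) := by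
  rcases n with _ | n
  · simp [mpPoly]
  · simp [mpPoly]

lemma mpPoly_monic_natDegree (n : ℕ) : (mpPoly n).Monic ∧ (mpPoly n).natDegree = n := by
  induction n using Nat.strong_induction_on with
  | _ n ih =>
    match n with
    | 0 => simp [mpPoly]
    | 1 => simp [mpPoly, monic_X]
    | n + 2 =>
      obtain ⟨hmonic, hdeg⟩ := ih (n + 1) (by lia)
      have hX : (X * mpPoly (n + 1)).natDegree = n + 2 := by
        rw [natDegree_X_mul hmonic.ne_zero, hdeg]
      have hlt : (C ((π / 2 * ((n : ℝ) + 1)) ^ 2) * mpPoly n).natDegree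
          < (X * mpPoly (n + 1)).natDegree := by
        rw [hX]
        exact (natDegree_C_mul_le _ _).trans_lt (by rw [(ih n (by lia)).2]; lia)
      exact ⟨(monic_X.mul hmonic).sub_of_left (degree_lt_degree hlt),
        by rw [mpPoly, natDegree_sub_eq_left_of_natDegree_lt hlt, hX]⟩

lemma mpPoly_monic (n : ℕ) : (mpPoly n).Monic := (mpPoly_monic_natDegree n).1

@[simp] lemma natDegree_mpPoly (n : ℕ) : (mpPoly n).natDegree = n := (mpPoly_monic_natDegree n).2

@[simp] lemma mpNorm_zero : mpNorm 0 = 1 := by simp [mpNorm]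

lemma mpNorm_succ (n : ℕ) : mpNorm (n + 1) = π / 2 * (n + 1) * mpNorm n := by
  simp only [mpNorm, Nat.factorial_succ, Nat.cast_mul, Nat.cast_succ, pow_succ]
  ring

lemma mpNorm_pos (n : ℕ) : 0 < mpNorm n := by
  unfold mpNorm
  positivity

lemma sechWeight_pos (y : ℝ) : 0 < sechWeight y := by
  have := cosh_pos y
  unfold sechWeight
  positivity

lemma continuous_sechWeight : Continuous sechWeight :=
  continuous_const.div (continuous_const.mul continuous_cosh) fun y ↦
    mul_ne_zero pi_ne_zero (cosh_pos y).ne'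

lemma integrable_sechMeasure {f : ℝ → ℝ} :
    Integrable f sechMeasure ↔ Integrable fun y ↦ f y * sechWeight y := by
  rw [sechMeasure, integrable_withDensity_iff_integrable_smul'
    continuous_sechWeight.measurable.ennreal_ofReal (by simp)]
  simp [ENNReal.toReal_ofReal (sechWeight_pos _).le, mul_comm]

lemma integral_sechMeasure (f : ℝ → ℝ) :
    ∫ y, f y ∂sechMeasure = ∫ y, f y * sechWeight y := by
  rw [sechMeasure, integral_withDensity_eq_integral_toReal_smul
    continuous_sechWeight.measurable.ennreal_ofReal (by simp)]
  simp [ENNReal.toReal_ofReal (sechWeight_pos _).le, mul_comm]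

lemma exp_mul_sechWeight_eq (θ y : ℝ) :
    exp (θ * y) * sechWeight y = 1 / π * (exp (θ * y) / cosh y ^ (0 + 1)) := by
  rw [sechWeight, zero_add, pow_one, div_mul_div_comm, one_mul, mul_one_div]

section Generating

variable {θ : ℝ} (hθ : θ ∈ Set.Ioo (-1 : ℝ) 1)

include hθ

lemma cos_pi_div_two_mul_pos : 0 < cos (π / 2 * θ) := by
  apply cos_pos_of_mem_Ioo
  constructor <;> nlinarith [pi_pos, hθ.1, hθ.2]

lemma integrable_exp_sechMeasure : Integrable (fun y ↦ exp (θ * y)) sechMeasure := by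
  simp only [integrable_sechMeasure, exp_mul_sechWeight_eq]
  exact (integrable_exp_div_cosh_pow (by simpa [abs_lt] using hθ)).const_mul _

lemma integral_exp_sechMeasure : ∫ y, exp (θ * y) ∂sechMeasure = 1 / cos (π / 2 * θ) := by
  have hreflect := Gamma_mul_Gamma_one_sub ((1 + θ) / 2)
  have hsin : sin (π * ((1 + θ) / 2)) = cos (π / 2 * θ) := by
    rw [← cos_pi_div_two_sub, ← cos_neg]
    ring_nf
  rw [hsin, show 1 - (1 + θ) / 2 = (1 - θ) / 2 by ring] at hreflect
  simp only [integral_sechMeasure, exp_mul_sechWeight_eq, integral_const_mul]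
  rw [integral_exp_div_cosh_pow (by simpa [abs_lt] using hθ)]
  simp only [CharP.cast_eq_zero, add_zero, pow_zero, one_mul, Nat.factorial_zero, Nat.cast_one,
    div_one, hreflect]
  field_simp

lemma mem_interior_integrableExpSet_sechMeasure :
    θ ∈ interior (ProbabilityTheory.integrableExpSet (fun y : ℝ ↦ y) sechMeasure) :=
  mem_interior.2 ⟨Set.Ioo (-1) 1, fun _ ht ↦ integrable_exp_sechMeasure ht, isOpen_Ioo, hθ⟩

lemma integrable_eval_mul_exp_sechMeasure (q : ℝ[X]) :
    Integrable (fun y ↦ q.eval y * exp (θ * y)) sechMeasure := by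
  induction q using Polynomial.induction_on' with
  | add p q hp hq =>
    simp only [eval_add, add_mul]
    exact hp.add hq
  | monomial n a =>
    simp only [eval_monomial, mul_assoc]
    exact (ProbabilityTheory.integrable_pow_mul_exp_of_mem_interior_integrableExpSet
      (mem_interior_integrableExpSet_sechMeasure hθ) n).const_mul a

lemma hasDerivAt_integral_eval_mul_exp (q : ℝ[X]) :
    HasDerivAt (fun t ↦ ∫ y, q.eval y * exp (t * y) ∂sechMeasure)
      (∫ y, (X * q).eval y * exp (θ * y) ∂sechMeasure) θ := by
  induction q using Polynomial.induction_on' with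
  | add p q hp hq =>
    have h := hp.add hq
    rw [← integral_add (integrable_eval_mul_exp_sechMeasure hθ _)
      (integrable_eval_mul_exp_sechMeasure hθ _)] at h
    refine (h.congr_of_eventuallyEq ?_).congr_deriv ?_
    · filter_upwards [isOpen_Ioo.mem_nhds hθ] with t ht
      rw [Pi.add_apply, ← integral_add (integrable_eval_mul_exp_sechMeasure ht _)
        (integrable_eval_mul_exp_sechMeasure ht _)]
      simp only [eval_add, add_mul]
    · simp only [eval_add, add_mul, mul_add]
  | monomial n a =>
    have h := (ProbabilityTheory.hasDerivAt_integral_pow_mul_exp_real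
      (mem_interior_integrableExpSet_sechMeasure hθ) n).const_mul a
    simp only [eval_monomial, eval_mul, eval_X, mul_assoc, integral_const_mul]
    refine h.congr_deriv ?_
    rw [← integral_const_mul]
    congr 1 with y
    ring

lemma hasDerivAt_mpNorm_mul_tan_pow_div_cos (n : ℕ) :
    HasDerivAt (fun θ ↦ mpNorm n * tan (π / 2 * θ) ^ n / cos (π / 2 * θ))
      (mpNorm (n + 1) * tan (π / 2 * θ) ^ (n + 1) / cos (π / 2 * θ) + (π / 2 * n) ^ 2 *
        (mpNorm (n - 1) * tan (π / 2 * θ) ^ (n - 1) / cos (π / 2 * θ))) θ := by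
  have hcos := cos_pi_div_two_mul_pos hθ
  have hlin : HasDerivAt (fun θ : ℝ ↦ π / 2 * θ) (π / 2) θ := hasDerivAt_const_mul _
  have htan := ((hasDerivAt_tan hcos.ne').comp θ hlin).pow n
  refine ((htan.const_mul (mpNorm n)).div ((hasDerivAt_cos _).comp θ hlin) hcos.ne').congr_deriv ?_
  have hsq : 1 / cos (π / 2 * θ) ^ 2 = 1 + tan (π / 2 * θ) ^ 2 := by
    rw [← inv_one_add_tan_sq hcos.ne', one_div, inv_inv]
  simp only [Function.comp_def, Pi.pow_apply]
  rw [← tan_mul_cos hcos.ne', hsq]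
  rcases n with _ | n
  · simp [mpNorm_succ]
    field_simp
  · simp only [Nat.add_sub_cancel, mpNorm_succ, pow_succ]
    push_cast
    field_simp
    ring

omit hθ in
lemma integral_mpPoly_mul_exp (n : ℕ) : ∀ θ ∈ Set.Ioo (-1 : ℝ) 1,
    ∫ y, (mpPoly n).eval y * exp (θ * y) ∂sechMeasure
      = mpNorm n * tan (π / 2 * θ) ^ n / cos (π / 2 * θ) := by
  induction n using Nat.strong_induction_on with
  | _ n ih =>
    intro θ hθ
    rcases n with _ | n
    · simpa [mpPoly] using integral_exp_sechMeasure hθ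
    have hderiv : ∫ y, (X * mpPoly n).eval y * exp (θ * y) ∂sechMeasure = _ :=
      (hasDerivAt_integral_eval_mul_exp hθ (mpPoly n)).unique
        ((hasDerivAt_mpNorm_mul_tan_pow_div_cos hθ n).congr_of_eventuallyEq <| by
          filter_upwards [isOpen_Ioo.mem_nhds hθ] with t ht using ih n (by lia) t ht)
    rw [X_mul_mpPoly] at hderiv
    simp only [eval_add, eval_mul (p := C _), eval_C, add_mul, mul_assoc] at hderiv
    rw [integral_add (integrable_eval_mul_exp_sechMeasure hθ _)
      ((integrable_eval_mul_exp_sechMeasure hθ _).const_mul _), integral_const_mul,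
      ih (n - 1) (by lia) θ hθ] at hderiv
    simpa only [mul_assoc] using add_right_cancel hderiv

end Generating

lemma integrable_eval_mul_sechWeight (q : ℝ[X]) :
    Integrable fun y ↦ q.eval y * sechWeight y := by
  simpa [integrable_sechMeasure] using integrable_eval_mul_exp_sechMeasure (θ := 0) (by simp) q

/-- The linear functional `q ↦ ∫ q(y) / (π cosh y) dy`. -/
noncomputable def sechFunctional : ℝ[X] →ₗ[ℝ] ℝ where
  toFun q := ∫ y, q.eval y * sechWeight y
  map_add' p q := by
    simp only [eval_add, add_mul]
    exact integral_add (integrable_eval_mul_sechWeight p) (integrable_eval_mul_sechWeight q)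
  map_smul' a q := by
    simp [mul_assoc, integral_const_mul]

lemma sechFunctional_C_mul (a : ℝ) (q : ℝ[X]) :
    sechFunctional (C a * q) = a * sechFunctional q := by
  rw [← smul_eq_C_mul, map_smul, smul_eq_mul]

lemma sechFunctional_mpPoly (n : ℕ) : sechFunctional (mpPoly n) = if n = 0 then 1 else 0 := by
  have h := integral_mpPoly_mul_exp n 0 (by simp)
  rw [integral_sechMeasure] at h
  change ∫ y, _ = _
  rcases n with _ | n <;> simpa using h

lemma sechFunctional_X_pow_succ_mul_mpPoly (k n : ℕ) :
    sechFunctional (X ^ (k + 1) * mpPoly n) = sechFunctional (X ^ k * mpPoly (n + 1))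
      + (π / 2 * n) ^ 2 * sechFunctional (X ^ k * mpPoly (n - 1)) := by
  rw [pow_succ, mul_assoc, X_mul_mpPoly, mul_add, mul_left_comm, map_add, sechFunctional_C_mul]

lemma sechFunctional_X_pow_mul_mpPoly_of_lt {k n : ℕ} (h : k < n) :
    sechFunctional (X ^ k * mpPoly n) = 0 := by
  induction k generalizing n with
  | zero => rw [pow_zero, one_mul, sechFunctional_mpPoly, if_neg h.ne']
  | succ k ih =>
    rw [sechFunctional_X_pow_succ_mul_mpPoly, ih (by lia), ih (by lia), mul_zero, add_zero]

lemma sechFunctional_X_pow_mul_mpPoly_self (n : ℕ) :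
    sechFunctional (X ^ n * mpPoly n) = mpNorm n ^ 2 := by
  induction n with
  | zero => simpa using sechFunctional_mpPoly 0
  | succ n ih =>
    rw [sechFunctional_X_pow_succ_mul_mpPoly, sechFunctional_X_pow_mul_mpPoly_of_lt (by lia),
      Nat.add_sub_cancel, ih, mpNorm_succ]
    push_cast
    ring

lemma sechFunctional_mul_mpPoly_of_degree_lt {q : ℝ[X]} {n : ℕ} (h : q.degree < n) :
    sechFunctional (q * mpPoly n) = 0 := by
  rw [q.as_sum_support_C_mul_X_pow, Finset.sum_mul, map_sum]
  refine Finset.sum_eq_zero fun k hk ↦ ?_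
  have hkn : k < n := by exact_mod_cast (le_degree_of_mem_supp k hk).trans_lt h
  rw [mul_assoc, sechFunctional_C_mul, sechFunctional_X_pow_mul_mpPoly_of_lt hkn, mul_zero]

lemma sechFunctional_mpPoly_mul_mpPoly (j k : ℕ) :
    sechFunctional (mpPoly j * mpPoly k) = if j = k then mpNorm j ^ 2 else 0 := by
  wlog hjk : j ≤ k generalizing j k
  · rw [mul_comm, this k j (by lia)]
    grind
  rcases hjk.eq_or_lt with rfl | hlt
  · have hdeg : (mpPoly j - X ^ j).degree < (j : WithBot ℕ) := by
      have hdegj : (mpPoly j).degree = j := by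
        rw [degree_eq_natDegree (mpPoly_monic j).ne_zero, natDegree_mpPoly]
      simpa only [hdegj] using degree_sub_lt_left (q := X ^ j) (by rw [hdegj, degree_X_pow])
        (mpPoly_monic j).ne_zero (by rw [mpPoly_monic j, monic_X_pow j])
    rw [if_pos rfl, ← sub_add_cancel (mpPoly j * mpPoly j) (X ^ j * mpPoly j), ← sub_mul, map_add,
      sechFunctional_mul_mpPoly_of_degree_lt hdeg, sechFunctional_X_pow_mul_mpPoly_self, zero_add]
  · rw [if_neg hlt.ne, sechFunctional_mul_mpPoly_of_degree_lt]
    exact degree_le_natDegree.trans_lt (by simpa)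

end MeixnerPollaczek

/-! ### The Macdonald weight -/

section Macdonald

/-- Twice the Macdonald function `K_ν`, by its integral representation for `y > 0`. -/
noncomputable def macdonald (ν y : ℝ) : ℝ := ∫ τ, exp (ν * τ) * exp (-(y * cosh τ))

/-- The even extension of `macdonald ν`, with the value `1` at the origin so that it is positive
everywhere. -/
noncomputable def macdonaldAbs (ν y : ℝ) : ℝ := if y = 0 then 1 else macdonald ν |y|

lemma macdonaldAbs_of_pos (ν : ℝ) {y : ℝ} (hy : 0 < y) : macdonaldAbs ν y = macdonald ν y := by
  rw [macdonaldAbs, if_neg hy.ne', abs_of_pos hy]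

lemma macdonaldAbs_neg (ν y : ℝ) : macdonaldAbs ν (-y) = macdonaldAbs ν y := by
  simp only [macdonaldAbs, neg_eq_zero, abs_neg]

lemma sechWeight_le_exp_neg_abs (y : ℝ) : sechWeight y ≤ exp (-|y|) := by
  rw [sechWeight, ← cosh_abs, exp_neg, one_div]
  refine inv_anti₀ (exp_pos _) ?_
  rw [cosh_eq]
  nlinarith [pi_gt_three, exp_pos |y|, exp_pos (-|y|)]

lemma exp_neg_abs_le_sechWeight (y : ℝ) : exp (-|y|) ≤ π * sechWeight y := by
  rw [sechWeight, mul_one_div, mul_comm π, div_mul_cancel_right₀ pi_ne_zero, exp_neg]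
  refine inv_anti₀ (cosh_pos y) ?_
  have : exp (-|y|) ≤ exp |y| := exp_le_exp.2 (by linarith [abs_nonneg y])
  rw [← cosh_abs, cosh_eq]
  linarith

lemma sq_mul_exp_neg_mul_le {y c : ℝ} (hy : 0 ≤ y) (hc : 1 ≤ c) :
    (y * c) ^ 2 * exp (-(y * c)) ≤ 2 * (1 + y) ^ 2 * exp (-y) := by
  have hz : 0 ≤ y * (c - 1) := mul_nonneg hy (sub_nonneg.2 hc)
  have hexp : (1 + y * (c - 1)) ^ 2 ≤ 2 * exp (y * (c - 1)) := by
    nlinarith [quadratic_le_exp_of_nonneg hz]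
  have hle : y * c ≤ (1 + y) * (1 + y * (c - 1)) := by nlinarith
  calc (y * c) ^ 2 * exp (-(y * c))
      ≤ ((1 + y) * (1 + y * (c - 1))) ^ 2 * exp (-(y * c)) := by gcongr
    _ = (1 + y) ^ 2 * (1 + y * (c - 1)) ^ 2 * exp (-(y * c)) := by ring
    _ ≤ (1 + y) ^ 2 * (2 * exp (y * (c - 1))) * exp (-(y * c)) := by gcongr
    _ = 2 * (1 + y) ^ 2 * (exp (y * (c - 1)) * exp (-(y * c))) := by ring
    _ = 2 * (1 + y) ^ 2 * exp (-y) := by rw [← exp_add]; ring_nf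

lemma cosh_le_one_add_sq {τ : ℝ} (hτ : |τ| ≤ 1) : cosh τ ≤ 1 + τ ^ 2 := by
  have hsq : τ ^ 2 ≤ 1 := (sq_le_one_iff_abs_le_one τ).2 hτ
  have hhalf : |τ ^ 2 / 2| = τ ^ 2 / 2 := abs_of_nonneg (by positivity)
  have h := abs_exp_sub_one_le (x := τ ^ 2 / 2) (by rw [hhalf]; linarith)
  rw [hhalf] at h
  linarith [cosh_le_exp_half_sq τ, le_abs_self (exp (τ ^ 2 / 2) - 1)]

variable {ν : ℝ}

lemma sq_mul_macdonald_integrand_le (ν : ℝ) {y : ℝ} (hy : 0 ≤ y) (τ : ℝ) :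
    y ^ 2 * (exp (ν * τ) * exp (-(y * cosh τ)))
      ≤ 2 * (1 + y) ^ 2 * exp (-y) * (exp (ν * τ) / cosh τ ^ (1 + 1)) := by
  have := cosh_pos τ
  calc y ^ 2 * (exp (ν * τ) * exp (-(y * cosh τ)))
      = (y * cosh τ) ^ 2 * exp (-(y * cosh τ)) * (exp (ν * τ) / cosh τ ^ (1 + 1)) := by
        field_simp
    _ ≤ _ := by
        gcongr ?_ * _
        exact sq_mul_exp_neg_mul_le hy (one_le_cosh τ)

section Bounds

variable (hν : |ν| < 1)

include hν

lemma abs_lt_natCast_add_one (j : ℕ) : |ν| < j + 1 :=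
  hν.trans_le (le_add_of_nonneg_left j.cast_nonneg)

lemma integrable_macdonald_integrand {y : ℝ} (hy : 0 < y) :
    Integrable fun τ ↦ exp (ν * τ) * exp (-(y * cosh τ)) := by
  have hcont : Continuous fun τ ↦ exp (ν * τ) * exp (-(y * cosh τ)) := by
    have := continuous_cosh
    fun_prop
  rw [← integrable_const_mul_iff (IsUnit.mk0 (y ^ 2) (by positivity))]
  refine ((integrable_exp_div_cosh_pow (abs_lt_natCast_add_one hν 1)).const_mul
    (2 * (1 + y) ^ 2 * exp (-y))).mono' (hcont.aestronglyMeasurable.const_mul _)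
    (.of_forall fun τ ↦ ?_)
  rw [norm_of_nonneg (by positivity)]
  exact sq_mul_macdonald_integrand_le ν hy.le τ

lemma exists_sq_mul_macdonald_le :
    ∃ C > 0, ∀ y > 0, y ^ 2 * macdonald ν y ≤ C * (1 + y ^ 2) * exp (-y) := by
  have hbeta := integrable_exp_div_cosh_pow (abs_lt_natCast_add_one hν 1)
  set B := ∫ τ, exp (ν * τ) / cosh τ ^ (1 + 1) with hB
  have : 0 ≤ B := integral_nonneg fun τ ↦ by
    have := cosh_pos τ
    positivity
  refine ⟨4 * B + 1, by positivity, fun y hy ↦ ?_⟩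
  calc y ^ 2 * macdonald ν y
      ≤ 2 * (1 + y) ^ 2 * exp (-y) * B := by
        rw [macdonald, hB, ← integral_const_mul, ← integral_const_mul]
        exact integral_mono ((integrable_macdonald_integrand hν hy).const_mul _)
          (hbeta.const_mul _) (sq_mul_macdonald_integrand_le ν hy.le)
    _ ≤ 4 * (1 + y ^ 2) * exp (-y) * B := by
        gcongr ?_ * _ * _
        nlinarith [sq_nonneg (1 - y)]
    _ = 4 * B * (1 + y ^ 2) * exp (-y) := by ring
    _ ≤ (4 * B + 1) * (1 + y ^ 2) * exp (-y) := by gcongr; linarith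

lemma exp_neg_sub_two_le_macdonald_integrand {y τ : ℝ} (hy : 0 < y) (hτ₀ : 0 ≤ τ)
    (hτ : τ ≤ 1 / (1 + y)) : exp (-y - 2) ≤ exp (ν * τ) * exp (-(y * cosh τ)) := by
  have hmul : τ * (1 + y) ≤ 1 := (le_div_iff₀ (by positivity)).1 hτ
  have hτ₁ : τ ≤ 1 := by nlinarith
  have hντ : -1 ≤ ν * τ := by nlinarith [neg_lt_of_abs_lt hν]
  have hcosh := cosh_le_one_add_sq (abs_le.2 ⟨by linarith, hτ₁⟩)
  have hyτ : y * τ ^ 2 ≤ 1 := by nlinarith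
  rw [← exp_add]
  refine exp_le_exp.2 ?_
  nlinarith

lemma exp_neg_le_macdonald {y : ℝ} (hy : 0 < y) :
    exp (-y) ≤ 2 * exp 2 * (1 + y ^ 2) * macdonald ν y := by
  set δ : ℝ := 1 / (1 + y) with hδ
  have hδ₀ : 0 ≤ δ := by positivity
  have hint := integrable_macdonald_integrand hν hy
  have hK : δ * exp (-y - 2) ≤ macdonald ν y := by
    calc δ * exp (-y - 2) = ∫ _ in Set.Icc 0 δ, exp (-y - 2) := by simp [hδ₀]
      _ ≤ ∫ τ in Set.Icc 0 δ, exp (ν * τ) * exp (-(y * cosh τ)) :=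
          setIntegral_mono_on (by simp) hint.integrableOn measurableSet_Icc fun τ hτ ↦
            exp_neg_sub_two_le_macdonald_integrand hν hy hτ.1 hτ.2
      _ ≤ macdonald ν y := setIntegral_le_integral hint (.of_forall fun τ ↦ by positivity)
  have hK₀ : 0 ≤ macdonald ν y := le_trans (by positivity) hK
  calc exp (-y) = exp 2 * (1 + y) * (δ * exp (-y - 2)) := by
        rw [exp_sub, hδ]
        field_simp
    _ ≤ exp 2 * (1 + y) * macdonald ν y := by gcongr
    _ ≤ exp 2 * (2 * (1 + y ^ 2)) * macdonald ν y := by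
        gcongr
        nlinarith [sq_nonneg (y - 1)]
    _ = 2 * exp 2 * (1 + y ^ 2) * macdonald ν y := by ring

lemma macdonald_pos {y : ℝ} (hy : 0 < y) : 0 < macdonald ν y :=
  pos_of_mul_pos_right ((exp_pos (-y)).trans_le (exp_neg_le_macdonald hν hy)) (by positivity)

lemma macdonaldAbs_pos (y : ℝ) : 0 < macdonaldAbs ν y := by
  unfold macdonaldAbs
  split_ifs with h
  · exact one_pos
  · exact macdonald_pos hν (abs_pos.2 h)

lemma exists_sq_mul_macdonaldAbs_le :
    ∃ C > 0, ∀ y, y ^ 2 * macdonaldAbs ν y ≤ C * (1 + y ^ 2) * sechWeight y := by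
  obtain ⟨C, hC, hle⟩ := exists_sq_mul_macdonald_le hν
  refine ⟨C * π, by positivity, fun y ↦ ?_⟩
  rcases eq_or_ne y 0 with rfl | hy
  · have := sechWeight_pos 0
    rw [zero_pow two_ne_zero, zero_mul]
    positivity
  · have h := hle |y| (abs_pos.2 hy)
    rw [sq_abs] at h
    calc y ^ 2 * macdonaldAbs ν y ≤ C * (1 + y ^ 2) * exp (-|y|) := by rwa [macdonaldAbs, if_neg hy]
      _ ≤ C * (1 + y ^ 2) * (π * sechWeight y) := by gcongr; exact exp_neg_abs_le_sechWeight y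
      _ = C * π * (1 + y ^ 2) * sechWeight y := by ring

lemma sechWeight_le_macdonaldAbs (y : ℝ) :
    sechWeight y ≤ 2 * exp 2 * (1 + y ^ 2) * macdonaldAbs ν y := by
  refine (sechWeight_le_exp_neg_abs y).trans ?_
  rcases eq_or_ne y 0 with rfl | hy
  · have := add_one_le_exp (2 : ℝ)
    simp [macdonaldAbs]
    linarith
  · simpa [macdonaldAbs, hy] using exp_neg_le_macdonald hν (abs_pos.2 hy)

end Bounds

section Moments

lemma integrableOn_pow_mul_exp_neg_mul (j : ℕ) {c : ℝ} (hc : 0 < c) :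
    IntegrableOn (fun y ↦ y ^ j * exp (-(y * c))) (Set.Ioi 0) := by
  have h := integrableOn_rpow_mul_exp_neg_mul_rpow (p := 1) (s := j) (b := c)
    (neg_one_lt_zero.trans_le j.cast_nonneg) one_pos hc
  simpa [mul_comm c] using h

lemma integral_pow_mul_exp_neg_mul (j : ℕ) {c : ℝ} (hc : 0 < c) :
    ∫ y in Set.Ioi 0, y ^ j * exp (-(y * c)) = j.factorial / c ^ (j + 1) := by
  have h := integral_rpow_mul_exp_neg_mul_Ioi (a := (j + 1 : ℕ)) (r := c) (by positivity) hc
  rw [rpow_natCast, Nat.cast_succ, Gamma_nat_eq_factorial] at h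
  simp only [add_sub_cancel_right, rpow_natCast, mul_comm c] at h
  rw [h, one_div_pow]
  ring

/-- The integrand of the double integral whose evaluation in either order gives the moments of
`macdonald ν`. -/
noncomputable def macdonaldKernel (ν : ℝ) (j : ℕ) (y τ : ℝ) : ℝ :=
  y ^ j * (exp (ν * τ) * exp (-(y * cosh τ)))

lemma macdonaldKernel_eq (ν : ℝ) (j : ℕ) (y τ : ℝ) :
    macdonaldKernel ν j y τ = exp (ν * τ) * (y ^ j * exp (-(y * cosh τ))) :=
  mul_left_comm ..

lemma integral_macdonaldKernel_left (ν : ℝ) (j : ℕ) (τ : ℝ) :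
    ∫ y in Set.Ioi 0, macdonaldKernel ν j y τ
      = j.factorial * (exp (ν * τ) / cosh τ ^ (j + 1)) := by
  simp only [macdonaldKernel_eq, integral_const_mul]
  rw [integral_pow_mul_exp_neg_mul j (cosh_pos τ)]
  ring

lemma integral_macdonaldKernel_right (ν : ℝ) (j : ℕ) (y : ℝ) :
    ∫ τ, macdonaldKernel ν j y τ = y ^ j * macdonald ν y :=
  integral_const_mul _ _

variable (hν : |ν| < 1)

include hν

lemma integrable_macdonaldKernel (j : ℕ) :
    Integrable (Function.uncurry (macdonaldKernel ν j))
      ((volume.restrict (Set.Ioi 0)).prod volume) := by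
  have hcont : Continuous (Function.uncurry (macdonaldKernel ν j)) := by
    have := continuous_cosh
    simp only [macdonaldKernel, Function.uncurry_def]
    fun_prop
  rw [integrable_prod_iff' hcont.aestronglyMeasurable]
  constructor
  · refine .of_forall fun τ ↦ ?_
    simp only [Function.uncurry, macdonaldKernel_eq]
    exact (integrableOn_pow_mul_exp_neg_mul j (cosh_pos τ)).const_mul _
  · refine ((integrable_exp_div_cosh_pow (abs_lt_natCast_add_one hν j)).const_mul
      (j.factorial : ℝ)).congr (.of_forall fun τ ↦ ?_)
    simp only [← integral_macdonaldKernel_left]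
    refine setIntegral_congr_fun measurableSet_Ioi fun y (hy : 0 < y) ↦ ?_
    simp only [Function.uncurry, macdonaldKernel]
    rw [norm_of_nonneg (by positivity)]

lemma integrableOn_pow_mul_macdonald (j : ℕ) :
    IntegrableOn (fun y ↦ y ^ j * macdonald ν y) (Set.Ioi 0) := by
  simpa only [Function.uncurry, integral_macdonaldKernel_right, IntegrableOn] using
    (integrable_macdonaldKernel hν j).integral_prod_left

lemma integral_pow_mul_macdonald (j : ℕ) :
    ∫ y in Set.Ioi 0, y ^ j * macdonald ν y
      = 2 ^ j * Gamma ((1 + ν + j) / 2) * Gamma ((1 - ν + j) / 2) := by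
  have h := integral_integral_swap (integrable_macdonaldKernel hν j)
  simp only [integral_macdonaldKernel_right, integral_macdonaldKernel_left] at h
  rw [h, integral_const_mul, integral_exp_div_cosh_pow (abs_lt_natCast_add_one hν j)]
  field_simp

lemma integrable_pow_mul_macdonaldAbs (j : ℕ) : Integrable fun y ↦ y ^ j * macdonaldAbs ν y := by
  have hpos : IntegrableOn (fun y ↦ y ^ j * macdonaldAbs ν y) (Set.Ioi 0) :=
    (integrableOn_pow_mul_macdonald hν j).congr_fun
      (fun y hy ↦ by simp only [macdonaldAbs_of_pos ν hy]) measurableSet_Ioi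
  have hneg : IntegrableOn (fun y ↦ y ^ j * macdonaldAbs ν y) (Set.Iio 0) := by
    have h : IntegrableOn (fun y ↦ (-y) ^ j * macdonaldAbs ν (-y)) (Set.Ioi 0) :=
      IntegrableOn.congr_fun (hpos.const_mul ((-1) ^ j))
        (fun y _ ↦ by rw [neg_pow y, macdonaldAbs_neg, mul_assoc]) measurableSet_Ioi
    simpa using h.comp_neg
  rw [← integrableOn_univ, ← Set.Iic_union_Ioi (a := (0 : ℝ))]
  exact ((integrableOn_Iic_iff_integrableOn_Iio).2 hneg).union hpos

end Moments

end Macdonald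

/-! ### Weighted norms of complex polynomials on the real line -/

section WeightedNorm

open Polynomial

/-- A positive weight on `ℝ` all of whose moments converge absolutely. -/
structure IsMomentWeight (W : ℝ → ℝ) : Prop where
  pos : ∀ y, 0 < W y
  integrable_pow_mul : ∀ j : ℕ, Integrable fun y ↦ y ^ j * W y

/-- The squared `L²` norm on the real line of a complex polynomial with respect to the
weight `W`. -/
noncomputable def weightedNormSq (W : ℝ → ℝ) (p : ℂ[X]) : ℝ := ∫ y : ℝ, ‖p.eval (y : ℂ)‖ ^ 2 * W y

/-- The polynomial with conjugate coefficients, which on the real line takes the conjugate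
values. -/
noncomputable def conjPoly (p : ℂ[X]) : ℂ[X] := p.map (starRingEnd ℂ)

lemma eval_conjPoly (p : ℂ[X]) (y : ℝ) :
    (conjPoly p).eval (y : ℂ) = starRingEnd ℂ (p.eval (y : ℂ)) := by
  rw [conjPoly, ← Complex.conj_ofReal y, eval_map, eval₂_at_apply, Complex.conj_ofReal]

lemma ofReal_norm_eval_sq (p : ℂ[X]) (y : ℝ) :
    ((‖p.eval (y : ℂ)‖ ^ 2 : ℝ) : ℂ) = (conjPoly p * p).eval (y : ℂ) := by
  rw [eval_mul, eval_conjPoly, Complex.conj_mul', Complex.ofReal_pow]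

lemma norm_eval_X_mul_sq (p : ℂ[X]) (y : ℝ) :
    ‖(X * p).eval (y : ℂ)‖ ^ 2 = y ^ 2 * ‖p.eval (y : ℂ)‖ ^ 2 := by
  rw [eval_mul, eval_X, norm_mul, mul_pow, Complex.norm_real, norm_eq_abs, sq_abs]

namespace IsMomentWeight

variable {W W₁ W₂ : ℝ → ℝ}

lemma integrable_eval_mul (hW : IsMomentWeight W) (q : ℂ[X]) :
    Integrable fun y : ℝ ↦ q.eval (y : ℂ) * (W y : ℂ) := by
  induction q using Polynomial.induction_on' with
  | add p q hp hq =>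
    simp only [eval_add, add_mul]
    exact hp.add hq
  | monomial n a =>
    refine ((hW.integrable_pow_mul n).ofReal (𝕜 := ℂ)).const_mul a |>.congr (.of_forall fun y ↦ ?_)
    simp [mul_assoc]

lemma integrable_norm_sq_mul (hW : IsMomentWeight W) (p : ℂ[X]) :
    Integrable fun y : ℝ ↦ ‖p.eval (y : ℂ)‖ ^ 2 * W y := by
  refine (hW.integrable_eval_mul (conjPoly p * p)).re.congr (.of_forall fun y ↦ ?_)
  simp only [← ofReal_norm_eval_sq, ← Complex.ofReal_mul]
  exact Complex.ofReal_re _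

lemma weightedNormSq_nonneg (hW : IsMomentWeight W) (p : ℂ[X]) : 0 ≤ weightedNormSq W p :=
  integral_nonneg fun y ↦ mul_nonneg (by positivity) (hW.pos y).le

lemma weightedNormSq_pos (hW : IsMomentWeight W) {p : ℂ[X]} (hp : p ≠ 0) :
    0 < weightedNormSq W p := by
  have hfin : {y : ℝ | p.eval (y : ℂ) = 0}.Finite :=
    (finite_setOfPred_isRoot hp).preimage Complex.ofReal_injective.injOn
  have hsupport : Function.support (fun y : ℝ ↦ ‖p.eval (y : ℂ)‖ ^ 2 * W y)
      = {y : ℝ | p.eval (y : ℂ) = 0}ᶜ := by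
    ext y
    simp [(hW.pos y).ne']
  rw [weightedNormSq, integral_pos_iff_support_of_nonneg
    (fun y ↦ mul_nonneg (by positivity) (hW.pos y).le) (hW.integrable_norm_sq_mul p), hsupport,
    measure_compl hfin.measurableSet (by simp [hfin.measure_zero]), hfin.measure_zero]
  simp

lemma weightedNormSq_le_add (hW : IsMomentWeight W) (hW₁ : IsMomentWeight W₁)
    (hW₂ : IsMomentWeight W₂) {p p₁ p₂ : ℂ[X]} {a b : ℝ}
    (h : ∀ y : ℝ, ‖p.eval (y : ℂ)‖ ^ 2 * W y ≤
      a * (‖p₁.eval (y : ℂ)‖ ^ 2 * W₁ y) + b * (‖p₂.eval (y : ℂ)‖ ^ 2 * W₂ y)) :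
    weightedNormSq W p ≤ a * weightedNormSq W₁ p₁ + b * weightedNormSq W₂ p₂ := by
  have h₁ := (hW₁.integrable_norm_sq_mul p₁).const_mul a
  have h₂ := (hW₂.integrable_norm_sq_mul p₂).const_mul b
  simp only [weightedNormSq, ← integral_const_mul, ← integral_add h₁ h₂]
  exact integral_mono (hW.integrable_norm_sq_mul p) (h₁.add h₂) h

lemma weightedNormSq_add_le (hW : IsMomentWeight W) (p q : ℂ[X]) :
    weightedNormSq W (p + q) ≤ 2 * weightedNormSq W p + 2 * weightedNormSq W q := by
  refine hW.weightedNormSq_le_add hW hW fun y ↦ ?_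
  have hsq : ‖(p + q).eval (y : ℂ)‖ ^ 2 ≤ 2 * (‖p.eval (y : ℂ)‖ ^ 2 + ‖q.eval (y : ℂ)‖ ^ 2) := by
    rw [eval_add]
    exact (pow_le_pow_left₀ (norm_nonneg _) (norm_add_le _ _) 2).trans add_sq_le
  nlinarith [hW.pos y]

end IsMomentWeight

lemma isMomentWeight_sechWeight : IsMomentWeight sechWeight :=
  ⟨sechWeight_pos, fun j ↦ by simpa using integrable_eval_mul_sechWeight (X ^ j)⟩

lemma isMomentWeight_macdonaldAbs {ν : ℝ} (hν : |ν| < 1) : IsMomentWeight (macdonaldAbs ν) :=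
  ⟨macdonaldAbs_pos hν, integrable_pow_mul_macdonaldAbs hν⟩

/-- The polynomial `mpPoly k` with complex coefficients. -/
noncomputable def mpPolyC (k : ℕ) : ℂ[X] := (mpPoly k).map Complex.ofRealHom

lemma eval_mpPolyC (k : ℕ) (y : ℝ) :
    (mpPolyC k).eval (y : ℂ) = (((mpPoly k).eval y : ℝ) : ℂ) := by
  rw [mpPolyC, eval_map]
  exact eval₂_at_apply Complex.ofRealHom y

lemma mpPolyC_monic (k : ℕ) : (mpPolyC k).Monic := (mpPoly_monic k).map _

@[simp] lemma natDegree_mpPolyC (k : ℕ) : (mpPolyC k).natDegree = k := by simp [mpPolyC]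

lemma X_mul_mpPolyC (n : ℕ) :
    X * mpPolyC n = mpPolyC (n + 1) + ((π / 2 * n) ^ 2 : ℂ) • mpPolyC (n - 1) := by
  have h := congrArg (Polynomial.map Complex.ofRealHom) (X_mul_mpPoly n)
  simpa [mpPolyC, smul_eq_C_mul] using h

/-- The Meixner–Pollaczek polynomials as a polynomial sequence, one in each degree. -/
noncomputable def mpSequence : Polynomial.Sequence ℂ where
  elems' := mpPolyC
  degree_eq' k := by rw [degree_eq_natDegree (mpPolyC_monic k).ne_zero, natDegree_mpPolyC]

lemma exists_eq_sum_smul_mpPolyC {n : ℕ} {p : ℂ[X]} (hp : p.natDegree ≤ n) :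
    ∃ c : ℕ → ℂ, p = ∑ k ∈ Finset.range (n + 1), c k • mpPolyC k := by
  have hmem : p ∈ Submodule.span ℂ (mpPolyC '' (Finset.range (n + 1) : Set ℕ)) := by
    rw [Finset.coe_range]
    refine (mpSequence.span_degreeLT fun k _ ↦ ?_).symm ▸
      mem_degreeLT.2 ((degree_le_of_natDegree_le hp).trans_lt (mod_cast n.lt_succ_self))
    exact (mpPolyC_monic k).leadingCoeff.symm ▸ isUnit_one
  obtain ⟨c, hc⟩ := Submodule.mem_span_image_finset_iff_exists_fun' ℂ |>.1 hmem
  exact ⟨c, hc.symm⟩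

lemma norm_eval_sum_smul_mpPolyC_sq (s : Finset ℕ) (c : ℕ → ℂ) (e : ℕ → ℕ) (y : ℝ) :
    ‖(∑ k ∈ s, c k • mpPolyC (e k)).eval (y : ℂ)‖ ^ 2 = ∑ j ∈ s, ∑ k ∈ s,
      (starRingEnd ℂ (c j) * c k).re * ((mpPoly (e j) * mpPoly (e k)).eval y) := by
  have h : ((‖(∑ k ∈ s, c k • mpPolyC (e k)).eval (y : ℂ)‖ ^ 2 : ℝ) : ℂ) = ∑ j ∈ s, ∑ k ∈ s,
      starRingEnd ℂ (c j) * c k * (((mpPoly (e j) * mpPoly (e k)).eval y : ℝ) : ℂ) := by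
    rw [Complex.ofReal_pow, ← Complex.conj_mul']
    simp only [eval_finsetSum, eval_smul, eval_mpPolyC, map_sum, smul_eq_mul, map_mul,
      Complex.conj_ofReal, Finset.sum_mul_sum, eval_mul, Complex.ofReal_mul]
    exact Finset.sum_congr rfl fun j _ ↦ Finset.sum_congr rfl fun k _ ↦ by ring
  simpa only [Complex.ofReal_re, Complex.re_sum, Complex.re_mul_ofReal] using congrArg Complex.re h

lemma weightedNormSq_sum_smul_mpPolyC (s : Finset ℕ) (c : ℕ → ℂ) {e : ℕ → ℕ}
    (he : Function.Injective e) :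
    weightedNormSq sechWeight (∑ k ∈ s, c k • mpPolyC (e k))
      = ∑ k ∈ s, ‖c k‖ ^ 2 * mpNorm (e k) ^ 2 := by
  have hint (j k : ℕ) : Integrable fun y ↦ (starRingEnd ℂ (c j) * c k).re *
      ((mpPoly (e j) * mpPoly (e k)).eval y * sechWeight y) :=
    (integrable_eval_mul_sechWeight _).const_mul _
  have horth (j k : ℕ) : ∫ y, (mpPoly (e j) * mpPoly (e k)).eval y * sechWeight y
      = if j = k then mpNorm (e j) ^ 2 else 0 := by
    simpa only [he.eq_iff] using! sechFunctional_mpPoly_mul_mpPoly (e j) (e k)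
  simp only [weightedNormSq, norm_eval_sum_smul_mpPolyC_sq, Finset.sum_mul, mul_assoc]
  rw [integral_finsetSum _ fun j _ ↦ integrable_finsetSum _ fun k _ ↦ hint j k]
  refine Finset.sum_congr rfl fun j hj ↦ ?_
  rw [integral_finsetSum _ fun k _ ↦ hint j k]
  simp only [integral_const_mul, horth, mul_ite, mul_zero, Finset.sum_ite_eq, hj, if_true,
    Complex.conj_mul', ← Complex.ofReal_pow, Complex.ofReal_re]

lemma mpNorm_succ_sq_le {k n : ℕ} (hk : k ≤ n) :
    mpNorm (k + 1) ^ 2 ≤ (π / 2 * (n + 1)) ^ 2 * mpNorm k ^ 2 := by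
  rw [mpNorm_succ, mul_pow]
  gcongr

lemma weightedNormSq_raise_le (n : ℕ) (c : ℕ → ℂ) :
    weightedNormSq sechWeight (∑ k ∈ Finset.range (n + 1), c k • mpPolyC (k + 1)) ≤
      (π / 2 * (n + 1)) ^ 2 *
        weightedNormSq sechWeight (∑ k ∈ Finset.range (n + 1), c k • mpPolyC k) := by
  rw [weightedNormSq_sum_smul_mpPolyC _ _ (add_left_injective 1),
    weightedNormSq_sum_smul_mpPolyC _ _ (e := fun k ↦ k) Function.injective_id, Finset.mul_sum]
  refine Finset.sum_le_sum fun k hk ↦ ?_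
  rw [mul_left_comm]
  gcongr
  exact mpNorm_succ_sq_le (Finset.mem_range_succ_iff.1 hk)

lemma weightedNormSq_lower_le (n : ℕ) (c : ℕ → ℂ) :
    weightedNormSq sechWeight
        (∑ k ∈ Finset.range n, (c (k + 1) * (π / 2 * (k + 1)) ^ 2) • mpPolyC k) ≤
      (π / 2 * (n + 1)) ^ 2 *
        weightedNormSq sechWeight (∑ k ∈ Finset.range (n + 1), c k • mpPolyC k) := by
  rw [weightedNormSq_sum_smul_mpPolyC _ (fun k ↦ c (k + 1) * (π / 2 * (k + 1)) ^ 2)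
      (e := fun k ↦ k) Function.injective_id,
    weightedNormSq_sum_smul_mpPolyC _ _ (e := fun k ↦ k) Function.injective_id,
    Finset.sum_range_succ', mul_add, Finset.mul_sum]
  refine le_add_of_le_of_nonneg (Finset.sum_le_sum fun k hk ↦ ?_) (by positivity)
  have hkn : (k : ℝ) ≤ n := mod_cast (Finset.mem_range.1 hk).le
  have hnorm : ‖((π : ℂ) / 2 * (k + 1)) ^ 2‖ = (π / 2 * (k + 1)) ^ 2 := by
    rw [norm_pow, show (π : ℂ) / 2 * (k + 1) = ((π / 2 * (k + 1) : ℝ) : ℂ) by push_cast; rfl,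
      Complex.norm_of_nonneg (by positivity)]
  rw [norm_mul, hnorm]
  calc (‖c (k + 1)‖ * (π / 2 * (k + 1)) ^ 2) ^ 2 * mpNorm k ^ 2
      = (π / 2 * (k + 1)) ^ 2 * (‖c (k + 1)‖ ^ 2 * mpNorm (k + 1) ^ 2) := by
        rw [mpNorm_succ]
        ring
    _ ≤ (π / 2 * (n + 1)) ^ 2 * (‖c (k + 1)‖ ^ 2 * mpNorm (k + 1) ^ 2) := by gcongr

lemma X_mul_sum_smul_mpPolyC (n : ℕ) (c : ℕ → ℂ) :
    X * ∑ k ∈ Finset.range (n + 1), c k • mpPolyC k =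
      ∑ k ∈ Finset.range (n + 1), c k • mpPolyC (k + 1) +
        ∑ k ∈ Finset.range n, (c (k + 1) * (π / 2 * (k + 1)) ^ 2) • mpPolyC k := by
  simp only [Finset.mul_sum, mul_smul_comm, X_mul_mpPolyC, smul_add, Finset.sum_add_distrib]
  congr 1
  rw [Finset.sum_range_succ']
  simp [smul_smul]

lemma weightedNormSq_X_mul_le {n : ℕ} {p : ℂ[X]} (hp : p.natDegree ≤ n) :
    weightedNormSq sechWeight (X * p) ≤
      4 * (π / 2 * (n + 1)) ^ 2 * weightedNormSq sechWeight p := by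
  obtain ⟨c, rfl⟩ := exists_eq_sum_smul_mpPolyC hp
  rw [X_mul_sum_smul_mpPolyC]
  refine (isMomentWeight_sechWeight.weightedNormSq_add_le _ _).trans ?_
  linarith [weightedNormSq_raise_le n c, weightedNormSq_lower_le n c]

variable {ν : ℝ} (hν : |ν| < 1)
include hν

lemma weightedNormSq_sechWeight_le_add {T : ℝ} (hT : 0 < T) (p : ℂ[X]) :
    weightedNormSq sechWeight p ≤
      2 * exp 2 * (1 + T) * weightedNormSq (macdonaldAbs ν) p +
        1 / T * weightedNormSq sechWeight (X * p) := by
  have hK := isMomentWeight_macdonaldAbs hν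
  have hS := isMomentWeight_sechWeight
  refine hS.weightedNormSq_le_add hK hS fun y ↦ ?_
  rw [norm_eval_X_mul_sq]
  have := sechWeight_pos y
  have := hK.pos y
  rcases le_or_gt (y ^ 2) T with hy | hy
  · refine le_add_of_le_of_nonneg ?_ (by positivity)
    calc ‖p.eval (y : ℂ)‖ ^ 2 * sechWeight y
        ≤ ‖p.eval (y : ℂ)‖ ^ 2 * (2 * exp 2 * (1 + y ^ 2) * macdonaldAbs ν y) := by
          gcongr
          exact sechWeight_le_macdonaldAbs hν y
      _ ≤ ‖p.eval (y : ℂ)‖ ^ 2 * (2 * exp 2 * (1 + T) * macdonaldAbs ν y) := by gcongr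
      _ = 2 * exp 2 * (1 + T) * (‖p.eval (y : ℂ)‖ ^ 2 * macdonaldAbs ν y) := by ring
  · refine le_add_of_nonneg_of_le (by positivity) ?_
    calc ‖p.eval (y : ℂ)‖ ^ 2 * sechWeight y
        ≤ y ^ 2 / T * (‖p.eval (y : ℂ)‖ ^ 2 * sechWeight y) :=
          le_mul_of_one_le_left (by positivity) ((one_le_div hT).2 hy.le)
      _ = 1 / T * (y ^ 2 * ‖p.eval (y : ℂ)‖ ^ 2 * sechWeight y) := by ring

/- On polynomials of degree at most `n` multiplication by `y` has norm at most `π (n + 1)`, so the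
part of the `sechWeight` norm carried by `y ^ 2 > 2 π ^ 2 (n + 1) ^ 2` is at most half of it. -/
lemma exists_weightedNormSq_sechWeight_le : ∃ C > 0, ∀ (n : ℕ) (p : ℂ[X]), p.natDegree ≤ n →
    weightedNormSq sechWeight p ≤ C * (n + 1) ^ 2 * weightedNormSq (macdonaldAbs ν) p := by
  refine ⟨4 * exp 2 * (1 + 2 * π ^ 2), by positivity, fun n p hp ↦ ?_⟩
  have := (isMomentWeight_macdonaldAbs hν).weightedNormSq_nonneg p
  set T : ℝ := 2 * π ^ 2 * (n + 1) ^ 2 with hT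
  have hT0 : 0 < T := by positivity
  have htail : 1 / T * weightedNormSq sechWeight (X * p) ≤ 1 / 2 * weightedNormSq sechWeight p :=
    calc 1 / T * weightedNormSq sechWeight (X * p)
        ≤ 1 / T * (4 * (π / 2 * (n + 1)) ^ 2 * weightedNormSq sechWeight p) := by
          gcongr
          exact weightedNormSq_X_mul_le hp
      _ = 1 / 2 * weightedNormSq sechWeight p := by
          rw [hT]
          field
  have hT1 : 1 + T ≤ (1 + 2 * π ^ 2) * (n + 1) ^ 2 := by
    nlinarith [(n.cast_nonneg : (0 : ℝ) ≤ n)]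
  calc weightedNormSq sechWeight p
      ≤ 4 * exp 2 * (1 + T) * weightedNormSq (macdonaldAbs ν) p := by
        linarith [weightedNormSq_sechWeight_le_add hν hT0 p]
    _ ≤ 4 * exp 2 * ((1 + 2 * π ^ 2) * (n + 1) ^ 2) * weightedNormSq (macdonaldAbs ν) p := by
        gcongr
    _ = 4 * exp 2 * (1 + 2 * π ^ 2) * (n + 1) ^ 2 * weightedNormSq (macdonaldAbs ν) p := by ring

lemma exists_weightedNormSq_macdonaldAbs_X_mul_le : ∃ C > 0, ∀ p : ℂ[X],
    weightedNormSq (macdonaldAbs ν) (X * p) ≤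
      C * (weightedNormSq sechWeight p + weightedNormSq sechWeight (X * p)) := by
  obtain ⟨C, hC, h⟩ := exists_sq_mul_macdonaldAbs_le hν
  refine ⟨C, hC, fun p ↦ ?_⟩
  rw [mul_add]
  refine (isMomentWeight_macdonaldAbs hν).weightedNormSq_le_add isMomentWeight_sechWeight
    isMomentWeight_sechWeight fun y ↦ ?_
  rw [norm_eval_X_mul_sq]
  nlinarith [mul_le_mul_of_nonneg_left (h y) (sq_nonneg ‖p.eval (y : ℂ)‖)]

end WeightedNorm

/-! ### The Bessel weight on the imaginary axis -/

section BesselWeight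

open Polynomial

/-- The phase `exp (∓ π i ν / 2)` by which `J_ν` on the positive axis is replaced when the contour
of integration is turned to the positive and negative imaginary axes. -/
noncomputable def besselPhase (ν y : ℝ) : ℂ :=
  Complex.exp ((if 0 < y then -(π / 2 * ν) else π / 2 * ν : ℝ) * Complex.I)

/-- The complex weight on the line for which the rotated Bessel polynomials are orthogonal. -/
noncomputable def besselWeight (ν y : ℝ) : ℂ := besselPhase ν y * macdonaldAbs ν y

/-- The linear functional with `j`-th moment `(-i) ^ j m_j`, that is, the regularized integral
against `J_ν` in the rotated variable `x = i y`. -/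
noncomputable def besselFunctional (ν : ℝ) : ℂ[X] →ₗ[ℂ] ℂ :=
  lsum fun j ↦ ((-Complex.I) ^ j * (besselMoment ν j : ℂ)) • LinearMap.id

lemma besselFunctional_monomial (ν : ℝ) (j : ℕ) (a : ℂ) :
    besselFunctional ν (monomial j a) = (-Complex.I) ^ j * besselMoment ν j * a := by
  simp [besselFunctional, lsum_apply, sum_monomial_index]

lemma besselFunctional_X_pow_mul (ν : ℝ) {n : ℕ} {p : ℂ[X]} (hp : p.natDegree < n) (j : ℕ) :
    besselFunctional ν (X ^ j * p) =
      ∑ k ∈ Finset.range n, (-Complex.I) ^ (j + k) * besselMoment ν (j + k) * p.coeff k := by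
  conv_lhs => rw [p.as_sum_range' n hp]
  simp only [Finset.mul_sum, X_pow_mul_monomial, map_sum, besselFunctional_monomial, add_comm]

lemma norm_besselPhase (ν y : ℝ) : ‖besselPhase ν y‖ = 1 := Complex.norm_exp_ofReal_mul_I _

lemma re_besselPhase (ν y : ℝ) : (besselPhase ν y).re = cos (π / 2 * ν) := by
  rw [besselPhase, Complex.exp_ofReal_mul_I_re]
  split_ifs <;> simp only [cos_neg]

lemma im_besselPhase_mul_self (ν y : ℝ) : (besselPhase ν y).im * y = -(sin (π / 2 * ν) * |y|) := by
  rw [besselPhase, Complex.exp_ofReal_mul_I_im]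
  split_ifs with hy
  · rw [sin_neg, abs_of_pos hy, neg_mul]
  · rw [abs_of_nonpos (not_lt.1 hy), mul_neg, neg_neg]

lemma abs_im_besselPhase (ν y : ℝ) : |(besselPhase ν y).im| = |sin (π / 2 * ν)| := by
  rw [besselPhase, Complex.exp_ofReal_mul_I_im]
  split_ifs <;> simp only [sin_neg, abs_neg]

lemma measurable_besselPhase (ν : ℝ) : Measurable (besselPhase ν) := by
  unfold besselPhase
  have : Measurable fun y : ℝ ↦ if 0 < y then -(π / 2 * ν) else π / 2 * ν :=
    Measurable.ite measurableSet_Ioi measurable_const measurable_const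
  fun_prop

lemma exp_neg_add_neg_one_pow_mul_exp (ν : ℝ) (j : ℕ) :
    Complex.exp ((-(π / 2 * ν) : ℝ) * Complex.I) +
        (-1) ^ j * Complex.exp ((π / 2 * ν : ℝ) * Complex.I) =
      (-Complex.I) ^ j * (2 * (cos (π / 2 * (j - ν)) : ℂ)) := by
  have hneg : (-1 : ℂ) ^ j = (-Complex.I) ^ j * (-Complex.I) ^ j := by
    rw [← mul_pow, neg_mul_neg, Complex.I_mul_I]
  have hpow : (-Complex.I) ^ j = Complex.exp (-(π / 2 * j) * Complex.I) := by
    rw [← Complex.exp_neg_pi_div_two_mul_I, ← Complex.exp_nat_mul]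
    congr 1
    ring
  rw [hneg, hpow, Complex.ofReal_cos, Complex.two_cos, mul_add]
  simp only [← Complex.exp_add]
  push_cast
  ring_nf

lemma integrable_mul_besselPhase (ν : ℝ) {f : ℝ → ℂ} (hf : Integrable f) :
    Integrable fun y ↦ f y * besselPhase ν y :=
  hf.mul_bdd (c := 1) (measurable_besselPhase ν).aestronglyMeasurable
    (.of_forall fun y ↦ (norm_besselPhase ν y).le)

variable {ν : ℝ} (hν : |ν| < 1)

include hν

lemma cos_pi_div_two_mul_pos_of_abs_lt : 0 < cos (π / 2 * ν) :=
  cos_pi_div_two_mul_pos (abs_lt.1 hν)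

lemma norm_besselWeight (y : ℝ) : ‖besselWeight ν y‖ = macdonaldAbs ν y := by
  rw [besselWeight, norm_mul, norm_besselPhase, one_mul,
    Complex.norm_of_nonneg (macdonaldAbs_pos hν y).le]

lemma integrable_eval_mul_besselWeight (p : ℂ[X]) :
    Integrable fun y : ℝ ↦ p.eval (y : ℂ) * besselWeight ν y := by
  convert integrable_mul_besselPhase ν
    ((isMomentWeight_macdonaldAbs hν).integrable_eval_mul p) using 2 with y
  rw [besselWeight]
  ring

lemma integral_pow_mul_macdonald_mul_cos (j : ℕ) :
    (∫ y in Set.Ioi 0, y ^ j * macdonald ν y) * cos (π / 2 * (j - ν)) = π * besselMoment ν j := by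
  have hreflect := Gamma_mul_Gamma_one_sub ((1 - ν + j) / 2)
  have harg : 1 - (1 - ν + j) / 2 = (1 + ν - j) / 2 := by ring
  have hsin : sin (π * ((1 - ν + j) / 2)) = cos (π / 2 * (j - ν)) := by
    rw [← sin_add_pi_div_two]
    ring_nf
  have hpos : 0 < Gamma ((1 - ν + j) / 2) :=
    Gamma_pos_of_pos (by linarith [(abs_lt.1 hν).2, (j.cast_nonneg : (0 : ℝ) ≤ j)])
  -- At a pole of the Gamma factor on the left both sides are `0`.
  have hinv : (Gamma ((1 + ν - j) / 2))⁻¹ =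
      Gamma ((1 - ν + j) / 2) * (cos (π / 2 * (j - ν)) / π) := by
    rw [← inv_div π, ← hsin, ← hreflect, harg, mul_inv, mul_inv_cancel_left₀ hpos.ne']
  rw [integral_pow_mul_macdonald hν, besselMoment, div_eq_mul_inv _ (Gamma ((1 + ν - j) / 2)), hinv]
  field_simp

lemma integral_pow_mul_besselWeight (j : ℕ) :
    ∫ y : ℝ, (y : ℂ) ^ j * besselWeight ν y = 2 * π * ((-Complex.I) ^ j * besselMoment ν j) := by
  have hint : Integrable fun y : ℝ ↦ (y : ℂ) ^ j * besselWeight ν y := by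
    simpa using integrable_eval_mul_besselWeight hν (X ^ j)
  have hpos : ∫ y in Set.Ioi (0 : ℝ), (y : ℂ) ^ j * besselWeight ν y =
      Complex.exp ((-(π / 2 * ν) : ℝ) * Complex.I) *
        ((∫ y in Set.Ioi 0, y ^ j * macdonald ν y : ℝ) : ℂ) := by
    rw [← integral_complex_ofReal, ← integral_const_mul]
    refine setIntegral_congr_fun measurableSet_Ioi fun y (hy : 0 < y) ↦ ?_
    simp only [besselWeight, besselPhase, if_pos hy, macdonaldAbs_of_pos ν hy, Complex.ofReal_mul,
      Complex.ofReal_pow]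
    ring
  have hneg : ∫ y in Set.Iic (0 : ℝ), (y : ℂ) ^ j * besselWeight ν y =
      (-1) ^ j * Complex.exp ((π / 2 * ν : ℝ) * Complex.I) *
        ((∫ y in Set.Ioi 0, y ^ j * macdonald ν y : ℝ) : ℂ) := by
    rw [← neg_zero, ← integral_comp_neg_Ioi, neg_zero, ← integral_complex_ofReal,
      ← integral_const_mul]
    refine setIntegral_congr_fun measurableSet_Ioi fun y (hy : 0 < y) ↦ ?_
    simp only [besselWeight, besselPhase, if_neg (neg_neg_of_pos hy).not_gt, macdonaldAbs_neg,
      macdonaldAbs_of_pos ν hy, Complex.ofReal_mul, Complex.ofReal_pow, Complex.ofReal_neg]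
    rw [neg_pow]
    ring
  have hmoment := congrArg Complex.ofReal (integral_pow_mul_macdonald_mul_cos hν j)
  rw [← intervalIntegral.integral_Iic_add_Ioi hint.integrableOn hint.integrableOn, hpos, hneg,
    ← add_mul, add_comm (_ * _), exp_neg_add_neg_one_pow_mul_exp]
  push_cast at hmoment ⊢
  linear_combination 2 * (-Complex.I) ^ j * hmoment

lemma integral_eval_mul_besselWeight (p : ℂ[X]) :
    ∫ y : ℝ, p.eval (y : ℂ) * besselWeight ν y = 2 * π * besselFunctional ν p := by
  induction p using Polynomial.induction_on' with
  | add p q hp hq =>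
    simp only [eval_add, add_mul, map_add, mul_add, ← hp, ← hq]
    exact integral_add (integrable_eval_mul_besselWeight hν p)
      (integrable_eval_mul_besselWeight hν q)
  | monomial j a =>
    simp only [eval_monomial, mul_assoc, integral_const_mul, integral_pow_mul_besselWeight hν,
      besselFunctional_monomial]
    ring

lemma two_pi_mul_re_besselFunctional {p : ℂ[X]} {f : ℝ → ℝ} (hf : ∀ y : ℝ, p.eval (y : ℂ) = f y) :
    2 * π * (besselFunctional ν p).re = cos (π / 2 * ν) * ∫ y, f y * macdonaldAbs ν y := by
  have h := integral_re (integrable_eval_mul_besselWeight hν p)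
  rw [integral_eval_mul_besselWeight hν, ← Complex.ofReal_ofNat, ← Complex.ofReal_mul] at h
  simp only [RCLike.re_eq_complex_re, Complex.re_ofReal_mul] at h
  rw [← h, ← integral_const_mul]
  congr with y
  rw [hf, Complex.re_ofReal_mul, besselWeight, Complex.re_mul_ofReal, re_besselPhase]
  ring

lemma two_pi_mul_im_besselFunctional {p : ℂ[X]} {f : ℝ → ℝ} (hf : ∀ y : ℝ, p.eval (y : ℂ) = f y) :
    2 * π * (besselFunctional ν p).im = ∫ y, (besselPhase ν y).im * (f y * macdonaldAbs ν y) := by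
  have h := integral_im (integrable_eval_mul_besselWeight hν p)
  rw [integral_eval_mul_besselWeight hν, ← Complex.ofReal_ofNat, ← Complex.ofReal_mul] at h
  simp only [RCLike.im_eq_complex_im, Complex.im_ofReal_mul] at h
  rw [← h]
  congr with y
  rw [hf, Complex.im_ofReal_mul, besselWeight, Complex.im_mul_ofReal]
  ring

lemma two_pi_mul_re_besselFunctional_conjPoly_mul (p : ℂ[X]) :
    2 * π * (besselFunctional ν (conjPoly p * p)).re =
      cos (π / 2 * ν) * weightedNormSq (macdonaldAbs ν) p :=
  two_pi_mul_re_besselFunctional hν fun y ↦ (ofReal_norm_eval_sq p y).symm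

lemma eq_zero_of_besselFunctional_conjPoly_mul_eq_zero {p : ℂ[X]}
    (h : besselFunctional ν (conjPoly p * p) = 0) : p = 0 := by
  by_contra hp
  have hre := two_pi_mul_re_besselFunctional_conjPoly_mul hν p
  rw [h, Complex.zero_re, mul_zero] at hre
  exact (mul_pos (cos_pi_div_two_mul_pos_of_abs_lt hν)
    ((isMomentWeight_macdonaldAbs hν).weightedNormSq_pos hp)).ne hre

end BesselWeight

/-! ### Orthogonal polynomials for the Bessel weight -/

section RotatedOP

open Polynomial

/-- The polynomial `p (y) = (-i) ^ n P_n (i y)`, characterised by being monic of degree `n` and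
orthogonal to all polynomials of lower degree for `besselFunctional`. -/
structure IsRotatedBesselOP (ν : ℝ) (n : ℕ) (p : ℂ[X]) : Prop where
  monic : p.Monic
  natDegree_eq : p.natDegree = n
  orthogonal : ∀ q : ℂ[X], q.degree < n → besselFunctional ν (q * p) = 0

lemma besselFunctional_mul_eq_zero {ν : ℝ} {n : ℕ} {p q : ℂ[X]}
    (hp : ∀ j < n, besselFunctional ν (X ^ j * p) = 0) (hq : q.degree < n) :
    besselFunctional ν (q * p) = 0 := by
  obtain rfl | hq0 := eq_or_ne q 0
  · rw [zero_mul, map_zero]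
  rw [q.as_sum_range' n ((natDegree_lt_iff_degree_lt hq0).2 hq), Finset.sum_mul, map_sum]
  refine Finset.sum_eq_zero fun j hj ↦ ?_
  rw [← C_mul_X_pow_eq_monomial, mul_assoc, ← smul_eq_C_mul, map_smul, hp j (Finset.mem_range.1 hj),
    smul_zero]

lemma isRotatedBesselOP_scaleRoots {ν : ℝ} {n : ℕ} {P : ℂ[X]} (hP : IsBesselOP ν n P) :
    IsRotatedBesselOP ν n (P.scaleRoots (-Complex.I)) := by
  obtain ⟨hmonic, hdegree, horth⟩ := hP
  have hdegree' : (P.scaleRoots (-Complex.I)).natDegree = n := by rw [natDegree_scaleRoots, hdegree]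
  refine ⟨(monic_scaleRoots_iff _).2 hmonic, hdegree', fun q hq ↦
    besselFunctional_mul_eq_zero (fun j hj ↦ ?_) hq⟩
  rw [besselFunctional_X_pow_mul ν (hdegree'.trans_lt n.lt_succ_self)]
  calc ∑ k ∈ Finset.range (n + 1), (-Complex.I) ^ (j + k) * besselMoment ν (j + k) *
        (P.scaleRoots (-Complex.I)).coeff k
      = ∑ k ∈ Finset.range (n + 1),
          (-Complex.I) ^ (n + j) * (P.coeff k * besselMoment ν (j + k)) := by
        refine Finset.sum_congr rfl fun k hk ↦ ?_
        have hexp : n + j = (j + k) + (n - k) := by have := Finset.mem_range.1 hk; lia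
        rw [coeff_scaleRoots, hdegree, hexp, pow_add _ (j + k)]
        ring
    _ = 0 := by rw [← Finset.mul_sum, horth j hj, mul_zero]

lemma weightedNormSq_conjPoly (W : ℝ → ℝ) (p : ℂ[X]) :
    weightedNormSq W (conjPoly p) = weightedNormSq W p := by
  simp only [weightedNormSq, eval_conjPoly, RCLike.norm_conj]

namespace IsMomentWeight

variable {W : ℝ → ℝ}

lemma integrable_norm_mul_norm_mul (hW : IsMomentWeight W) (p q : ℂ[X]) :
    Integrable fun y : ℝ ↦ ‖p.eval (y : ℂ)‖ * ‖q.eval (y : ℂ)‖ * W y := by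
  refine (hW.integrable_eval_mul (p * q)).norm.congr (.of_forall fun y ↦ ?_)
  simp only [eval_mul, norm_mul, Complex.norm_of_nonneg (hW.pos y).le]

lemma integral_norm_mul_norm_mul_sq_le (hW : IsMomentWeight W) (p q : ℂ[X]) :
    (∫ y : ℝ, ‖p.eval (y : ℂ)‖ * ‖q.eval (y : ℂ)‖ * W y) ^ 2 ≤
      weightedNormSq W p * weightedNormSq W q := by
  set B := ∫ y : ℝ, ‖p.eval (y : ℂ)‖ * ‖q.eval (y : ℂ)‖ * W y with hB
  have hquad (t : ℝ) : 0 ≤ weightedNormSq W p * (t * t) + 2 * B * t + weightedNormSq W q := by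
    have hp := (hW.integrable_norm_sq_mul p).mul_const (t * t)
    have hpq := ((hW.integrable_norm_mul_norm_mul p q).const_mul 2).mul_const t
    have hsum := hp.fun_add hpq
    have hnonneg (y : ℝ) : 0 ≤ (t * ‖p.eval (y : ℂ)‖ + ‖q.eval (y : ℂ)‖) ^ 2 * W y :=
      mul_nonneg (sq_nonneg _) (hW.pos y).le
    simp only [weightedNormSq, hB, ← integral_const_mul, ← integral_mul_const]
    rw [← integral_add hp hpq, ← integral_add hsum (hW.integrable_norm_sq_mul q)]
    exact integral_nonneg fun y ↦ (hnonneg y).trans_eq (by ring)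
  have hdiscrim := discrim_le_zero hquad
  rw [discrim] at hdiscrim
  linarith

end IsMomentWeight

variable {ν : ℝ} (hν : |ν| < 1)
include hν

lemma hankelDet_ne_zero (n : ℕ) : hankelDet ν n ≠ 0 := by
  intro hdet
  obtain ⟨v, hv0, hv⟩ := Matrix.exists_mulVec_eq_zero_iff.2 hdet
  set q : ℂ[X] := ∑ k : Fin n, monomial (k : ℕ) (Complex.I ^ (k : ℕ) * (v k : ℂ)) with hq
  have hI (j : ℕ) : (-Complex.I) ^ j * Complex.I ^ j = 1 := by
    rw [← mul_pow, neg_mul, Complex.I_mul_I, neg_neg, one_pow]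
  have horth (j : ℕ) (hj : j < n) : besselFunctional ν (X ^ j * q) = 0 := by
    have hrow : ∑ k : Fin n, besselMoment ν (j + k) * v k = 0 := congrFun hv ⟨j, hj⟩
    calc besselFunctional ν (X ^ j * q)
        = (-Complex.I) ^ j * ((∑ k : Fin n, besselMoment ν (j + k) * v k : ℝ) : ℂ) := by
          simp only [hq, Finset.mul_sum, X_pow_mul_monomial, map_sum, besselFunctional_monomial,
            Complex.ofReal_sum, Complex.ofReal_mul]
          refine Finset.sum_congr rfl fun k _ ↦ ?_
          rw [add_comm (k : ℕ) j, pow_add]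
          linear_combination (-Complex.I) ^ j * besselMoment ν (j + k) * v k * hI k
      _ = 0 := by rw [hrow, Complex.ofReal_zero, mul_zero]
  have hdegree : (conjPoly q).degree < n := by
    rw [conjPoly, degree_map]
    refine (degree_sum_le _ _).trans_lt ((Finset.sup_lt_iff (WithBot.bot_lt_coe n)).2 fun k _ ↦ ?_)
    exact (degree_monomial_le _ _).trans_lt (Nat.cast_lt.2 k.2)
  have hq0 := eq_zero_of_besselFunctional_conjPoly_mul_eq_zero hν
    (besselFunctional_mul_eq_zero horth hdegree)
  refine hv0 (funext fun k ↦ ?_)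
  have hcoeff := congrArg (coeff · (k : ℕ)) (hq.symm.trans hq0)
  simpa [coeff_monomial, Fin.val_inj] using hcoeff

lemma two_pi_mul_norm_besselFunctional_mul_sq_le (p q : ℂ[X]) :
    (2 * π * ‖besselFunctional ν (p * q)‖) ^ 2 ≤
      weightedNormSq (macdonaldAbs ν) p * weightedNormSq (macdonaldAbs ν) q := by
  refine le_trans (pow_le_pow_left₀ (by positivity) ?_ 2)
    ((isMomentWeight_macdonaldAbs hν).integral_norm_mul_norm_mul_sq_le p q)
  calc 2 * π * ‖besselFunctional ν (p * q)‖
      = ‖∫ y : ℝ, (p * q).eval (y : ℂ) * besselWeight ν y‖ := by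
        rw [integral_eval_mul_besselWeight hν, norm_mul, norm_mul, Complex.norm_ofNat,
          Complex.norm_of_nonneg pi_pos.le]
    _ ≤ ∫ y : ℝ, ‖p.eval (y : ℂ)‖ * ‖q.eval (y : ℂ)‖ * macdonaldAbs ν y := by
        refine (norm_integral_le_integral_norm _).trans_eq ?_
        simp only [eval_mul, norm_mul, norm_besselWeight hν]

lemma IsRotatedBesselOP.weightedNormSq_le {n : ℕ} {p T : ℂ[X]} (hp : IsRotatedBesselOP ν n p)
    (hT : T.Monic) (hTn : T.natDegree = n) :
    cos (π / 2 * ν) ^ 2 * weightedNormSq (macdonaldAbs ν) p ≤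
      weightedNormSq (macdonaldAbs ν) T := by
  have hdegree : (conjPoly p - conjPoly T).degree < n := by
    rw [conjPoly, conjPoly, ← Polynomial.map_sub, degree_map, ← hp.natDegree_eq,
      ← degree_eq_natDegree hp.monic.ne_zero]
    exact degree_sub_lt_left (by simp [degree_eq_natDegree, hp.monic.ne_zero, hT.ne_zero,
      hp.natDegree_eq, hTn]) hp.monic.ne_zero (hp.monic.trans hT.symm)
  have hswap : besselFunctional ν (conjPoly p * p) = besselFunctional ν (conjPoly T * p) := by
    rw [← sub_eq_zero, ← map_sub, ← sub_mul]
    exact hp.orthogonal _ hdegree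
  have hpos := (isMomentWeight_macdonaldAbs hν).weightedNormSq_pos hp.monic.ne_zero
  have hcos := cos_pi_div_two_mul_pos_of_abs_lt hν
  have hle : cos (π / 2 * ν) * weightedNormSq (macdonaldAbs ν) p ≤
      2 * π * ‖besselFunctional ν (conjPoly T * p)‖ := by
    rw [← two_pi_mul_re_besselFunctional_conjPoly_mul hν, hswap]
    gcongr
    exact Complex.re_le_norm _
  have hsq := (pow_le_pow_left₀ (by positivity) hle 2).trans
    (two_pi_mul_norm_besselFunctional_mul_sq_le hν (conjPoly T) p)
  rw [weightedNormSq_conjPoly] at hsq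
  nlinarith

lemma exists_weightedNormSq_sechWeight_rotated_le :
    ∃ C > 0, ∀ (n : ℕ) (p : ℂ[X]), n ≠ 0 → IsRotatedBesselOP ν n p →
      weightedNormSq sechWeight p ≤ C * (n + 1) ^ 2 * mpNorm n ^ 2 := by
  obtain ⟨C₁, hC₁, hlower⟩ := exists_weightedNormSq_sechWeight_le hν
  obtain ⟨C₂, hC₂, hupper⟩ := exists_weightedNormSq_macdonaldAbs_X_mul_le hν
  have hcos := cos_pi_div_two_mul_pos_of_abs_lt hν
  refine ⟨C₁ * (C₂ * 5 / cos (π / 2 * ν) ^ 2), by positivity, fun n p hn hp ↦ ?_⟩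
  obtain ⟨m, rfl⟩ := Nat.exists_eq_add_one_of_ne_zero hn
  have hmin := hp.weightedNormSq_le hν (monic_X.mul (mpPolyC_monic m))
    (by rw [natDegree_X_mul (mpPolyC_monic m).ne_zero, natDegree_mpPolyC])
  have hnorm : weightedNormSq sechWeight (mpPolyC m) = mpNorm m ^ 2 := by
    simpa using weightedNormSq_sum_smul_mpPolyC {m} 1 (e := fun k ↦ k) Function.injective_id
  have hX := weightedNormSq_X_mul_le (natDegree_mpPolyC m).le
  have hmono : mpNorm m ≤ mpNorm (m + 1) := by
    rw [mpNorm_succ]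
    exact le_mul_of_one_le_left (mpNorm_pos m).le (by
      nlinarith [pi_gt_three, (m.cast_nonneg : (0 : ℝ) ≤ m)])
  have htrial :
      weightedNormSq (macdonaldAbs ν) (X * mpPolyC m) ≤ C₂ * (5 * mpNorm (m + 1) ^ 2) := by
    refine (hupper (mpPolyC m)).trans ?_
    gcongr
    rw [hnorm, mul_assoc, ← mul_pow, ← mpNorm_succ] at hX
    linarith [pow_le_pow_left₀ (mpNorm_pos m).le hmono 2]
  calc weightedNormSq sechWeight p
      ≤ C₁ * ((m + 1 : ℕ) + 1) ^ 2 * weightedNormSq (macdonaldAbs ν) p :=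
        hlower _ p hp.natDegree_eq.le
    _ ≤ C₁ * ((m + 1 : ℕ) + 1) ^ 2 * (C₂ * (5 * mpNorm (m + 1) ^ 2) / cos (π / 2 * ν) ^ 2) := by
        gcongr
        rw [le_div_iff₀' (by positivity)]
        exact hmin.trans htrial
    _ = C₁ * (C₂ * 5 / cos (π / 2 * ν) ^ 2) * ((m + 1 : ℕ) + 1) ^ 2 * mpNorm (m + 1) ^ 2 := by ring

end RotatedOP

/-! ### Location of the zeros -/

section Zeros

open Polynomial

lemma weightedNormSq_sechWeight_X_pow_mul_le {n j : ℕ} {q : ℂ[X]} (hq : q.natDegree < n)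
    (hj : j ≤ n) :
    weightedNormSq sechWeight (X ^ j * q) ≤
      ((2 * π * n) ^ 2) ^ j * weightedNormSq sechWeight q := by
  induction j with
  | zero => simp
  | succ j ih =>
    have hdegree : (X ^ j * q).natDegree ≤ 2 * n - 1 := by
      refine natDegree_mul_le.trans ?_
      rw [natDegree_X_pow]
      lia
    have hcast : ((2 * n - 1 : ℕ) : ℝ) + 1 = 2 * n := by
      rw [Nat.cast_sub (by lia)]
      push_cast
      ring
    have hstep := weightedNormSq_X_mul_le hdegree
    rw [hcast] at hstep
    calc weightedNormSq sechWeight (X ^ (j + 1) * q)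
        ≤ 4 * (π / 2 * (2 * n)) ^ 2 * weightedNormSq sechWeight (X ^ j * q) := by
          rwa [pow_succ', mul_assoc]
      _ ≤ 4 * (π / 2 * (2 * n)) ^ 2 *
          (((2 * π * n) ^ 2) ^ j * weightedNormSq sechWeight q) := by
          gcongr
          exact ih (by lia)
      _ = ((2 * π * n) ^ 2) ^ (j + 1) * weightedNormSq sechWeight q := by ring

lemma IsMomentWeight.weightedNormSq_X_mul_le_add {W : ℝ → ℝ} (hW : IsMomentWeight W) {T : ℝ}
    (hT : 0 < T) (m : ℕ) (q : ℂ[X]) :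
    weightedNormSq W (X * q) ≤
      T * weightedNormSq W q + 1 / T ^ m * weightedNormSq W (X ^ (m + 1) * q) := by
  refine hW.weightedNormSq_le_add hW hW fun y ↦ ?_
  have hpow : ‖(X ^ (m + 1) * q).eval (y : ℂ)‖ ^ 2 = (y ^ 2) ^ m * ‖(X * q).eval (y : ℂ)‖ ^ 2 := by
    rw [pow_succ X, mul_assoc, eval_mul, eval_pow, eval_X, norm_mul, norm_pow, Complex.norm_real,
      norm_eq_abs, mul_pow, pow_right_comm, sq_abs]
  have := hW.pos y
  rcases le_or_gt (y ^ 2) T with hy | hy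
  · refine le_add_of_le_of_nonneg ?_ (by positivity)
    rw [norm_eval_X_mul_sq, mul_assoc]
    gcongr
  · refine le_add_of_nonneg_of_le (by positivity) ?_
    rw [hpow, mul_assoc, ← mul_assoc (1 / T ^ m), one_div_mul_eq_div, ← div_pow]
    exact le_mul_of_one_le_left (by positivity) (one_le_pow₀ ((one_le_div hT).2 hy.le))

lemma natCast_sq_le_four_pow (n : ℕ) : (n : ℝ) ^ 2 ≤ 4 ^ n := by
  have h : (n : ℝ) ≤ 2 ^ n := mod_cast Nat.lt_two_pow_self.le
  calc (n : ℝ) ^ 2 ≤ (2 ^ n) ^ 2 := by gcongr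
    _ = 4 ^ n := by rw [pow_right_comm]; norm_num

variable {ν : ℝ} (hν : |ν| < 1)
include hν

lemma exists_weightedNormSq_macdonaldAbs_X_pow_mul_le :
    ∃ C > 0, ∀ (m : ℕ) (q : ℂ[X]), q.natDegree ≤ m →
      weightedNormSq (macdonaldAbs ν) (X ^ (m + 1) * q) ≤
        C * (m + 1) ^ 2 * ((2 * π * (m + 1)) ^ 2) ^ (m + 1) *
          weightedNormSq (macdonaldAbs ν) q := by
  obtain ⟨C₁, hC₁, hlower⟩ := exists_weightedNormSq_sechWeight_le hν
  obtain ⟨C₂, hC₂, hupper⟩ := exists_weightedNormSq_macdonaldAbs_X_mul_le hν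
  refine ⟨2 * C₂ * C₁, by positivity, fun m q hq ↦ ?_⟩
  set A : ℝ := 2 * π * (m + 1)
  set N := weightedNormSq sechWeight q
  have hN : 0 ≤ N := isMomentWeight_sechWeight.weightedNormSq_nonneg q
  have hA : 1 ≤ A := by nlinarith [pi_gt_three, (m.cast_nonneg : (0 : ℝ) ≤ m)]
  have hpow (j : ℕ) (hj : j ≤ m + 1) :
      weightedNormSq sechWeight (X ^ j * q) ≤ (A ^ 2) ^ (m + 1) * N := by
    have h := weightedNormSq_sechWeight_X_pow_mul_le (Nat.lt_succ_of_le hq) hj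
    rw [Nat.cast_succ] at h
    refine h.trans ?_
    gcongr
    exact one_le_pow₀ hA
  calc weightedNormSq (macdonaldAbs ν) (X ^ (m + 1) * q)
      ≤ C₂ * (weightedNormSq sechWeight (X ^ m * q) +
          weightedNormSq sechWeight (X ^ (m + 1) * q)) := by
        simpa only [pow_succ', mul_assoc] using hupper (X ^ m * q)
    _ ≤ C₂ * ((A ^ 2) ^ (m + 1) * N + (A ^ 2) ^ (m + 1) * N) := by
        gcongr
        exacts [hpow m m.le_succ, hpow (m + 1) le_rfl]
    _ = 2 * C₂ * (A ^ 2) ^ (m + 1) * N := by ring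
    _ ≤ 2 * C₂ * (A ^ 2) ^ (m + 1) *
        (C₁ * (m + 1) ^ 2 * weightedNormSq (macdonaldAbs ν) q) := by
        gcongr
        exact hlower m q hq
    _ = 2 * C₂ * C₁ * (m + 1) ^ 2 * (A ^ 2) ^ (m + 1) * weightedNormSq (macdonaldAbs ν) q := by
        ring

/- The polynomial losses incurred in comparing `macdonaldAbs` with `sechWeight` do not affect the
order `n` of the norm of multiplication by `y`: they are absorbed by taking a high power. -/
lemma exists_weightedNormSq_X_mul_le_sq :
    ∃ C > 0, ∀ (n : ℕ) (q : ℂ[X]), q.natDegree < n →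
      weightedNormSq (macdonaldAbs ν) (X * q) ≤
        (C * n) ^ 2 * weightedNormSq (macdonaldAbs ν) q := by
  obtain ⟨C, hC, htop⟩ := exists_weightedNormSq_macdonaldAbs_X_pow_mul_le hν
  have hK := isMomentWeight_macdonaldAbs hν
  refine ⟨2 * π * √(4 + 4 * C), by positivity, fun n q hq ↦ ?_⟩
  obtain ⟨m, rfl⟩ := Nat.exists_eq_add_one_of_ne_zero (Nat.ne_zero_of_lt hq)
  have hN := hK.weightedNormSq_nonneg q
  set N := weightedNormSq (macdonaldAbs ν) q
  have hA : 0 < 2 * π * ((m : ℝ) + 1) := by positivity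
  push_cast
  set A : ℝ := 2 * π * (m + 1) with hAdef
  calc weightedNormSq (macdonaldAbs ν) (X * q)
      ≤ 4 * A ^ 2 * N + 1 / (4 * A ^ 2) ^ m *
          weightedNormSq (macdonaldAbs ν) (X ^ (m + 1) * q) :=
        hK.weightedNormSq_X_mul_le_add (by positivity) m q
    _ ≤ 4 * A ^ 2 * N + 1 / (4 * A ^ 2) ^ m * (C * 4 ^ (m + 1) * (A ^ 2) ^ (m + 1) * N) := by
        gcongr
        refine (htop m q (Nat.lt_succ_iff.1 hq)).trans ?_
        gcongr
        exact mod_cast natCast_sq_le_four_pow (m + 1)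
    _ = (4 + 4 * C) * A ^ 2 * N := by
        rw [mul_pow 4 (A ^ 2) m, pow_succ, pow_succ]
        field
    _ = (2 * π * √(4 + 4 * C) * (m + 1)) ^ 2 * N := by
        rw [hAdef]
        linear_combination -((2 * π * (m + 1)) ^ 2 * N) * sq_sqrt (by positivity : 0 ≤ 4 + 4 * C)

omit hν in
lemma IsRotatedBesselOP.exists_quotient {n : ℕ} {p : ℂ[X]} {z : ℂ} (hp : IsRotatedBesselOP ν n p)
    (hz : p.IsRoot z) :
    ∃ q : ℂ[X], q ≠ 0 ∧ q.natDegree < n ∧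
      z * besselFunctional ν (conjPoly q * q) = besselFunctional ν (conjPoly q * (X * q)) := by
  obtain ⟨q, hq⟩ := dvd_iff_isRoot.2 hz
  have hq0 : q ≠ 0 := right_ne_zero_of_mul (hq ▸ hp.monic.ne_zero)
  have hdegree : q.natDegree < n := by
    rw [← hp.natDegree_eq, hq, natDegree_mul (X_sub_C_ne_zero z) hq0, natDegree_X_sub_C]
    lia
  refine ⟨q, hq0, hdegree, ?_⟩
  have horth := hp.orthogonal (conjPoly q) (by
    rw [conjPoly, degree_map, degree_eq_natDegree hq0]
    exact Nat.cast_lt.2 hdegree)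
  have hsplit : conjPoly q * p = conjPoly q * (X * q) - z • (conjPoly q * q) := by
    rw [hq, smul_eq_C_mul]
    ring
  rwa [hsplit, map_sub, map_smul, smul_eq_mul, sub_eq_zero, eq_comm] at horth

lemma exists_norm_le_mul_of_isRoot :
    ∃ R > 0, ∀ (n : ℕ) (p : ℂ[X]), IsRotatedBesselOP ν n p → ∀ z, p.IsRoot z → ‖z‖ ≤ R * n := by
  obtain ⟨C, hC, hX⟩ := exists_weightedNormSq_X_mul_le_sq hν
  have hcos := cos_pi_div_two_mul_pos_of_abs_lt hν
  refine ⟨C / cos (π / 2 * ν), by positivity, fun n p hp z hz ↦ ?_⟩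
  obtain ⟨q, hq0, hqn, hzq⟩ := hp.exists_quotient hz
  have hN := (isMomentWeight_macdonaldAbs hν).weightedNormSq_pos hq0
  have hcs := two_pi_mul_norm_besselFunctional_mul_sq_le hν (conjPoly q) (X * q)
  rw [weightedNormSq_conjPoly] at hcs
  have hXq := hX n q hqn
  set N := weightedNormSq (macdonaldAbs ν) q
  have hlower : cos (π / 2 * ν) * N ≤ 2 * π * ‖besselFunctional ν (conjPoly q * q)‖ := by
    rw [← two_pi_mul_re_besselFunctional_conjPoly_mul hν]
    gcongr
    exact Complex.re_le_norm _
  have hupper : 2 * π * ‖besselFunctional ν (conjPoly q * (X * q))‖ ≤ C * n * N := by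
    refine le_of_sq_le_sq (hcs.trans ?_) (by positivity)
    nlinarith
  rw [← hzq, norm_mul] at hupper
  rw [div_mul_eq_mul_div, le_div_iff₀ hcos]
  refine le_of_mul_le_mul_right ?_ hN
  nlinarith [norm_nonneg z]

lemma abs_two_pi_mul_im_besselFunctional_conjPoly_mul_le (q : ℂ[X]) :
    |2 * π * (besselFunctional ν (conjPoly q * q)).im| ≤
      |sin (π / 2 * ν)| * weightedNormSq (macdonaldAbs ν) q := by
  rw [two_pi_mul_im_besselFunctional hν fun y ↦ (ofReal_norm_eval_sq q y).symm, weightedNormSq,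
    ← integral_const_mul]
  refine (abs_integral_le_integral_abs).trans_eq (integral_congr_ae (.of_forall fun y ↦ ?_))
  have := macdonaldAbs_pos hν y
  simp only [abs_mul, abs_im_besselPhase, abs_of_pos this, abs_of_nonneg (sq_nonneg ‖_‖)]

lemma exists_im_re_besselFunctional_conjPoly_mul_X_mul (q : ℂ[X]) :
    ∃ A : ℝ, 2 * π * (besselFunctional ν (conjPoly q * (X * q))).im = -(sin (π / 2 * ν) * A) ∧
      |2 * π * (besselFunctional ν (conjPoly q * (X * q))).re| ≤ cos (π / 2 * ν) * A := by
  have hvalue (y : ℝ) :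
      (conjPoly q * (X * q)).eval (y : ℂ) = ((y * ‖q.eval (y : ℂ)‖ ^ 2 : ℝ) : ℂ) := by
    rw [Complex.ofReal_mul, ofReal_norm_eval_sq, mul_left_comm, eval_mul, eval_X]
  refine ⟨∫ y : ℝ, |y| * ‖q.eval (y : ℂ)‖ ^ 2 * macdonaldAbs ν y, ?_, ?_⟩
  · rw [two_pi_mul_im_besselFunctional hν hvalue, ← integral_const_mul, ← integral_neg]
    congr with y
    linear_combination ‖q.eval (y : ℂ)‖ ^ 2 * macdonaldAbs ν y * im_besselPhase_mul_self ν y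
  · have hcos := cos_pi_div_two_mul_pos_of_abs_lt hν
    rw [two_pi_mul_re_besselFunctional hν hvalue, abs_mul, abs_of_pos hcos]
    gcongr
    refine abs_integral_le_integral_abs.trans_eq (integral_congr_ae (.of_forall fun y ↦ ?_))
    have := macdonaldAbs_pos hν y
    simp only [abs_mul, abs_of_pos this, abs_of_nonneg (sq_nonneg ‖_‖)]

lemma exists_abs_im_eq_mul_im :
    ∃ s : ℝ, |s| = 1 ∧ ∀ (n : ℕ) (p : ℂ[X]), IsRotatedBesselOP ν n p →
      ∀ z, p.IsRoot z → |z.im| = s * z.im := by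
  obtain ⟨s, hs, hsin⟩ : ∃ s : ℝ, |s| = 1 ∧ |sin (π / 2 * ν)| = -(s * sin (π / 2 * ν)) := by
    rcases abs_cases (sin (π / 2 * ν)) with h | h
    · exact ⟨-1, by simp, by simp [h.1]⟩
    · exact ⟨1, by simp, by simp [h.1]⟩
  refine ⟨s, hs, fun n p hp z hz ↦ ?_⟩
  suffices 0 ≤ s * z.im by rw [← abs_of_nonneg this, abs_mul, hs, one_mul]
  obtain ⟨q, hq0, -, hzq⟩ := hp.exists_quotient hz
  obtain ⟨A, hb_im, hb_re⟩ := exists_im_re_besselFunctional_conjPoly_mul_X_mul hν q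
  have ha_re := two_pi_mul_re_besselFunctional_conjPoly_mul hν q
  have ha_im := abs_two_pi_mul_im_besselFunctional_conjPoly_mul_le hν q
  have hN := (isMomentWeight_macdonaldAbs hν).weightedNormSq_pos hq0
  have hcos := cos_pi_div_two_mul_pos_of_abs_lt hν
  rw [← hzq] at hb_im hb_re
  set a := besselFunctional ν (conjPoly q * q)
  set N := weightedNormSq (macdonaldAbs ν) q
  have hnormSq : 0 < (2 * π * a.re) ^ 2 + (2 * π * a.im) ^ 2 := by rw [ha_re]; positivity
  have hprod : s * (2 * π * (z * a).re * (2 * π * a.im)) ≤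
      cos (π / 2 * ν) * A * (|sin (π / 2 * ν)| * N) := by
    refine (le_abs_self _).trans ?_
    rw [abs_mul, hs, one_mul, abs_mul]
    exact mul_le_mul hb_re ha_im (abs_nonneg _) ((abs_nonneg _).trans hb_re)
  have him : z.im * ((2 * π * a.re) ^ 2 + (2 * π * a.im) ^ 2) =
      2 * π * (z * a).im * (2 * π * a.re) - 2 * π * (z * a).re * (2 * π * a.im) := by
    rw [Complex.mul_re, Complex.mul_im]
    ring
  refine nonneg_of_mul_nonneg_left ?_ hnormSq
  rw [mul_assoc, him, hb_im, ha_re]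
  rw [hsin] at hprod
  linarith

end Zeros

/-! ### Comparison with the Meixner–Pollaczek polynomials away from the origin -/

section Comparison

open Polynomial

lemma norm_eval_sq_le_weightedNormSq_mul_sum {n : ℕ} {p : ℂ[X]} (hp : p.natDegree ≤ n) (z : ℂ) :
    ‖p.eval z‖ ^ 2 ≤ weightedNormSq sechWeight p *
      ∑ k ∈ Finset.range (n + 1), (‖(mpPolyC k).eval z‖ / mpNorm k) ^ 2 := by
  obtain ⟨c, rfl⟩ := exists_eq_sum_smul_mpPolyC hp
  rw [weightedNormSq_sum_smul_mpPolyC (e := fun k ↦ k) _ c Function.injective_id]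
  simp only [← mul_pow]
  refine (pow_le_pow_left₀ (norm_nonneg _) ?_ 2).trans (Finset.sum_mul_sq_le_sq_mul_sq _ _ _)
  rw [eval_finsetSum]
  refine norm_sum_le_of_le _ fun k _ ↦ (Eq.le ?_)
  rw [eval_smul, norm_smul, mul_assoc, mul_div_cancel₀ _ (mpNorm_pos k).ne']

section

variable {n : ℕ} {z : ℂ} (hz : π * n ≤ ‖z‖)
include hz

lemma mul_norm_eval_mpPolyC_le_norm_eval_succ {k : ℕ} (hk : k < n) :
    π * n / 2 * ‖(mpPolyC k).eval z‖ ≤ ‖(mpPolyC (k + 1)).eval z‖ := by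
  have hrec (k : ℕ) : (mpPolyC (k + 1)).eval z =
      z * (mpPolyC k).eval z - (π / 2 * k) ^ 2 * (mpPolyC (k - 1)).eval z := by
    have h := congrArg (eval z) (X_mul_mpPolyC k)
    rw [eval_mul, eval_X, eval_add, eval_smul, smul_eq_mul] at h
    rw [h, add_sub_cancel_right]
  induction k with
  | zero =>
    rw [hrec 0]
    simp only [CharP.cast_eq_zero, mul_zero, zero_pow two_ne_zero, zero_mul, sub_zero, norm_mul]
    gcongr
    linarith [(by positivity : 0 ≤ π * n)]
  | succ k ih =>
    have hlower : (π / 2 * (k + 1 : ℕ)) ^ 2 * ‖(mpPolyC k).eval z‖ ≤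
        π * n / 2 * ‖(mpPolyC (k + 1)).eval z‖ := by
      calc (π / 2 * (k + 1 : ℕ)) ^ 2 * ‖(mpPolyC k).eval z‖
          ≤ (π / 2 * n) ^ 2 * ‖(mpPolyC k).eval z‖ := by gcongr
        _ = π * n / 2 * (π * n / 2 * ‖(mpPolyC k).eval z‖) := by ring
        _ ≤ π * n / 2 * ‖(mpPolyC (k + 1)).eval z‖ := by
            gcongr
            exact ih (by lia)
    have hnorm : ‖((π / 2 * (k + 1 : ℕ)) ^ 2 : ℂ)‖ = (π / 2 * (k + 1 : ℕ)) ^ 2 := by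
      exact_mod_cast Complex.norm_of_nonneg (by positivity : 0 ≤ (π / 2 * (k + 1 : ℕ)) ^ 2)
    have htriangle := norm_sub_norm_le (z * (mpPolyC (k + 1)).eval z)
      ((π / 2 * (k + 1 : ℕ)) ^ 2 * (mpPolyC k).eval z)
    rw [norm_mul, norm_mul, hnorm] at htriangle
    rw [hrec (k + 1), Nat.add_sub_cancel]
    linarith [mul_le_mul_of_nonneg_right hz (norm_nonneg ((mpPolyC (k + 1)).eval z))]

lemma eval_mpPolyC_ne_zero (hn : n ≠ 0) {k : ℕ} (hk : k ≤ n) : (mpPolyC k).eval z ≠ 0 := by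
  induction k with
  | zero => simp [(mpPolyC_monic 0).natDegree_eq_zero.1 (natDegree_mpPolyC 0)]
  | succ k ih =>
    have := norm_pos_iff.2 (ih (by lia))
    refine norm_pos_iff.1 (lt_of_lt_of_le ?_ (mul_norm_eval_mpPolyC_le_norm_eval_succ hz hk))
    positivity

lemma norm_eval_mpPolyC_div_mpNorm_le {k : ℕ} (hk : k ≤ n) :
    ‖(mpPolyC k).eval z‖ / mpNorm k ≤ ‖(mpPolyC n).eval z‖ / mpNorm n := by
  suffices ∀ l, k ≤ l → l ≤ n →
      ‖(mpPolyC k).eval z‖ / mpNorm k ≤ ‖(mpPolyC l).eval z‖ / mpNorm l from this n hk le_rfl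
  intro l hkl
  induction l, hkl using Nat.le_induction with
  | base => exact fun _ ↦ le_rfl
  | succ l _ ih =>
    intro hl
    refine (ih (by lia)).trans ?_
    have := mpNorm_pos l
    have hcast : (l : ℝ) + 1 ≤ n := mod_cast hl
    rw [mpNorm_succ, div_le_div_iff₀ this (by positivity)]
    calc ‖(mpPolyC l).eval z‖ * (π / 2 * (l + 1) * mpNorm l)
        ≤ ‖(mpPolyC l).eval z‖ * (π / 2 * n * mpNorm l) := by gcongr
      _ = π * n / 2 * ‖(mpPolyC l).eval z‖ * mpNorm l := by ring
      _ ≤ ‖(mpPolyC (l + 1)).eval z‖ * mpNorm l := by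
          gcongr
          exact mul_norm_eval_mpPolyC_le_norm_eval_succ hz hl

end

lemma exists_norm_eval_le_mul_norm_eval_mpPolyC {ν : ℝ} (hν : |ν| < 1) :
    ∃ C > 1, ∀ (n : ℕ) (p : ℂ[X]), n ≠ 0 → IsRotatedBesselOP ν n p → ∀ z : ℂ, π * n ≤ ‖z‖ →
      ‖p.eval z‖ ≤ C * (n + 1) ^ 2 * ‖(mpPolyC n).eval z‖ := by
  obtain ⟨C, hC, hnorm⟩ := exists_weightedNormSq_sechWeight_rotated_le hν
  refine ⟨1 + C, by linarith, fun n p hn hp z hz ↦ le_of_sq_le_sq ?_ (by positivity)⟩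
  have := mpNorm_pos n
  have hsum : ∑ k ∈ Finset.range (n + 1), (‖(mpPolyC k).eval z‖ / mpNorm k) ^ 2 ≤
      (n + 1) * (‖(mpPolyC n).eval z‖ / mpNorm n) ^ 2 := by
    refine (Finset.sum_le_card_nsmul _ _ ((‖(mpPolyC n).eval z‖ / mpNorm n) ^ 2)
      fun k hk ↦ ?_).trans_eq (by simp)
    have := mpNorm_pos k
    gcongr ?_ ^ 2
    exact norm_eval_mpPolyC_div_mpNorm_le hz (Finset.mem_range_succ_iff.1 hk)
  calc ‖p.eval z‖ ^ 2
      ≤ weightedNormSq sechWeight p *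
          ∑ k ∈ Finset.range (n + 1), (‖(mpPolyC k).eval z‖ / mpNorm k) ^ 2 :=
        norm_eval_sq_le_weightedNormSq_mul_sum hp.natDegree_eq.le z
    _ ≤ C * (n + 1) ^ 2 * mpNorm n ^ 2 * ((n + 1) * (‖(mpPolyC n).eval z‖ / mpNorm n) ^ 2) := by
        gcongr
        exact hnorm n p hn hp
    _ = C * (n + 1) ^ 3 * ‖(mpPolyC n).eval z‖ ^ 2 := by field
    _ ≤ (1 + C) ^ 2 * (n + 1) ^ 4 * ‖(mpPolyC n).eval z‖ ^ 2 := by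
        gcongr
        · nlinarith
        · linarith [(n.cast_nonneg : (0 : ℝ) ≤ n)]
        · norm_num
    _ = ((1 + C) * (n + 1) ^ 2 * ‖(mpPolyC n).eval z‖) ^ 2 := by ring

end Comparison

/-! ### Comparison of power sums of roots -/

section PowerSums

open Polynomial Topology

/-- A logarithm of `∏ ζ ∈ s, (1 - ζ * w)`, analytic as long as `‖ζ * w‖ < 1` for all `ζ ∈ s`; its
Taylor coefficients at the origin are, up to constants, the power sums of `s`. -/
noncomputable def logOneSubSum (s : Multiset ℂ) (w : ℂ) : ℂ :=
  (s.map fun ζ ↦ Complex.log (1 - ζ * w)).sum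

@[simp] lemma logOneSubSum_zero : logOneSubSum 0 = fun _ ↦ 0 := rfl

@[simp] lemma logOneSubSum_apply_zero (s : Multiset ℂ) : logOneSubSum s 0 = 0 := by
  simp [logOneSubSum]

lemma logOneSubSum_cons (ζ : ℂ) (s : Multiset ℂ) :
    logOneSubSum (ζ ::ₘ s) = fun w ↦ Complex.log (1 - ζ * w) + logOneSubSum s w := by
  funext w
  simp [logOneSubSum]

lemma one_sub_mem_slitPlane {z : ℂ} (hz : ‖z‖ < 1) : 1 - z ∈ Complex.slitPlane := by
  simpa [sub_eq_add_neg] using Complex.mem_slitPlane_of_norm_lt_one (z := -z) (by simpa using hz)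

lemma analyticAt_logOneSubSum {s : Multiset ℂ} {w : ℂ} (h : ∀ ζ ∈ s, ‖ζ * w‖ < 1) :
    AnalyticAt ℂ (logOneSubSum s) w := by
  induction s using Multiset.induction with
  | empty => exact analyticAt_const
  | cons ζ s ih =>
    rw [logOneSubSum_cons]
    exact ((by fun_prop : AnalyticAt ℂ (fun w ↦ 1 - ζ * w) w).clog
      (one_sub_mem_slitPlane (h ζ (Multiset.mem_cons_self _ _)))).fun_add
      (ih fun z hz ↦ h z (Multiset.mem_cons_of_mem hz))

lemma iteratedDeriv_succ_log_one_sub_mul_zero (ζ : ℂ) (k : ℕ) :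
    iteratedDeriv (k + 1) (fun w ↦ Complex.log (1 - ζ * w)) 0 = -(k.factorial * ζ ^ (k + 1)) := by
  have hderiv : deriv (fun w ↦ Complex.log (1 - ζ * w)) =ᶠ[𝓝 0] fun w ↦ -ζ * (-ζ * w + 1)⁻¹ := by
    have hmem : ∀ᶠ w in 𝓝 (0 : ℂ), 1 - ζ * w ∈ Complex.slitPlane :=
      (by fun_prop : Continuous fun w ↦ 1 - ζ * w).continuousAt.eventually_mem
        (Complex.isOpen_slitPlane.mem_nhds (by simp))
    filter_upwards [hmem] with w hw
    have hlin : HasDerivAt (fun w ↦ 1 - ζ * w) (-ζ) w := by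
      simpa using ((hasDerivAt_id w).const_mul ζ).const_sub 1
    rw [(hlin.clog hw).deriv, div_eq_mul_inv, neg_mul ζ w, neg_add_eq_sub]
  rw [iteratedDeriv_succ', hderiv.iteratedDeriv_eq, iteratedDeriv_const_mul_field,
    iteratedDeriv_eq_iterate, iter_deriv_inv_linear,
    neg_pow ζ k]
  simp only [mul_zero, zero_add, one_zpow, mul_one]
  linear_combination -(ζ * k.factorial * ζ ^ k) * mul_self_eq_one_iff.2 (neg_one_pow_eq_or ℂ k)

lemma iteratedDeriv_succ_logOneSubSum_zero (s : Multiset ℂ) (k : ℕ) :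
    iteratedDeriv (k + 1) (logOneSubSum s) 0 = -(k.factorial * (s.map (· ^ (k + 1))).sum) := by
  induction s using Multiset.induction with
  | empty => simp
  | cons ζ s ih =>
    rw [logOneSubSum_cons, iteratedDeriv_fun_add, ih, iteratedDeriv_succ_log_one_sub_mul_zero]
    · simp only [Multiset.map_cons, Multiset.sum_cons]
      ring
    · exact ((by fun_prop : AnalyticAt ℂ (fun w ↦ 1 - ζ * w) 0).clog (by simp)).contDiffAt
    · exact (analyticAt_logOneSubSum (by simp)).contDiffAt

lemma exp_logOneSubSum_roots {p : ℂ[X]} (hp : p.Monic) {w : ℂ} (hw : w ≠ 0)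
    (h : ∀ ζ ∈ p.roots, ‖ζ * w‖ < 1) :
    Complex.exp (logOneSubSum p.roots w) = w ^ p.natDegree * p.eval w⁻¹ := by
  have hsplits := IsAlgClosed.splits p
  have heval : p.eval w⁻¹ = (p.roots.map fun ζ ↦ w⁻¹ - ζ).prod := by
    conv_lhs => rw [hsplits.eq_prod_roots_of_monic hp]
    simp [eval_multiset_prod, Multiset.map_map]
  rw [logOneSubSum, Complex.exp_multiset_sum, Multiset.map_map, heval,
    hsplits.natDegree_eq_card_roots, ← Multiset.prod_replicate, ← Multiset.map_const',
    ← Multiset.prod_map_mul]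
  refine congrArg Multiset.prod (Multiset.map_congr rfl fun ζ hζ ↦ ?_)
  rw [Function.comp_apply, Complex.exp_log (Complex.slitPlane_ne_zero
    (one_sub_mem_slitPlane (h ζ hζ))), mul_sub, mul_inv_cancel₀ hw, mul_comm]

variable {p m : ℂ[X]} {ρ M : ℝ} (hp : p.Monic) (hm : m.Monic) (hdeg : p.natDegree = m.natDegree)
  (hρ : 0 < ρ) (hpρ : ∀ z ∈ p.roots, ‖z‖ ≤ ρ) (hmρ : ∀ z ∈ m.roots, ‖z‖ ≤ ρ)
  (hle : ∀ z : ℂ, ρ ≤ ‖z‖ → ‖p.eval z‖ ≤ exp M * ‖m.eval z‖)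

include hρ in
lemma norm_mul_lt_one_of_mem_ball {s : Multiset ℂ} (hs : ∀ z ∈ s, ‖z‖ ≤ ρ) {w : ℂ}
    (hw : w ∈ Metric.ball 0 ρ⁻¹) (ζ : ℂ) (hζ : ζ ∈ s) : ‖ζ * w‖ < 1 := by
  rw [mem_ball_zero_iff] at hw
  calc ‖ζ * w‖ ≤ ρ * ‖w‖ := by rw [norm_mul]; gcongr; exact hs ζ hζ
    _ < ρ * ρ⁻¹ := by gcongr
    _ = 1 := mul_inv_cancel₀ hρ.ne'

include hp hm hdeg hρ hpρ hmρ hle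

lemma re_logOneSubSum_sub_le {w : ℂ} (hw : w ∈ Metric.ball 0 ρ⁻¹) (hw0 : w ≠ 0) :
    (logOneSubSum p.roots w - logOneSubSum m.roots w).re ≤ M := by
  have hnorm {q : ℂ[X]} (hq : q.Monic) (hqρ : ∀ z ∈ q.roots, ‖z‖ ≤ ρ) :
      exp (logOneSubSum q.roots w).re = ‖w‖ ^ q.natDegree * ‖q.eval w⁻¹‖ := by
    rw [← Complex.norm_exp, exp_logOneSubSum_roots hq hw0 (norm_mul_lt_one_of_mem_ball hρ hqρ hw),
      norm_mul, norm_pow]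
  rw [Complex.sub_re, sub_le_iff_le_add, ← exp_le_exp, exp_add, hnorm hp hpρ, hnorm hm hmρ, hdeg,
    mul_left_comm]
  gcongr
  refine hle _ ?_
  rw [norm_inv, le_inv_comm₀ hρ (norm_pos_iff.2 hw0)]
  exact (mem_ball_zero_iff.1 hw).le

lemma norm_sum_roots_pow_sub_le (hM : 0 < M) (k : ℕ) :
    ‖(p.roots.map (· ^ (k + 1))).sum - (m.roots.map (· ^ (k + 1))).sum‖
      ≤ (k + 1) * (2 * M) * (2 * ρ) ^ (k + 1) := by
  set f : ℂ → ℂ := fun w ↦ logOneSubSum p.roots w - logOneSubSum m.roots w with hf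
  have hanalytic (s : Multiset ℂ) (hs : ∀ z ∈ s, ‖z‖ ≤ ρ) (w) (hw : w ∈ Metric.ball 0 ρ⁻¹) :=
    analyticAt_logOneSubSum (norm_mul_lt_one_of_mem_ball hρ hs hw)
  have hdiff : DifferentiableOn ℂ f (Metric.ball 0 ρ⁻¹) := fun w hw ↦
    ((hanalytic _ hpρ w hw).fun_sub
      (hanalytic _ hmρ w hw)).differentiableAt.differentiableWithinAt
  have hre : Set.MapsTo f (Metric.ball 0 ρ⁻¹) {z | z.re ≤ M} := fun w hw ↦ by
    rcases eq_or_ne w 0 with rfl | hw0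
    · simpa [hf] using hM.le
    · exact re_logOneSubSum_sub_le hp hm hdeg hρ hpρ hmρ hle hw hw0
  have hsub : Metric.closedBall (0 : ℂ) (2 * ρ)⁻¹ ⊆ Metric.ball 0 ρ⁻¹ :=
    Metric.closedBall_subset_ball (by gcongr; linarith)
  have hsphere : ∀ w ∈ Metric.sphere (0 : ℂ) (2 * ρ)⁻¹, ‖f w‖ ≤ 2 * M := fun w hw ↦ by
    have hbound := Complex.borelCaratheodory_zero hM hdiff hre (inv_pos.2 hρ)
      (hsub (Metric.sphere_subset_closedBall hw)) (by simp [hf])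
    rw [mem_sphere_zero_iff_norm.1 hw] at hbound
    refine hbound.trans_eq ?_
    field_simp
    norm_num
  have hcauchy := Complex.norm_iteratedDeriv_le_of_forall_mem_sphere_norm_le (k + 1)
    (by positivity) (hdiff.mono (closure_ball (0 : ℂ) (inv_ne_zero
      (mul_pos two_pos hρ).ne') ▸ hsub)).diffContOnCl hsphere
  have hcoeff : iteratedDeriv (k + 1) f 0 = -(k.factorial *
      ((p.roots.map (· ^ (k + 1))).sum - (m.roots.map (· ^ (k + 1))).sum)) := by
    rw [hf, iteratedDeriv_fun_sub (analyticAt_logOneSubSum (by simp)).contDiffAt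
      (analyticAt_logOneSubSum (by simp)).contDiffAt, iteratedDeriv_succ_logOneSubSum_zero,
      iteratedDeriv_succ_logOneSubSum_zero]
    ring
  rw [hcoeff, norm_neg, norm_mul, Complex.norm_natCast, inv_pow, div_inv_eq_mul] at hcauchy
  refine le_of_mul_le_mul_left (hcauchy.trans_eq ?_) (Nat.cast_pos.2 k.factorial_pos)
  rw [Nat.factorial_succ]
  push_cast
  ring

end PowerSums

/-! ### Jacobi matrices and the zeros of the Meixner–Pollaczek polynomials -/

section Jacobi

open Polynomial

/-- The truncated Jacobi matrix of the orthonormal Meixner–Pollaczek polynomials, whose eigenvalues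
are the zeros of `mpPoly n`. -/
noncomputable def jacobiMatrix (n : ℕ) : Matrix (Fin n) (Fin n) ℝ :=
  .of fun i j ↦ (if (j : ℕ) = i + 1 then π / 2 * (i + 1) else 0)
    + if (i : ℕ) = j + 1 then π / 2 * (j + 1) else 0

lemma isHermitian_jacobiMatrix (n : ℕ) : (jacobiMatrix n).IsHermitian := by
  ext i j
  simp [jacobiMatrix, add_comm]

lemma sum_jacobiMatrix_smul {M : Type*} [AddCommGroup M] [Module ℝ M] {n : ℕ} (i : Fin n)
    (v : Fin n → M) :
    ∑ j, jacobiMatrix n i j • v j =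
      (if h : (i : ℕ) + 1 < n then (π / 2 * (i + 1)) • v ⟨i + 1, h⟩ else 0) +
        if 0 < (i : ℕ) then (π / 2 * i) • v ⟨i - 1, by lia⟩ else 0 := by
  simp only [jacobiMatrix, Matrix.of_apply, add_smul, Finset.sum_add_distrib, ite_smul, zero_smul]
  congr 1
  · split_ifs with h
    · rw [Finset.sum_eq_single_of_mem ⟨i + 1, h⟩ (Finset.mem_univ _), if_pos rfl]
      exact fun j _ hj ↦ if_neg fun h' ↦ hj (Fin.ext h')
    · exact Finset.sum_eq_zero fun j _ ↦ if_neg (by lia)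
  · split_ifs with h
    · have hcast : ((i - 1 : ℕ) : ℝ) + 1 = i := by
        rw [Nat.cast_sub h, Nat.cast_one, sub_add_cancel]
      rw [Finset.sum_eq_single_of_mem ⟨i - 1, by lia⟩ (Finset.mem_univ _), if_pos (by simp; lia),
        hcast]
      exact fun j _ hj ↦ if_neg fun h' ↦ hj (Fin.ext (by simp [h']))
    · exact Finset.sum_eq_zero fun j _ ↦ if_neg (by lia)

/-- The normalised Meixner–Pollaczek polynomials. -/
noncomputable def mpOrthonormal (i : ℕ) : ℝ[X] := (mpNorm i)⁻¹ • mpPoly i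

lemma X_mul_mpOrthonormal (i : ℕ) :
    X * mpOrthonormal i =
      (π / 2 * (i + 1)) • mpOrthonormal (i + 1) + (π / 2 * i) • mpOrthonormal (i - 1) := by
  have hnorm := (mpNorm_pos i).ne'
  simp only [mpOrthonormal, mul_smul_comm, X_mul_mpPoly, smul_add, smul_smul, ← smul_eq_C_mul]
  congr 2
  · rw [mpNorm_succ]
    field
  · rcases i with _ | i
    · simp
    · have := (mpNorm_pos i).ne'
      rw [mpNorm_succ, Nat.add_sub_cancel]
      push_cast
      field

lemma charmatrix_jacobiMatrix_mulVec (n : ℕ) :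
    (jacobiMatrix (n + 1)).charmatrix.mulVec (fun i ↦ mpOrthonormal i) =
      Pi.single (Fin.last n) ((mpNorm n)⁻¹ • mpPoly (n + 1)) := by
  ext1 i
  have hmul : (jacobiMatrix (n + 1)).charmatrix.mulVec (fun i ↦ mpOrthonormal i) i =
      X * mpOrthonormal i - ∑ j, jacobiMatrix (n + 1) i j • mpOrthonormal j := by
    simp [Matrix.charmatrix, Matrix.mulVec, dotProduct, Matrix.diagonal_apply, smul_eq_C_mul,
      sub_mul, Finset.sum_sub_distrib]
  rw [hmul, sum_jacobiMatrix_smul i fun j ↦ mpOrthonormal j, X_mul_mpOrthonormal]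
  have hlow : (if 0 < (i : ℕ) then (π / 2 * i) • mpOrthonormal (i - 1) else 0) =
      (π / 2 * i) • mpOrthonormal (i - 1) := by
    split_ifs with h
    · rfl
    · simp [Nat.eq_zero_of_not_pos h]
  rw [hlow, add_sub_add_right_eq_sub]
  rcases eq_or_ne i (Fin.last n) with rfl | hi
  · have := (mpNorm_pos n).ne'
    rw [Pi.single_eq_same, dif_neg (by simp), sub_zero, mpOrthonormal, smul_smul, Fin.val_last,
      mpNorm_succ]
    congr 1
    field
  · have : (i : ℕ) + 1 < n + 1 := by have := Fin.val_lt_last hi; lia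
    rw [Pi.single_eq_of_ne hi, dif_pos this, sub_self]

lemma charpoly_jacobiMatrix (n : ℕ) : (jacobiMatrix n).charpoly = mpPoly n := by
  rcases n with _ | n
  · simp [mpPoly, Matrix.charpoly]
  have hadj : (jacobiMatrix (n + 1)).charpoly = (jacobiMatrix (n + 1)).charmatrix.adjugate 0
      (Fin.last n) * C (mpNorm n)⁻¹ * mpPoly (n + 1) := by
    simpa [Matrix.charpoly, Matrix.adjugate_mul, Matrix.smul_mulVec, mpOrthonormal, mpPoly,
      smul_eq_C_mul, mul_assoc, mul_comm, mul_left_comm] using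
      congrArg (fun v ↦ (jacobiMatrix (n + 1)).charmatrix.adjugate.mulVec v 0)
        (charmatrix_jacobiMatrix_mulVec n)
  have hdvd : mpPoly (n + 1) ∣ (jacobiMatrix (n + 1)).charpoly := Dvd.intro_left _ hadj.symm
  refine eq_of_monic_of_dvd_of_natDegree_le (mpPoly_monic _) (Matrix.charpoly_monic _) hdvd ?_
  rw [Matrix.charpoly_natDegree_eq_dim, natDegree_mpPoly, Fintype.card_fin]

lemma trace_pow_eq_sum_eigenvalues_pow {𝕜 ι : Type*} [RCLike 𝕜] [Fintype ι] [DecidableEq ι]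
    {A : Matrix ι ι 𝕜} (hA : A.IsHermitian) (k : ℕ) :
    (A ^ k).trace = ∑ i, (hA.eigenvalues i : 𝕜) ^ k := by
  conv_lhs => rw [hA.spectral_theorem, ← map_pow, Unitary.conjStarAlgAut_apply,
    Matrix.trace_mul_comm, ← mul_assoc]
  simp [Matrix.diagonal_pow, Matrix.trace_diagonal]

lemma sum_roots_mpPolyC_pow (n k : ℕ) :
    ((mpPolyC n).roots.map (· ^ k)).sum = ((jacobiMatrix n ^ k).trace : ℂ) := by
  have hA := isHermitian_jacobiMatrix n
  rw [mpPolyC, ← charpoly_jacobiMatrix, hA.splits_charpoly.roots_map,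
    hA.roots_charpoly_eq_eigenvalues, trace_pow_eq_sum_eigenvalues_pow hA]
  simp [Function.comp_def, List.sum_ofFn]

end Jacobi

/-! ### Asymptotics of the traces of powers of the Jacobi matrix -/

section WalkWeight

open Topology

/-- The total weight of the `k`-step nearest-neighbour walks on `x + ℤ` from `x` to `x + d`, where
the edge from `y` to `y + 1` has the weight `π / 2 * (y + 1)` which it has in `jacobiMatrix`. As the
edge from `-1` to `0` has weight zero, walks between naturals only count if they stay in `ℕ`. -/
noncomputable def walkWeight : ℕ → ℝ → ℤ → ℝ
  | 0, _, d => if d = 0 then 1 else 0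
  | k + 1, x, d => π / 2 * (x + d + 1) * walkWeight k x (d + 1) +
      π / 2 * (x + d) * walkWeight k x (d - 1)

lemma walkWeight_eq_zero_of_lt {k : ℕ} {x : ℝ} {d : ℤ} (h : k < d) : walkWeight k x d = 0 := by
  induction k generalizing d with
  | zero => exact if_neg (by lia)
  | succ k ih => simp [walkWeight, ih (d := d + 1) (by lia), ih (d := d - 1) (by lia)]

lemma walkWeight_natCast_eq_zero {k i : ℕ} {d : ℤ} (h : i + d < 0) : walkWeight k i d = 0 := by
  induction k generalizing d with
  | zero => exact if_neg (by lia)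
  | succ k ih =>
    rw [walkWeight, ih (d := d - 1) (by lia), mul_zero, add_zero]
    rcases (Int.add_one_le_iff.2 h).eq_or_lt with h' | h'
    · have : (i + d + 1 : ℝ) = 0 := mod_cast h'
      rw [this, mul_zero, zero_mul]
    · rw [ih (by lia), mul_zero]

lemma walkWeight_natCast_nonneg (k i : ℕ) (d : ℤ) : 0 ≤ walkWeight k i d := by
  induction k generalizing d with
  | zero => rw [walkWeight]; positivity
  | succ k ih =>
    rcases lt_or_ge (i + d) 0 with h | h
    · exact (walkWeight_natCast_eq_zero h).ge
    · have : (0 : ℝ) ≤ i + d := mod_cast h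
      have := ih (d + 1)
      have := ih (d - 1)
      rw [walkWeight]
      positivity

lemma jacobiMatrix_pow_succ_apply {n : ℕ} (k : ℕ) (i j : Fin n) :
    (jacobiMatrix n ^ (k + 1)) i j =
      (if h : (j : ℕ) + 1 < n then π / 2 * (j + 1) * (jacobiMatrix n ^ k) i ⟨j + 1, h⟩ else 0) +
        if 0 < (j : ℕ) then π / 2 * j * (jacobiMatrix n ^ k) i ⟨j - 1, by lia⟩ else 0 := by
  rw [pow_succ, Matrix.mul_apply]
  refine Eq.trans (Finset.sum_congr rfl fun l _ ↦ ?_)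
    (sum_jacobiMatrix_smul j fun l ↦ (jacobiMatrix n ^ k) i l)
  rw [smul_eq_mul, mul_comm, (isHermitian_jacobiMatrix n).apply j l |>.symm]
  rfl

lemma walkWeight_succ_natCast_sub (k i j : ℕ) :
    walkWeight (k + 1) i (j - i) = π / 2 * (j + 1) * walkWeight k i ((j + 1 : ℕ) - i) +
      if 0 < j then π / 2 * j * walkWeight k i ((j - 1 : ℕ) - i) else 0 := by
  have hj : (i + ((j - i : ℤ) : ℝ)) = j := by push_cast; ring
  rw [walkWeight, hj]
  congr 2
  · congr 1; lia
  · rcases j.eq_zero_or_pos with rfl | hj0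
    · simp
    · rw [if_pos hj0]; congr 2; lia

lemma jacobiMatrix_pow_zero_apply {n : ℕ} (i j : Fin n) :
    (jacobiMatrix n ^ 0) i j = walkWeight 0 i ((j : ℕ) - (i : ℕ)) := by
  simp [walkWeight, Matrix.one_apply, sub_eq_zero, Fin.ext_iff, eq_comm]

lemma jacobiMatrix_pow_apply_mem_Icc {n : ℕ} (k : ℕ) (i j : Fin n) :
    (jacobiMatrix n ^ k) i j ∈ Set.Icc 0 (walkWeight k i ((j : ℕ) - (i : ℕ))) := by
  induction k generalizing j with
  | zero =>
    rw [jacobiMatrix_pow_zero_apply]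
    exact ⟨walkWeight_natCast_nonneg 0 i _, le_rfl⟩
  | succ k ih =>
    rw [jacobiMatrix_pow_succ_apply, walkWeight_succ_natCast_sub]
    have := walkWeight_natCast_nonneg k i
    constructor
    · refine add_nonneg ?_ ?_ <;> split_ifs
      · exact mul_nonneg (by positivity) (ih _).1
      · rfl
      · exact mul_nonneg (by positivity) (ih _).1
      · rfl
    · gcongr ?_ + ?_ <;> split_ifs
      · gcongr; exact (ih _).2
      · exact mul_nonneg (by positivity) (this _)
      · gcongr; exact (ih _).2
      · rfl

lemma jacobiMatrix_pow_apply_eq {n : ℕ} (k : ℕ) (i j : Fin n) (h : i + k < n) :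
    (jacobiMatrix n ^ k) i j = walkWeight k i ((j : ℕ) - (i : ℕ)) := by
  induction k generalizing j with
  | zero => exact jacobiMatrix_pow_zero_apply i j
  | succ k ih =>
    rw [jacobiMatrix_pow_succ_apply, walkWeight_succ_natCast_sub]
    congr 1
    · split_ifs with hj
      · rw [ih _ (by lia)]
      · rw [walkWeight_eq_zero_of_lt (by omega), mul_zero]
    · split_ifs
      · rw [ih _ (by lia)]
      · rfl

lemma trace_jacobiMatrix_pow_le (n k : ℕ) :
    (jacobiMatrix n ^ k).trace ≤ ∑ i ∈ Finset.range n, walkWeight k i 0 := by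
  rw [← Fin.sum_univ_eq_sum_range fun i ↦ walkWeight k i 0]
  exact Finset.sum_le_sum fun i _ ↦
    (jacobiMatrix_pow_apply_mem_Icc k i i).2.trans_eq (by rw [sub_self])

lemma sum_walkWeight_le_trace (n k : ℕ) :
    ∑ i ∈ Finset.range (n - k), walkWeight k i 0 ≤ (jacobiMatrix n ^ k).trace := by
  calc ∑ i ∈ Finset.range (n - k), walkWeight k i 0
      = ∑ i ∈ Finset.range (n - k), if i + k < n then walkWeight k i 0 else 0 :=
        Finset.sum_congr rfl fun i hi ↦ by rw [Finset.mem_range] at hi; rw [if_pos (by lia)]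
    _ ≤ ∑ i ∈ Finset.range n, if i + k < n then walkWeight k i 0 else 0 := by
        refine Finset.sum_le_sum_of_subset_of_nonneg
          (Finset.range_mono (n.sub_le k)) fun i _ _ ↦ ?_
        split_ifs
        exacts [walkWeight_natCast_nonneg k i 0, le_rfl]
    _ ≤ (jacobiMatrix n ^ k).trace := by
        rw [← Fin.sum_univ_eq_sum_range fun i ↦ if i + k < n then walkWeight k i 0 else 0]
        refine Finset.sum_le_sum fun i _ ↦ ?_
        split_ifs with h
        · rw [Matrix.diag_apply, jacobiMatrix_pow_apply_eq k i i h, sub_self]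
        · exact (jacobiMatrix_pow_apply_mem_Icc k i i).1

/-- The limit of the rescaled walk weights `walkWeight k x d / x ^ k`: the corresponding weight of
the translation-invariant walk with all edge weights equal to `π / 2`. -/
noncomputable def walkLimit (k : ℕ) (d : ℤ) : ℝ :=
  1 / π * ∫ θ in (0 : ℝ)..π, (π * cos θ) ^ k * cos (d * θ)

lemma walkLimit_zero (d : ℤ) : walkLimit 0 d = if d = 0 then 1 else 0 := by
  simp only [walkLimit, pow_zero, one_mul]
  split_ifs with h
  · simp [h, pi_ne_zero]
  · rw [intervalIntegral.integral_comp_mul_left (fun x ↦ cos x) (Int.cast_ne_zero.2 h),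
      integral_cos]
    simp [sin_int_mul_pi]

lemma walkLimit_succ (k : ℕ) (d : ℤ) :
    walkLimit (k + 1) d = π / 2 * walkLimit k (d + 1) + π / 2 * walkLimit k (d - 1) := by
  have hint (e : ℤ) : IntervalIntegrable (fun θ ↦ (π * cos θ) ^ k * cos (e * θ)) volume 0 π :=
    (by fun_prop : Continuous _).intervalIntegrable _ _
  simp only [walkLimit]
  rw [mul_left_comm, mul_left_comm (π / 2), ← mul_add, ← mul_add,
    ← intervalIntegral.integral_add (hint _) (hint _),
    ← intervalIntegral.integral_const_mul (π / 2)]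
  refine congrArg (1 / π * ·) (intervalIntegral.integral_congr fun θ _ ↦ ?_)
  push_cast
  rw [add_mul, sub_mul, one_mul, cos_add, cos_sub]
  ring

lemma tendsto_walkWeight_div_pow (k : ℕ) (d : ℤ) :
    Tendsto (fun x ↦ walkWeight k x d / x ^ k) atTop (𝓝 (walkLimit k d)) := by
  induction k generalizing d with
  | zero => simp [walkWeight, walkLimit_zero]
  | succ k ih =>
    have hratio (c : ℝ) : Tendsto (fun x ↦ π / 2 * (1 + c * x⁻¹)) atTop (𝓝 (π / 2)) := by
      simpa using ((tendsto_inv_atTop_zero.const_mul c).const_add 1).const_mul (π / 2)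
    rw [walkLimit_succ]
    refine (((hratio (d + 1)).mul (ih (d + 1))).add
      ((hratio d).mul (ih (d - 1)))).congr' ?_
    filter_upwards [eventually_gt_atTop 0] with x hx
    rw [walkWeight]
    field

end WalkWeight

section StolzCesaro

open Topology

lemma tendsto_sum_range_div_of_tendsto_div_sub {u b : ℕ → ℝ} {l : ℝ} (hb : StrictMono b)
    (hb_top : Tendsto b atTop atTop)
    (h : Tendsto (fun i ↦ u i / (b (i + 1) - b i)) atTop (𝓝 l)) :
    Tendsto (fun n ↦ (∑ i ∈ Finset.range n, u i) / (b n - b 0)) atTop (𝓝 l) := by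
  have hpos (i : ℕ) : 0 < b (i + 1) - b i := sub_pos.2 (hb i.lt_succ_self)
  have htop : Tendsto (fun n ↦ b n - b 0) atTop atTop := tendsto_atTop_add_const_right _ _ hb_top
  have hsmall : (fun i ↦ u i - l * (b (i + 1) - b i)) =o[atTop] fun i ↦ b (i + 1) - b i := by
    rw [Asymptotics.isLittleO_iff_tendsto fun i hi ↦ absurd hi (hpos i).ne']
    simpa [sub_div, mul_div_assoc, div_self (hpos _).ne'] using h.sub_const l
  have hsum := hsmall.sum_range (fun i ↦ (hpos i).le)
    (by simpa only [Finset.sum_range_sub] using htop)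
  simp only [Finset.sum_sub_distrib, ← Finset.mul_sum, Finset.sum_range_sub b] at hsum
  have hlim := hsum.tendsto_div_nhds_zero.add_const l
  rw [zero_add] at hlim
  refine hlim.congr' ?_
  filter_upwards [eventually_gt_atTop 0] with n hn
  rw [sub_div, mul_div_cancel_right₀ _ (sub_pos.2 (hb hn)).ne', sub_add_cancel]

lemma tendsto_succ_pow_sub_pow_div_pow (k : ℕ) :
    Tendsto (fun x : ℝ ↦ ((x + 1) ^ (k + 1) - x ^ (k + 1)) / x ^ k) atTop (𝓝 (k + 1)) := by
  have hderiv : HasDerivAt (fun x : ℝ ↦ x ^ (k + 1)) (k + 1) 1 := by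
    simpa using hasDerivAt_pow (k + 1) (1 : ℝ)
  have hinv : Tendsto (fun x : ℝ ↦ x⁻¹) atTop (𝓝[≠] 0) :=
    tendsto_inv_atTop_nhdsGT_zero.mono_right (nhdsWithin_mono _ fun x hx ↦ ne_of_gt hx)
  refine (hderiv.tendsto_slope_zero.comp hinv).congr' ?_
  filter_upwards [eventually_gt_atTop 0] with x hx
  have : 1 + x⁻¹ = (x + 1) / x := by field
  simp only [Function.comp_apply, smul_eq_mul, inv_inv, one_pow, this, div_pow]
  field

lemma tendsto_sum_range_div_pow_succ {u : ℕ → ℝ} {k : ℕ} {l : ℝ}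
    (h : Tendsto (fun i ↦ u i / (i : ℝ) ^ k) atTop (𝓝 l)) :
    Tendsto (fun n ↦ (∑ i ∈ Finset.range n, u i) / (n : ℝ) ^ (k + 1)) atTop (𝓝 (l / (k + 1))) := by
  have hmono : StrictMono fun n : ℕ ↦ (n : ℝ) ^ (k + 1) :=
    fun m n hmn ↦ pow_lt_pow_left₀ (Nat.cast_lt.2 hmn) m.cast_nonneg k.succ_ne_zero
  have htop : Tendsto (fun n : ℕ ↦ (n : ℝ) ^ (k + 1)) atTop atTop :=
    (tendsto_pow_atTop k.succ_ne_zero).comp tendsto_natCast_atTop_atTop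
  have hstep := (tendsto_succ_pow_sub_pow_div_pow k).comp tendsto_natCast_atTop_atTop
  have hratio := h.div hstep k.cast_add_one_ne_zero
  have hstolz := tendsto_sum_range_div_of_tendsto_div_sub (u := u) hmono htop (hratio.congr' ?_)
  · simpa using hstolz
  · filter_upwards [eventually_gt_atTop 0] with i hi
    have : (i : ℝ) ^ k ≠ 0 := by positivity
    simp only [Pi.div_apply, Function.comp_apply, Nat.cast_succ]
    rw [div_div_div_cancel_right₀ this]

end StolzCesaro

section Moments

open Topology

/-- The `k`-th moment of the limit distribution with density `psiDens`. -/
noncomputable def limitMoment (k : ℕ) : ℝ := 1 / (k + 1) * (1 / π * ∫ θ in (0 : ℝ)..π, cos θ ^ k)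

lemma walkLimit_apply_zero (k : ℕ) : walkLimit k 0 = π ^ k * ((k + 1) * limitMoment k) := by
  have : (k + 1 : ℝ) ≠ 0 := k.cast_add_one_ne_zero
  simp only [walkLimit, limitMoment, mul_pow, Int.cast_zero, zero_mul, cos_zero, mul_one,
    intervalIntegral.integral_const_mul]
  field

lemma tendsto_trace_jacobiMatrix_pow (k : ℕ) :
    Tendsto (fun n : ℕ ↦ (jacobiMatrix n ^ k).trace / (n : ℝ) ^ (k + 1)) atTop
      (𝓝 (π ^ k * limitMoment k)) := by
  have hupper := tendsto_sum_range_div_pow_succ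
    ((tendsto_walkWeight_div_pow k 0).comp tendsto_natCast_atTop_atTop)
  have hratio : Tendsto (fun n : ℕ ↦ ((n - k : ℕ) / n : ℝ) ^ (k + 1)) atTop (𝓝 1) := by
    have hlim := ((tendsto_const_div_atTop_nhds_zero_nat (k : ℝ)).const_sub 1).pow (k + 1)
    rw [sub_zero, one_pow] at hlim
    refine hlim.congr' ?_
    filter_upwards [eventually_ge_atTop k, eventually_gt_atTop 0] with n hn hn0
    rw [Nat.cast_sub hn, sub_div, div_self (Nat.cast_pos.2 hn0).ne']
  have hlower := (hupper.comp (tendsto_sub_atTop_nat k)).mul hratio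
  have hvalue : walkLimit k 0 / (k + 1) = π ^ k * limitMoment k := by
    have : (k + 1 : ℝ) ≠ 0 := k.cast_add_one_ne_zero
    rw [walkLimit_apply_zero]
    field
  rw [hvalue] at hupper
  rw [mul_one, hvalue] at hlower
  refine tendsto_of_tendsto_of_tendsto_of_le_of_le' hlower hupper ?_
    (.of_forall fun n ↦ by gcongr; exact trace_jacobiMatrix_pow_le n k)
  filter_upwards [eventually_gt_atTop k] with n hn
  have : ((n - k : ℕ) : ℝ) ^ (k + 1) ≠ 0 := by
    have := Nat.sub_pos_of_lt hn
    positivity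
  rw [Function.comp_apply, div_pow, div_mul_div_cancel₀ this]
  gcongr
  exact sum_walkWeight_le_trace n k

end Moments

/-! ### The limit density -/

section Density

lemma psiDens_eq {x : ℝ} (hx : x ≠ 0) :
    psiDens x = 1 / π * (log (1 + √(1 - x ^ 2)) - log x) := by
  rw [psiDens, log_div (by positivity) (by positivity), log_abs]

lemma continuous_log_one_add_sqrt : Continuous fun x : ℝ ↦ log (1 + √(1 - x ^ 2)) :=
  Continuous.log (by fun_prop) fun x ↦ by positivity

lemma intervalIntegrable_psiDens : IntervalIntegrable psiDens volume (-1) 1 := by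
  have hlog : IntervalIntegrable (fun x : ℝ ↦ 1 / π * (log (1 + √(1 - x ^ 2)) - log x))
      volume (-1) 1 :=
    ((continuous_log_one_add_sqrt.intervalIntegrable _ _).sub
      intervalIntegral.intervalIntegrable_log').const_mul _
  refine hlog.congr_ae (ae_restrict_of_ae ?_)
  filter_upwards [Measure.ae_ne volume (0 : ℝ)] with x hx
  exact (psiDens_eq hx).symm

lemma continuous_integral_arccos_cos_pow (k : ℕ) :
    Continuous fun x ↦ ∫ θ in arccos x..π, cos θ ^ k := by
  have hprim : Continuous fun u : ℝ ↦ ∫ θ in π..u, cos θ ^ k :=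
    intervalIntegral.continuous_primitive
      (fun _ _ ↦ (by fun_prop : Continuous _).intervalIntegrable _ _) _
  refine (hprim.comp continuous_arccos).neg.congr fun x ↦ ?_
  exact (intervalIntegral.integral_symm _ _).symm

lemma hasDerivAt_integral_arccos_cos_pow (k : ℕ) {x : ℝ} (hx : |x| < 1) :
    HasDerivAt (fun x ↦ ∫ θ in arccos x..π, cos θ ^ k) (x ^ k / √(1 - x ^ 2)) x := by
  obtain ⟨hx₁, hx₂⟩ := abs_lt.1 hx
  have hcont : Continuous fun θ : ℝ ↦ cos θ ^ k := by fun_prop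
  have hderiv := (intervalIntegral.integral_hasDerivAt_left (a := arccos x) (b := π)
    (hcont.intervalIntegrable _ _) (hcont.stronglyMeasurableAtFilter _ _)
    hcont.continuousAt).comp x (hasDerivAt_arccos hx₁.ne' hx₂.ne)
  rw [cos_arccos hx₁.le hx₂.le] at hderiv
  exact hderiv.congr_deriv (by ring)

/-- The antiderivative of `(k + 1) * π * x ^ k * psiDens x` obtained from integration by parts. -/
noncomputable def psiPrimitive (k : ℕ) (x : ℝ) : ℝ :=
  x ^ (k + 1) * (log (1 + √(1 - x ^ 2)) - log x) + ∫ θ in arccos x..π, cos θ ^ k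

lemma continuous_psiPrimitive (k : ℕ) : Continuous (psiPrimitive k) := by
  have heq : psiPrimitive k = fun x ↦ x ^ (k + 1) * log (1 + √(1 - x ^ 2)) - x ^ k * (x * log x)
      + ∫ θ in arccos x..π, cos θ ^ k := by
    ext x
    rw [psiPrimitive]
    ring
  rw [heq]
  exact (((continuous_pow _).mul continuous_log_one_add_sqrt).sub
    ((continuous_pow _).mul continuous_mul_log)).add (continuous_integral_arccos_cos_pow k)

lemma hasDerivAt_log_one_add_sqrt {x : ℝ} (hx : |x| < 1) :
    HasDerivAt (fun x ↦ log (1 + √(1 - x ^ 2)))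
      (-x / (√(1 - x ^ 2) * (1 + √(1 - x ^ 2)))) x := by
  have hpos : 0 < 1 - x ^ 2 := sub_pos.2 ((sq_lt_one_iff_abs_lt_one x).2 hx)
  have hderiv := ((((hasDerivAt_pow 2 x).const_sub 1).sqrt hpos.ne').const_add 1).log
    (by positivity)
  refine hderiv.congr_deriv ?_
  have := sqrt_pos.2 hpos
  push_cast
  field

lemma hasDerivAt_psiPrimitive (k : ℕ) {x : ℝ} (hx : |x| < 1) (hx0 : x ≠ 0) :
    HasDerivAt (psiPrimitive k) ((k + 1) * π * (x ^ k * psiDens x)) x := by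
  have hpos : 0 < 1 - x ^ 2 := sub_pos.2 ((sq_lt_one_iff_abs_lt_one x).2 hx)
  have := sqrt_pos.2 hpos
  have hderiv := ((hasDerivAt_pow (k + 1) x).mul
    ((hasDerivAt_log_one_add_sqrt hx).sub (hasDerivAt_log hx0))).add
    (hasDerivAt_integral_arccos_cos_pow k hx)
  refine hderiv.congr_deriv ?_
  have hcancel : x ^ (k + 1) * (-x / (√(1 - x ^ 2) * (1 + √(1 - x ^ 2))) - x⁻¹)
      + x ^ k / √(1 - x ^ 2) = 0 := by
    have hsq := sq_sqrt hpos.le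
    rw [pow_succ]
    field_simp
    linear_combination -x ^ k * hsq
  rw [add_assoc, hcancel, psiDens_eq hx0, add_tsub_cancel_right, Pi.sub_apply]
  push_cast
  field

lemma integral_pow_mul_psiDens (k : ℕ) :
    ∫ x in (-1 : ℝ)..1, x ^ k * psiDens x = limitMoment k := by
  have hint : IntervalIntegrable (fun x ↦ (k + 1) * π * (x ^ k * psiDens x)) volume (-1) 1 :=
    (intervalIntegrable_psiDens.continuousOn_mul (by fun_prop)).const_mul _
  have hftc := integral_eq_of_hasDerivAt_off_countable_of_le (psiPrimitive k) _
    (by norm_num : (-1 : ℝ) ≤ 1) (Set.countable_singleton (0 : ℝ))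
    (continuous_psiPrimitive k).continuousOn
    (fun x hx ↦ hasDerivAt_psiPrimitive k (abs_lt.2 hx.1) hx.2) hint
  rw [intervalIntegral.integral_const_mul] at hftc
  have hends : psiPrimitive k 1 - psiPrimitive k (-1) = ∫ θ in (0 : ℝ)..π, cos θ ^ k := by
    simp [psiPrimitive]
  have : (k + 1 : ℝ) ≠ 0 := k.cast_add_one_ne_zero
  rw [limitMoment, ← hends, ← hftc]
  field

end Density

/-! ### Weak convergence from moments -/

section Mean

variable {α 𝕜 : Type*} [Field 𝕜]

/-- The mean of `g` over the multiset `s`, that is, the integral of `g` against the normalised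
counting measure of `s`; it is `0` if `s = 0`. -/
def mean (s : Multiset α) (g : α → 𝕜) : 𝕜 := (s.map g).sum / s.card

lemma mean_add (s : Multiset α) (g h : α → 𝕜) :
    mean s (fun z ↦ g z + h z) = mean s g + mean s h := by
  rw [mean, Multiset.sum_map_add, add_div, mean, mean]

lemma mean_sub (s : Multiset α) (g h : α → 𝕜) :
    mean s (fun z ↦ g z - h z) = mean s g - mean s h := by
  rw [mean, Multiset.sum_map_sub, sub_div, mean, mean]

lemma mean_const_mul (s : Multiset α) (c : 𝕜) (g : α → 𝕜) :
    mean s (fun z ↦ c * g z) = c * mean s g := by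
  rw [mean, Multiset.sum_map_mul_left, mul_div_assoc, mean]

lemma mean_const [CharZero 𝕜] {s : Multiset α} (hs : s ≠ 0) (c : 𝕜) : mean s (fun _ ↦ c) = c := by
  have : (s.card : 𝕜) ≠ 0 := Nat.cast_ne_zero.2 (Multiset.card_pos.2 hs).ne'
  rw [mean, Multiset.map_const', Multiset.sum_replicate, nsmul_eq_mul, mul_div_cancel_left₀ _ this]

lemma abs_mean_le {s : Multiset α} {g h : α → ℝ} (hgh : ∀ z ∈ s, |g z| ≤ h z) :
    |mean s g| ≤ mean s h := by
  rw [mean, mean, abs_div, Nat.abs_cast]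
  gcongr
  refine Multiset.abs_sum_le_sum_abs.trans ?_
  rw [Multiset.map_map]
  exact Multiset.sum_map_le_sum_map _ _ hgh

lemma re_mean (s : Multiset α) (g : α → ℂ) : (mean s g).re = mean s fun z ↦ (g z).re := by
  rw [mean, Complex.div_natCast_re, mean]
  congr 1
  simpa using map_multiset_sum Complex.reAddGroupHom (s.map g)

lemma im_mean (s : Multiset α) (g : α → ℂ) : (mean s g).im = mean s fun z ↦ (g z).im := by
  rw [mean, Complex.div_natCast_im, mean]
  congr 1
  simpa using map_multiset_sum Complex.imAddGroupHom (s.map g)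

end Mean

section MomentMethod

open Topology

lemma dist_ofReal_re (z : ℂ) : dist z (z.re : ℂ) = |z.im| := by
  have : z - z.re = z.im * Complex.I := by
    rw [sub_eq_iff_eq_add', Complex.re_add_im]
  rw [dist_eq_norm, this, norm_mul, Complex.norm_I, mul_one, Complex.norm_real, norm_eq_abs]

lemma exists_abs_sub_ofReal_re_le {g : ℂ → ℝ} (hg : Continuous g) (R : ℝ) {ε : ℝ} (hε : 0 < ε) :
    ∃ C, ∀ z : ℂ, ‖z‖ ≤ R → |g z - g z.re| ≤ ε + C * |z.im| := by
  have hcompact := isCompact_closedBall (0 : ℂ) R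
  obtain ⟨B, hB⟩ := hcompact.exists_bound_of_continuousOn hg.continuousOn
  obtain ⟨δ, hδ, hclose⟩ := Metric.uniformContinuousOn_iff.1
    (hcompact.uniformContinuousOn_of_continuous hg.continuousOn) ε hε
  refine ⟨2 * B / δ, fun z hz ↦ ?_⟩
  have hz_mem : z ∈ Metric.closedBall (0 : ℂ) R := mem_closedBall_zero_iff.2 hz
  have hre_mem : (z.re : ℂ) ∈ Metric.closedBall (0 : ℂ) R := by
    rw [mem_closedBall_zero_iff, Complex.norm_real]
    exact (Complex.abs_re_le_norm z).trans hz
  have hB0 : 0 ≤ B := (norm_nonneg _).trans (hB z hz_mem)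
  rcases lt_or_ge |z.im| δ with hlt | hge
  · have hdist := hclose z hz_mem _ hre_mem (by rwa [dist_ofReal_re])
    exact (dist_eq _ _ ▸ hdist.le).trans (le_add_of_nonneg_right (by positivity))
  · calc |g z - g z.re| ≤ |g z| + |g z.re| := abs_sub _ _
      _ ≤ B + B := add_le_add (hB _ hz_mem) (hB _ hre_mem)
      _ = 2 * B / δ * δ := by field
      _ ≤ 2 * B / δ * |z.im| := by gcongr
      _ ≤ ε + 2 * B / δ * |z.im| := le_add_of_nonneg_left hε.le

variable {ι : Type*} {l : Filter ι} {Z : ι → Multiset ℂ} {R : ℝ}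

lemma tendsto_mean_sub_ofReal_re (hne : ∀ᶠ i in l, Z i ≠ 0)
    (hR : ∀ᶠ i in l, ∀ z ∈ Z i, ‖z‖ ≤ R)
    (him : Tendsto (fun i ↦ mean (Z i) fun z ↦ |z.im|) l (𝓝 0)) {g : ℂ → ℝ} (hg : Continuous g) :
    Tendsto (fun i ↦ mean (Z i) fun z ↦ g z - g z.re) l (𝓝 0) := by
  rw [Metric.tendsto_nhds]
  intro ε hε
  obtain ⟨C, hC⟩ := exists_abs_sub_ofReal_re_le hg R (half_pos hε)
  have hsmall := (him.const_mul C).eventually_lt_const (u := ε / 2) (by simpa using half_pos hε)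
  filter_upwards [hne, hR, hsmall] with i hi hRi hsmall_i
  calc dist (mean (Z i) fun z ↦ g z - g z.re) 0
      = |mean (Z i) fun z ↦ g z - g z.re| := dist_zero_right _
    _ ≤ mean (Z i) fun z ↦ ε / 2 + C * |z.im| := abs_mean_le fun z hz ↦ hC z (hRi z hz)
    _ = ε / 2 + C * mean (Z i) fun z ↦ |z.im| := by rw [mean_add, mean_const hi, mean_const_mul]
    _ < ε := by linarith

variable {a b : ℝ} {ψ : ℝ → ℝ}

lemma tendsto_mean_eval_re (hψ : IntervalIntegrable ψ volume a b)
    (hmoment : ∀ k : ℕ,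
      Tendsto (fun i ↦ mean (Z i) (·.re ^ k)) l (𝓝 (∫ x in a..b, x ^ k * ψ x)))
    (q : Polynomial ℝ) :
    Tendsto (fun i ↦ mean (Z i) fun z ↦ q.eval z.re) l (𝓝 (∫ x in a..b, q.eval x * ψ x)) := by
  induction q using Polynomial.induction_on' with
  | add p q hp hq =>
    simp only [Polynomial.eval_add, mean_add, add_mul]
    rw [intervalIntegral.integral_add (hψ.continuousOn_mul (by fun_prop))
      (hψ.continuousOn_mul (by fun_prop))]
    exact hp.add hq
  | monomial k c =>
    simp only [Polynomial.eval_monomial, mean_const_mul, mul_assoc,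
      intervalIntegral.integral_const_mul]
    exact (hmoment k).const_mul c

lemma abs_integral_mul_sub_integral_mul_le (hab : a ≤ b) (hψ : IntervalIntegrable ψ volume a b)
    {u v : ℝ → ℝ} (hu : Continuous u) (hv : Continuous v) {ε : ℝ}
    (huv : ∀ x ∈ Set.Icc a b, |u x - v x| ≤ ε) :
    |(∫ x in a..b, u x * ψ x) - ∫ x in a..b, v x * ψ x| ≤ ε * ∫ x in a..b, |ψ x| := by
  rw [← intervalIntegral.integral_sub (hψ.continuousOn_mul hu.continuousOn)
    (hψ.continuousOn_mul hv.continuousOn), ← intervalIntegral.integral_const_mul]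
  refine intervalIntegral.norm_integral_le_of_norm_le (E := ℝ) hab (.of_forall fun x hx ↦ ?_)
    (hψ.abs.const_mul ε)
  rw [← sub_mul, norm_mul, norm_eq_abs, norm_eq_abs]
  gcongr
  exact huv x (Set.Ioc_subset_Icc_self hx)

lemma tendsto_mean_comp_re (hne : ∀ᶠ i in l, Z i ≠ 0) (hR : ∀ᶠ i in l, ∀ z ∈ Z i, ‖z‖ ≤ R)
    (hab : a ≤ b) (ha : -R ≤ a) (hb : b ≤ R) (hψ : IntervalIntegrable ψ volume a b)
    (hmoment : ∀ k : ℕ,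
      Tendsto (fun i ↦ mean (Z i) (·.re ^ k)) l (𝓝 (∫ x in a..b, x ^ k * ψ x)))
    {f : ℝ → ℝ} (hf : Continuous f) :
    Tendsto (fun i ↦ mean (Z i) fun z ↦ f z.re) l (𝓝 (∫ x in a..b, f x * ψ x)) := by
  rw [Metric.tendsto_nhds]
  intro ε hε
  set J := ∫ x in a..b, |ψ x|
  have hJ0 : 0 ≤ J := intervalIntegral.integral_nonneg hab fun x _ ↦ abs_nonneg _
  set δ := ε / (2 + J) with hδ
  have hδ0 : 0 < δ := by positivity
  obtain ⟨q, hq⟩ := exists_polynomial_near_of_continuousOn (-R) R f hf.continuousOn δ hδ0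
  have hintegral := abs_integral_mul_sub_integral_mul_le hab hψ q.continuous hf fun x hx ↦
    (hq x (Set.Icc_subset_Icc ha hb hx)).le
  have hpoly := Metric.tendsto_nhds.1 (tendsto_mean_eval_re hψ hmoment q) δ hδ0
  filter_upwards [hne, hR, hpoly] with i hi hRi hpoly_i
  have hmean : |(mean (Z i) fun z ↦ f z.re) - mean (Z i) fun z ↦ q.eval z.re| ≤ δ := by
    rw [← mean_sub, ← mean_const hi δ]
    refine abs_mean_le fun z hz ↦ ?_
    rw [abs_sub_comm]
    exact (hq _ (abs_le.1 ((Complex.abs_re_le_norm z).trans (hRi z hz)))).le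
  calc dist (mean (Z i) fun z ↦ f z.re) (∫ x in a..b, f x * ψ x)
      ≤ dist (mean (Z i) fun z ↦ f z.re) (mean (Z i) fun z ↦ q.eval z.re)
        + dist (mean (Z i) fun z ↦ q.eval z.re) (∫ x in a..b, q.eval x * ψ x)
        + dist (∫ x in a..b, q.eval x * ψ x) (∫ x in a..b, f x * ψ x) := dist_triangle4 _ _ _ _
    _ < δ + δ + δ * J :=
        add_lt_add_of_lt_of_le (add_lt_add_of_le_of_lt hmean hpoly_i) hintegral
    _ = ε := by rw [hδ]; field

lemma tendsto_mean_of_tendsto_moments (hne : ∀ᶠ i in l, Z i ≠ 0)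
    (hR : ∀ᶠ i in l, ∀ z ∈ Z i, ‖z‖ ≤ R) {s : ℝ}
    (hsign : ∀ᶠ i in l, ∀ z ∈ Z i, |z.im| = s * z.im)
    (hab : a ≤ b) (ha : -R ≤ a) (hb : b ≤ R) (hψ : IntervalIntegrable ψ volume a b)
    (hmoment : ∀ k : ℕ,
      Tendsto (fun i ↦ mean (Z i) (· ^ k)) l (𝓝 ((∫ x in a..b, x ^ k * ψ x : ℝ) : ℂ)))
    {f : ℂ → ℝ} (hf : Continuous f) :
    Tendsto (fun i ↦ mean (Z i) f) l (𝓝 (∫ x in a..b, f x * ψ x)) := by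
  have him : Tendsto (fun i ↦ mean (Z i) fun z ↦ |z.im|) l (𝓝 0) := by
    have hfirst := ((Complex.continuous_im.tendsto _).comp (hmoment 1)).const_mul s
    rw [Complex.ofReal_im, mul_zero] at hfirst
    refine hfirst.congr' ?_
    filter_upwards [hsign] with i hi
    simp only [Function.comp_apply, im_mean, pow_one, ← mean_const_mul]
    exact congrArg (·.sum / _) (Multiset.map_congr rfl fun z hz ↦ (hi z hz).symm)
  have hreplace {g : ℂ → ℝ} (hg : Continuous g) := tendsto_mean_sub_ofReal_re hne hR him hg
  have hmoment_re (k : ℕ) :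
      Tendsto (fun i ↦ mean (Z i) (·.re ^ k)) l (𝓝 (∫ x in a..b, x ^ k * ψ x)) := by
    have hlim := ((Complex.continuous_re.tendsto _).comp (hmoment k)).sub
      (hreplace (g := fun z ↦ (z ^ k).re) (by fun_prop))
    rw [Complex.ofReal_re, sub_zero] at hlim
    refine hlim.congr fun i ↦ ?_
    simp only [Function.comp_apply, re_mean, mean_sub, ← Complex.ofReal_pow, Complex.ofReal_re,
      sub_sub_cancel]
  have hlim := (tendsto_mean_comp_re hne hR hab ha hb hψ hmoment_re
    (hf.comp Complex.continuous_ofReal)).add (hreplace hf)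
  rw [add_zero] at hlim
  refine hlim.congr fun i ↦ ?_
  rw [mean_sub, Function.comp_def, add_sub_cancel]

end MomentMethod

/-! ### Moments of the rescaled zeros -/

section RescaledRoots

open Polynomial Topology

/-- The roots of `p`, with multiplicity, divided by `π * n`. -/
noncomputable def rescaledRoots (n : ℕ) (p : ℂ[X]) : Multiset ℂ := p.roots.map (· / (π * n))

lemma card_rescaledRoots (n : ℕ) (p : ℂ[X]) : (rescaledRoots n p).card = p.natDegree := by
  rw [rescaledRoots, Multiset.card_map, IsAlgClosed.card_roots_eq_natDegree]

lemma rescaledRoots_ne_zero {n : ℕ} {p : ℂ[X]} (hp : p.natDegree ≠ 0) : rescaledRoots n p ≠ 0 := by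
  rwa [← Multiset.card_pos, card_rescaledRoots, Nat.pos_iff_ne_zero]

lemma mean_rescaledRoots_pow (n : ℕ) (p : ℂ[X]) (k : ℕ) :
    mean (rescaledRoots n p) (· ^ k) =
      (p.roots.map (· ^ k)).sum / (π * n) ^ k / p.natDegree := by
  rw [mean, card_rescaledRoots, rescaledRoots, Multiset.map_map]
  simp only [Function.comp_def, div_pow, Multiset.sum_map_div]

lemma tendsto_mean_rescaledRoots_mpPolyC_pow (k : ℕ) :
    Tendsto (fun n ↦ mean (rescaledRoots n (mpPolyC n)) (· ^ k)) atTop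
      (𝓝 (limitMoment k : ℂ)) := by
  have hlim := (tendsto_trace_jacobiMatrix_pow k).div_const (π ^ k)
  rw [mul_div_cancel_left₀ _ (pow_ne_zero k pi_ne_zero)] at hlim
  refine ((Complex.continuous_ofReal.tendsto _).comp hlim).congr fun n ↦ ?_
  rw [mean_rescaledRoots_pow, sum_roots_mpPolyC_pow, natDegree_mpPolyC, Function.comp_apply]
  push_cast
  ring

lemma tendsto_log_mul_succ_sq_div {C : ℝ} (hC : 0 < C) :
    Tendsto (fun n : ℕ ↦ log (C * ((n : ℝ) + 1) ^ 2) / n) atTop (𝓝 0) := by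
  have hlog : Tendsto (fun n : ℕ ↦ log (n + 1 : ℕ) / (n + 1 : ℕ)) atTop (𝓝 0) :=
    isLittleO_log_id_atTop.tendsto_div_nhds_zero.comp
      (tendsto_natCast_atTop_atTop.comp (tendsto_add_atTop_nat 1))
  have hratio : Tendsto (fun n : ℕ ↦ 1 + 1 / (n : ℝ)) atTop (𝓝 (1 + 0)) :=
    (tendsto_const_div_atTop_nhds_zero_nat 1).const_add 1
  have hlim := ((hlog.mul hratio).const_mul 2).add
    (tendsto_const_div_atTop_nhds_zero_nat (log C))
  rw [zero_mul, mul_zero, add_zero] at hlim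
  refine hlim.congr' ?_
  filter_upwards [eventually_gt_atTop 0] with n hn
  rw [log_mul hC.ne' (by positivity), log_pow]
  push_cast
  field

variable {ν : ℝ}

lemma norm_le_of_mem_rescaledRoots {n : ℕ} (hn : n ≠ 0) {p : ℂ[X]} {R : ℝ}
    (hR : ∀ z, p.IsRoot z → ‖z‖ ≤ R * n) {z : ℂ} (hz : z ∈ rescaledRoots n p) :
    ‖z‖ ≤ R / π := by
  obtain ⟨w, hw, rfl⟩ := Multiset.mem_map.1 hz
  have := pi_pos
  rw [norm_div, norm_mul, Complex.norm_natCast, Complex.norm_of_nonneg pi_pos.le,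
    div_le_div_iff₀ (by positivity) pi_pos]
  calc ‖w‖ * π ≤ R * n * π := by gcongr; exact hR w (isRoot_of_mem_roots hw)
    _ = R * (π * n) := by ring

lemma abs_im_eq_of_mem_rescaledRoots {n : ℕ} {p : ℂ[X]} {s : ℝ}
    (hs : ∀ z, p.IsRoot z → |z.im| = s * z.im) {z : ℂ} (hz : z ∈ rescaledRoots n p) :
    |z.im| = s * z.im := by
  obtain ⟨w, hw, rfl⟩ := Multiset.mem_map.1 hz
  have him : (w / (π * n)).im = w.im / (π * n) := by
    rw [← Complex.ofReal_natCast, ← Complex.ofReal_mul, Complex.div_ofReal_im]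
  rw [him, abs_div, hs w (isRoot_of_mem_roots hw), abs_of_nonneg (by positivity : 0 ≤ π * n),
    mul_div_assoc]

lemma exists_norm_sum_roots_pow_sub_le (hν : |ν| < 1) (k : ℕ) :
    ∃ C > 1, ∃ ρ > 0, ∀ n p, n ≠ 0 → IsRotatedBesselOP ν n p →
      ‖(p.roots.map (· ^ (k + 1))).sum - ((mpPolyC n).roots.map (· ^ (k + 1))).sum‖
        ≤ (k + 1) * (2 * log (C * (n + 1) ^ 2)) * (2 * (ρ * n)) ^ (k + 1) := by
  obtain ⟨R, hR, hroot⟩ := exists_norm_le_mul_of_isRoot hν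
  obtain ⟨C, hC, hcmp⟩ := exists_norm_eval_le_mul_norm_eval_mpPolyC hν
  have hρ : 0 < max R π := lt_max_of_lt_left hR
  refine ⟨C, hC, max R π, hρ, fun n p hn hp ↦ ?_⟩
  have hn0 : (0 : ℝ) < n := by positivity
  have hπρ {z : ℂ} (hz : max R π * n ≤ ‖z‖) : π * n ≤ ‖z‖ :=
    (mul_le_mul_of_nonneg_right (le_max_right R π) hn0.le).trans hz
  have hbound : 1 < C * ((n : ℝ) + 1) ^ 2 :=
    one_lt_mul_of_lt_of_le hC (one_le_pow₀ (le_add_of_nonneg_left hn0.le))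
  refine norm_sum_roots_pow_sub_le hp.monic (mpPolyC_monic n)
    (by rw [hp.natDegree_eq, natDegree_mpPolyC]) (mul_pos hρ hn0) (fun z hz ↦ ?_) (fun z hz ↦ ?_)
    (fun z hz ↦ ?_) (log_pos hbound) k
  · exact (hroot n p hp z (isRoot_of_mem_roots hz)).trans
      (mul_le_mul_of_nonneg_right (le_max_left _ _) hn0.le)
  · by_contra! hlt
    exact eval_mpPolyC_ne_zero (hπρ hlt.le) hn le_rfl (isRoot_of_mem_roots hz)
  · rw [exp_log (zero_lt_one.trans hbound)]
    exact hcmp n p hn hp z (hπρ hz)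

lemma tendsto_mean_rescaledRoots_pow (hν : |ν| < 1) {p : ℕ → ℂ[X]}
    (hp : ∀ᶠ n in atTop, IsRotatedBesselOP ν n (p n)) (k : ℕ) :
    Tendsto (fun n ↦ mean (rescaledRoots n (p n)) (· ^ k)) atTop (𝓝 (limitMoment k : ℂ)) := by
  have hreference := tendsto_mean_rescaledRoots_mpPolyC_pow k
  rcases k with _ | k
  · refine hreference.congr' ?_
    filter_upwards [hp] with n hn
    simp [mean, card_rescaledRoots, hn.natDegree_eq]
  obtain ⟨C, hC, ρ, hρ, hsub⟩ := exists_norm_sum_roots_pow_sub_le hν k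
  have hzero := (tendsto_log_mul_succ_sq_div (zero_lt_one.trans hC)).const_mul
    ((k + 1) * 2 * (2 * ρ / π) ^ (k + 1))
  rw [mul_zero] at hzero
  have hdiff : Tendsto (fun n ↦ mean (rescaledRoots n (p n)) (· ^ (k + 1))
      - mean (rescaledRoots n (mpPolyC n)) (· ^ (k + 1))) atTop (𝓝 0) := by
    refine squeeze_zero_norm' ?_ hzero
    filter_upwards [hp, eventually_ne_atTop 0] with n hn hn0
    have : (0 : ℝ) < n := by positivity
    have := pi_pos
    rw [mean_rescaledRoots_pow, mean_rescaledRoots_pow, hn.natDegree_eq, natDegree_mpPolyC,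
      ← sub_div, ← sub_div, norm_div, norm_div, norm_pow, norm_mul, Complex.norm_natCast,
      Complex.norm_of_nonneg pi_pos.le]
    calc _ ≤ (k + 1) * (2 * log (C * (n + 1) ^ 2)) * (2 * (ρ * n)) ^ (k + 1)
          / (π * n) ^ (k + 1) / n := by gcongr; exact hsub n (p n) hn0 hn
      _ = _ := by
        rw [← mul_assoc 2 ρ, mul_pow (2 * ρ), mul_pow π, div_pow (2 * ρ)]
        field
  simpa using hdiff.add hreference

theorem tendsto_mean_rescaledRoots (hν : |ν| < 1) {p : ℕ → ℂ[X]}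
    (hp : ∀ᶠ n in atTop, IsRotatedBesselOP ν n (p n)) {f : ℂ → ℝ} (hf : Continuous f) :
    Tendsto (fun n ↦ mean (rescaledRoots n (p n)) f) atTop
      (𝓝 (∫ x in (-1 : ℝ)..1, f x * psiDens x)) := by
  obtain ⟨R, -, hroot⟩ := exists_norm_le_mul_of_isRoot hν
  obtain ⟨s, -, hsign⟩ := exists_abs_im_eq_mul_im hν
  refine tendsto_mean_of_tendsto_moments (R := max 1 (R / π)) (s := s) ?_ ?_ ?_
    (by norm_num) (neg_le_neg (le_max_left _ _)) (le_max_left _ _) intervalIntegrable_psiDens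
    (fun k ↦ ?_) hf
  · filter_upwards [hp, eventually_ne_atTop 0] with n hn hn0
    exact rescaledRoots_ne_zero (hn.natDegree_eq.trans_ne hn0)
  · filter_upwards [hp, eventually_ne_atTop 0] with n hn hn0 z hz
    exact (norm_le_of_mem_rescaledRoots hn0 (hroot n _ hn) hz).trans (le_max_right _ _)
  · filter_upwards [hp] with n hn z hz
    exact abs_im_eq_of_mem_rescaledRoots (hsign n _ hn) hz
  · rw [integral_pow_mul_psiDens]
    exact tendsto_mean_rescaledRoots_pow hν hp k

lemma rescaledRoots_scaleRoots_neg_I (n : ℕ) (P : ℂ[X]) :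
    rescaledRoots n (P.scaleRoots (-Complex.I)) = P.roots.map (· / (Complex.I * π * n)) := by
  rw [rescaledRoots, roots_scaleRoots P (isUnit_iff_ne_zero.2 (neg_ne_zero.2 Complex.I_ne_zero)),
    Multiset.map_map]
  refine Multiset.map_congr rfl fun z _ ↦ ?_
  rw [Function.comp_apply, mul_assoc, ← div_div z, div_eq_mul_inv z, Complex.inv_I]
  ring

end RescaledRoots

end BesselZeros

theorem zeros_weak_convergence_general {ν : ℝ} (hν : |ν| < 1) :
    (∀ n, hankelDet ν n ≠ 0) ∧
      ∀ P : ℕ → Polynomial ℂ, (∀ᶠ n in atTop, IsBesselOP ν n (P n)) →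
        ∀ f : ℂ → ℝ, Continuous f →
          Tendsto (fun n : ℕ ↦ ((P n).roots.map fun z ↦ f (z / (Complex.I * π * n))).sum / n) atTop
            (nhds (∫ x in (-1 : ℝ)..1, f x * psiDens x)) := by
  refine ⟨BesselZeros.hankelDet_ne_zero hν, fun P hP f hf ↦ ?_⟩
  have hp := hP.mono fun n ↦ BesselZeros.isRotatedBesselOP_scaleRoots
  refine (BesselZeros.tendsto_mean_rescaledRoots hν hp hf).congr' ?_
  filter_upwards [hp] with n hn
  rw [BesselZeros.mean, BesselZeros.card_rescaledRoots, hn.natDegree_eq,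
    BesselZeros.rescaledRoots_scaleRoots_neg_I, Multiset.map_map, Function.comp_def]

/-- **Theorem (weak convergence of zeros).**
Let `0 < ν ≤ 1/2`. Then for all sufficiently large `n` the Hankel determinant `Δ_n`
is nonzero (so `P_n` exists), and for every bounded continuous `f : ℂ → ℝ`,
`(1/n) ∑ f(z/(iπn)) → ∫_{-1}^1 f(x) ψ(x) dx`, where the sum is over the roots of `P_n`
counted with multiplicity. -/
theorem zeros_weak_convergence (ν : ℝ) (hν0 : 0 < ν) (hν : ν ≤ 1 / 2) :
    ∃ n₀ : ℕ, (∀ n ≥ n₀, hankelDet ν n ≠ 0) ∧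
      ∀ P : ℕ → Polynomial ℂ, (∀ n ≥ n₀, IsBesselOP ν n (P n)) →
        ∀ f : BoundedContinuousFunction ℂ ℝ,
          Tendsto
            (fun n : ℕ =>
              (((P n).roots.map fun z => f (z / (Complex.I * π * n))).sum) / n)
            atTop (nhds (∫ x in (-1 : ℝ)..1, f (x : ℂ) * psiDens x)) := by
  obtain ⟨hdet, hlim⟩ := zeros_weak_convergence_general (abs_lt.2 ⟨by linarith, by linarith⟩)
  exact ⟨0, fun n _ ↦ hdet n, fun P hP f ↦
    hlim P (.of_forall fun n ↦ hP n n.zero_le) f f.continuous⟩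
end

section
/- Let 0 < ν < 1 and let n ∈ ℕ be such that Δ_n ≠ 0. Then the rescaled polynomial P̃_n(z) = (inπ)^{−n} P_n(inπz) is orthogonal on the real line with respect to the complex weight e^{−sgn(x)·νπi/2} K_ν(nπ|x|): for every j = 0,1,…,n−1, ∫_{−∞}^{∞} P̃_n(x) x^j e^{−sgn(x)·νπi/2} K_ν(nπ|x|) dx = 0, the integral being absolutely convergent. -/
open MeasureTheory Filter Real

/-- The modified Bessel function of the second kind,
`K_ν(x) = ∫_0^∞ e^{-x cosh t} cosh(νt) dt` for `x > 0`. -/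
noncomputable def besselK (ν x : ℝ) : ℝ :=
  ∫ t in Set.Ioi (0 : ℝ), Real.exp (-x * Real.cosh t) * Real.cosh (ν * t)

/-!
Up to the factor `π`, the weight `e^{-sgn(x)νπi/2} K_ν(|x|)` on the real line has at `(ix)^m` the
same moment `m_m` that the oscillatory weight `J_ν` has at `x^m`: this is the Mellin transform of
`K_ν`, whose two Gamma factors are turned into the quotient defining `m_m` by the reflection
formula, the cosine needed for this being the sum of the phases of the two half-lines.
By linearity, integrating `Q(ix)` against the weight on the real line is `π` times applying the
moment functional of `J_ν` to `Q`, so orthogonality of `P_n` carries over after rescaling.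
-/

section HyperbolicIntegrals

theorem betaIntegral_eq_integral_sigmoid (u v : ℂ) :
    Complex.betaIntegral u v =
      ∫ t : ℝ, (Real.sigmoid t : ℂ) ^ u * (Real.sigmoid (-t) : ℂ) ^ v := by
  have hderiv (t : ℝ) (_ : t ∈ Set.univ) :
      HasDerivWithinAt Real.sigmoid (Real.sigmoid t * Real.sigmoid (-t)) Set.univ t := by
    rw [Real.sigmoid_neg]
    exact (Real.hasDerivAt_sigmoid t).hasDerivWithinAt
  rw [Complex.betaIntegral, intervalIntegral.integral_of_le zero_le_one,
    integral_Ioc_eq_integral_Ioo, ← Real.range_sigmoid, ← Set.image_univ,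
    integral_image_eq_integral_deriv_smul_of_monotoneOn MeasurableSet.univ hderiv
      (Real.sigmoid_monotone.monotoneOn _), setIntegral_univ]
  refine integral_congr_ae (Eventually.of_forall fun t => ?_)
  have hpos : (Real.sigmoid t : ℂ) ≠ 0 := Complex.ofReal_ne_zero.2 (Real.sigmoid_pos t).ne'
  have hneg : (Real.sigmoid (-t) : ℂ) ≠ 0 := Complex.ofReal_ne_zero.2 (Real.sigmoid_pos _).ne'
  have hsub : (1 - Real.sigmoid t : ℂ) = Real.sigmoid (-t) := by simp [Real.sigmoid_neg]
  simp only [hsub, Complex.real_smul, Complex.ofReal_mul, Complex.cpow_sub _ _ hpos,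
    Complex.cpow_sub _ _ hneg, Complex.cpow_one]
  field_simp

theorem integral_sigmoid_rpow_mul_sigmoid_neg_rpow {a b : ℝ} (ha : 0 < a) (hb : 0 < b) :
    ∫ t : ℝ, Real.sigmoid t ^ a * Real.sigmoid (-t) ^ b =
      Real.Gamma a * Real.Gamma b / Real.Gamma (a + b) := by
  have h := betaIntegral_eq_integral_sigmoid a b
  rw [Complex.betaIntegral_eq_Gamma_mul_div _ _ (by simpa) (by simpa)] at h
  simp only [← Complex.ofReal_cpow (Real.sigmoid_nonneg _), ← Complex.ofReal_mul,
    integral_complex_ofReal, ← Complex.ofReal_add, Complex.Gamma_ofReal,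
    ← Complex.ofReal_div] at h
  exact (Complex.ofReal_injective h).symm

theorem sigmoid_two_mul (t : ℝ) : Real.sigmoid (2 * t) = Real.exp t / (2 * Real.cosh t) := by
  have hexp : Real.exp (-(2 * t)) = Real.exp (-t) / Real.exp t := by
    rw [← Real.exp_sub]
    ring_nf
  rw [Real.sigmoid_def, hexp, Real.cosh_eq]
  field_simp

variable {ν s : ℝ}

theorem integral_exp_mul_div_two_cosh_rpow (hν : |ν| < s) :
    ∫ t : ℝ, Real.exp (ν * t) / (2 * Real.cosh t) ^ s =
      Real.Gamma ((s + ν) / 2) * Real.Gamma ((s - ν) / 2) / (2 * Real.Gamma s) := by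
  obtain ⟨hneg, hpos⟩ := abs_lt.1 hν
  have hsigmoid (t : ℝ) : Real.exp (ν * t) / (2 * Real.cosh t) ^ s =
      Real.sigmoid (2 * t) ^ ((s + ν) / 2) * Real.sigmoid (-(2 * t)) ^ ((s - ν) / 2) := by
    have hcosh : 0 < 2 * Real.cosh t := mul_pos two_pos (Real.cosh_pos t)
    rw [← mul_neg, sigmoid_two_mul, sigmoid_two_mul, Real.cosh_neg,
      Real.div_rpow (Real.exp_pos _).le hcosh.le, Real.div_rpow (Real.exp_pos _).le hcosh.le,
      ← Real.exp_mul, ← Real.exp_mul, div_mul_div_comm, ← Real.exp_add, ← Real.rpow_add hcosh]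
    ring_nf
  simp only [hsigmoid]
  rw [Measure.integral_comp_mul_left
      (fun t => Real.sigmoid t ^ ((s + ν) / 2) * Real.sigmoid (-t) ^ ((s - ν) / 2)),
    integral_sigmoid_rpow_mul_sigmoid_neg_rpow (by linarith) (by linarith), smul_eq_mul,
    abs_of_pos (by norm_num), show (s + ν) / 2 + (s - ν) / 2 = s by ring]
  field_simp

theorem Gamma_half_add_mul_Gamma_half_sub_pos (hν : |ν| < s) :
    0 < Real.Gamma ((s + ν) / 2) * Real.Gamma ((s - ν) / 2) := by
  obtain ⟨hneg, hpos⟩ := abs_lt.1 hν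
  exact mul_pos (Real.Gamma_pos_of_pos (by linarith)) (Real.Gamma_pos_of_pos (by linarith))

theorem integrable_exp_mul_div_two_cosh_rpow (hν : |ν| < s) :
    Integrable fun t : ℝ => Real.exp (ν * t) / (2 * Real.cosh t) ^ s := by
  have hΓ := Real.Gamma_pos_of_pos ((abs_nonneg ν).trans_lt hν)
  refine Integrable.of_integral_ne_zero ?_
  rw [integral_exp_mul_div_two_cosh_rpow hν]
  exact (div_pos (Gamma_half_add_mul_Gamma_half_sub_pos hν) (mul_pos two_pos hΓ)).ne'

theorem cosh_mul_div_two_cosh_rpow (ν s t : ℝ) :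
    Real.cosh (ν * t) / (2 * Real.cosh t) ^ s =
      (Real.exp (ν * t) / (2 * Real.cosh t) ^ s +
        Real.exp (-ν * t) / (2 * Real.cosh t) ^ s) / 2 := by
  rw [Real.cosh_eq, neg_mul]
  ring

theorem integrable_cosh_mul_div_two_cosh_rpow (hν : |ν| < s) :
    Integrable fun t : ℝ => Real.cosh (ν * t) / (2 * Real.cosh t) ^ s := by
  simp only [cosh_mul_div_two_cosh_rpow ν]
  exact ((integrable_exp_mul_div_two_cosh_rpow hν).add
    (integrable_exp_mul_div_two_cosh_rpow (by rwa [abs_neg]))).div_const 2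

theorem integral_Ioi_cosh_mul_div_two_cosh_rpow (hν : |ν| < s) :
    ∫ t in Set.Ioi (0 : ℝ), Real.cosh (ν * t) / (2 * Real.cosh t) ^ s =
      Real.Gamma ((s + ν) / 2) * Real.Gamma ((s - ν) / 2) / (4 * Real.Gamma s) := by
  have hν' : |-ν| < s := by rwa [abs_neg]
  have heven (t : ℝ) : Real.cosh (ν * |t|) / (2 * Real.cosh |t|) ^ s =
      Real.cosh (ν * t) / (2 * Real.cosh t) ^ s := by
    rw [Real.cosh_abs, ← Real.cosh_abs (ν * |t|), abs_mul, abs_abs, ← abs_mul, Real.cosh_abs]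
  have hline : ∫ t : ℝ, Real.cosh (ν * t) / (2 * Real.cosh t) ^ s =
      Real.Gamma ((s + ν) / 2) * Real.Gamma ((s - ν) / 2) / (2 * Real.Gamma s) := by
    simp only [cosh_mul_div_two_cosh_rpow ν]
    rw [integral_div, integral_add (integrable_exp_mul_div_two_cosh_rpow hν)
      (integrable_exp_mul_div_two_cosh_rpow hν'), integral_exp_mul_div_two_cosh_rpow hν,
      integral_exp_mul_div_two_cosh_rpow hν', sub_neg_eq_add, ← sub_eq_add_neg]
    ring
  have hhalf := integral_comp_abs (f := fun t => Real.cosh (ν * t) / (2 * Real.cosh t) ^ s)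
  simp only [heven, hline] at hhalf
  linear_combination -hhalf / 2

end HyperbolicIntegrals

section MellinTransform

variable {ν s : ℝ}

theorem integral_rpow_mul_exp_neg_mul_cosh (hs : 0 < s) (t : ℝ) :
    ∫ x in Set.Ioi (0 : ℝ), x ^ (s - 1) * Real.exp (-x * Real.cosh t) =
      2 ^ s * Real.Gamma s / (2 * Real.cosh t) ^ s := by
  have hcosh := Real.cosh_pos t
  have hexp (x : ℝ) : -x * Real.cosh t = -(Real.cosh t * x) := by ring
  simp only [hexp]
  rw [Real.integral_rpow_mul_exp_neg_mul_Ioi hs hcosh, Real.mul_rpow two_pos.le hcosh.le,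
    Real.div_rpow one_pos.le hcosh.le, Real.one_rpow]
  field_simp

theorem integrable_rpow_mul_exp_neg_mul_cosh_mul_cosh (hν : |ν| < s) :
    Integrable
      (fun p : ℝ × ℝ => p.1 ^ (s - 1) * (Real.exp (-p.1 * Real.cosh p.2) * Real.cosh (ν * p.2)))
      ((volume.restrict (Set.Ioi 0)).prod (volume.restrict (Set.Ioi 0))) := by
  have hs : 0 < s := (abs_nonneg ν).trans_lt hν
  rw [integrable_prod_iff' (Measurable.aestronglyMeasurable (by fun_prop))]
  simp only [← mul_assoc]
  refine ⟨Eventually.of_forall fun t => Integrable.mul_const (.of_integral_ne_zero ?_) _, ?_⟩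
  · rw [integral_rpow_mul_exp_neg_mul_cosh hs]
    positivity
  · have hnorm (t : ℝ) : ∫ x in Set.Ioi (0 : ℝ),
        ‖x ^ (s - 1) * Real.exp (-x * Real.cosh t) * Real.cosh (ν * t)‖ =
          2 ^ s * Real.Gamma s / (2 * Real.cosh t) ^ s * Real.cosh (ν * t) := by
      rw [← integral_rpow_mul_exp_neg_mul_cosh hs, ← integral_mul_const]
      refine setIntegral_congr_fun measurableSet_Ioi fun x (hx : 0 < x) => ?_
      exact Real.norm_of_nonneg (by positivity)
    simp only [hnorm, div_mul_eq_mul_div, mul_div_assoc (2 ^ s * Real.Gamma s)]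
    exact ((integrable_cosh_mul_div_two_cosh_rpow hν).const_mul _).integrableOn

theorem integral_rpow_mul_besselK (hν : |ν| < s) :
    ∫ x in Set.Ioi (0 : ℝ), x ^ (s - 1) * besselK ν x =
      2 ^ (s - 2) * (Real.Gamma ((s + ν) / 2) * Real.Gamma ((s - ν) / 2)) := by
  have hs : 0 < s := (abs_nonneg ν).trans_lt hν
  simp only [besselK, ← integral_const_mul]
  rw [integral_integral_swap (integrable_rpow_mul_exp_neg_mul_cosh_mul_cosh hν)]
  simp only [← mul_assoc, integral_mul_const, integral_rpow_mul_exp_neg_mul_cosh hs,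
    div_mul_eq_mul_div]
  simp only [mul_div_assoc (2 ^ s * Real.Gamma s), integral_const_mul,
    integral_Ioi_cosh_mul_div_two_cosh_rpow hν]
  rw [Real.rpow_sub two_pos, Real.rpow_two]
  field_simp
  ring

theorem integrableOn_rpow_mul_besselK (hν : |ν| < s) :
    IntegrableOn (fun x : ℝ => x ^ (s - 1) * besselK ν x) (Set.Ioi 0) := by
  refine Integrable.of_integral_ne_zero ?_
  rw [integral_rpow_mul_besselK hν]
  exact (mul_pos (by positivity) (Gamma_half_add_mul_Gamma_half_sub_pos hν)).ne'

end MellinTransform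

section Moments

variable {ν : ℝ}

theorem Gamma_mul_sin_pi_mul {z : ℝ} (hz : 0 < z) :
    Real.Gamma z * Real.sin (π * z) = π / Real.Gamma (1 - z) := by
  have hΓ := (Real.Gamma_pos_of_pos hz).ne'
  have hreflect := Real.Gamma_mul_Gamma_one_sub z
  -- Where `1 - z` is a pole of Γ both sides vanish, since then `Real.Gamma (1 - z) = 0`.
  by_cases hsin : Real.sin (π * z) = 0
  · have hpole : Real.Gamma (1 - z) = 0 := by simpa [hsin, hΓ] using hreflect
    rw [hsin, hpole, mul_zero, div_zero]
  · rw [eq_div_iff hsin] at hreflect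
    have hne : Real.Gamma (1 - z) ≠ 0 := by
      intro h
      simp [h, Real.pi_ne_zero.symm] at hreflect
    rw [eq_div_iff hne]
    linear_combination hreflect

theorem pi_mul_besselMoment {m : ℕ} (hν : ν < m + 1) :
    π * besselMoment ν m = 2 * Real.cos (π * (ν - m) / 2) *
      (2 ^ ((m : ℝ) + 1 - 2) *
        (Real.Gamma ((m + 1 + ν) / 2) * Real.Gamma ((m + 1 - ν) / 2))) := by
  have hreflect := Gamma_mul_sin_pi_mul (show 0 < (m + 1 - ν) / 2 by linarith)
  have hsin : Real.sin (π * ((m + 1 - ν) / 2)) = Real.cos (π * (ν - m) / 2) := by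
    rw [← Real.cos_pi_div_two_sub]
    ring_nf
  have hpow : (2 : ℝ) ^ ((m : ℝ) + 1 - 2) = 2 ^ m / 2 := by
    rw [show (m : ℝ) + 1 - 2 = m - 1 by ring, Real.rpow_sub_one two_ne_zero, Real.rpow_natCast]
  rw [hsin, show 1 - (m + 1 - ν) / 2 = (1 + ν - m) / 2 by ring] at hreflect
  rw [besselMoment, hpow, show (1 + ν + m) / 2 = (m + 1 + ν) / 2 by ring]
  linear_combination -(2 ^ m * Real.Gamma ((m + 1 + ν) / 2)) * hreflect

/-- The moment functional `x^k ↦ m_k`, i.e. the regularized integral over `[0, ∞)` against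
`J_ν`. -/
noncomputable def besselFunctional (ν : ℝ) : Polynomial ℂ →ₗ[ℂ] ℂ :=
  Polynomial.lsum fun k => (besselMoment ν k : ℂ) • LinearMap.id

theorem besselFunctional_monomial (k : ℕ) (c : ℂ) :
    besselFunctional ν (Polynomial.monomial k c) = c * besselMoment ν k := by
  simp [besselFunctional, mul_comm]

theorem besselFunctional_mul_X_pow (P : Polynomial ℂ) (j : ℕ) :
    besselFunctional ν (P * Polynomial.X ^ j) =
      ∑ k ∈ Finset.range (P.natDegree + 1), P.coeff k * besselMoment ν (j + k) := by
  conv_lhs => rw [P.as_sum_range, Finset.sum_mul, map_sum]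
  simp only [Polynomial.monomial_mul_X_pow, besselFunctional_monomial, add_comm]

theorem IsBesselOP.besselFunctional_mul_X_pow_eq_zero {n j : ℕ} {P : Polynomial ℂ}
    (hP : IsBesselOP ν n P) (hj : j < n) : besselFunctional ν (P * Polynomial.X ^ j) = 0 := by
  rw [besselFunctional_mul_X_pow, hP.2.1, hP.2.2 j hj]

end Moments

section HalfLines

variable {E : Type*} [NormedAddCommGroup E] {f : ℝ → E}

theorem integrable_of_integrableOn_Ioi_comp_neg (hf : IntegrableOn f (Set.Ioi 0))
    (hf_neg : IntegrableOn (fun x => f (-x)) (Set.Ioi 0)) : Integrable f := by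
  have hIio : IntegrableOn f (Set.Iio 0) := by
    rw [← (Measure.measurePreserving_neg volume).integrableOn_comp_preimage
      (Homeomorph.neg ℝ).measurableEmbedding]
    simpa [Function.comp_def] using hf_neg
  rw [← integrableOn_univ, ← Set.Iic_union_Ioi (a := (0 : ℝ))]
  exact ((integrableOn_Iic_iff_integrableOn_Iio).2 hIio).union hf

theorem integral_eq_integral_Ioi_add_comp_neg [NormedSpace ℝ E] (hf : Integrable f) :
    ∫ x, f x = ∫ x in Set.Ioi 0, (f x + f (-x)) := by
  rw [integral_add hf.integrableOn hf.comp_neg.integrableOn, integral_comp_neg_Ioi, neg_zero,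
    add_comm, intervalIntegral.integral_Iic_add_Ioi hf.integrableOn hf.integrableOn]

end HalfLines

section Weight

/-- The weight `e^{-sgn(x)νπi/2} K_ν(|x|)` on the real line, before rescaling by `nπ`. -/
noncomputable def besselKWeight (ν x : ℝ) : ℂ :=
  Complex.exp (-(Real.sign x : ℂ) * ν * π * Complex.I / 2) * (besselK ν |x| : ℂ)

theorem besselKWeight_mul {a : ℝ} (ha : 0 < a) (ν x : ℝ) :
    besselKWeight ν (a * x) =
      Complex.exp (-(Real.sign x : ℂ) * ν * π * Complex.I / 2) * (besselK ν (a * |x|) : ℂ) := by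
  have hsign : Real.sign (a * x) = Real.sign x := by
    rcases lt_trichotomy x 0 with hx | rfl | hx
    · rw [Real.sign_of_neg hx, Real.sign_of_neg (mul_neg_of_pos_of_neg ha hx)]
    · rw [mul_zero]
    · rw [Real.sign_of_pos hx, Real.sign_of_pos (mul_pos ha hx)]
  rw [besselKWeight, hsign, abs_mul, abs_of_pos ha]

theorem I_pow_mul_exp_add_neg_I_pow_mul_exp (ν : ℝ) (m : ℕ) :
    Complex.I ^ m * Complex.exp (-(ν * π * Complex.I / 2)) +
      (-Complex.I) ^ m * Complex.exp (ν * π * Complex.I / 2) =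
      ((2 * Real.cos (π * (ν - m) / 2) : ℝ) : ℂ) := by
  have hI : Complex.I ^ m = Complex.exp (m * (π / 2 * Complex.I)) := by
    rw [Complex.exp_nat_mul, Complex.exp_pi_div_two_mul_I]
  have hI_neg : (-Complex.I) ^ m = Complex.exp (m * (-π / 2 * Complex.I)) := by
    rw [Complex.exp_nat_mul, Complex.exp_neg_pi_div_two_mul_I]
  rw [hI, hI_neg, ← Complex.exp_add, ← Complex.exp_add]
  push_cast
  rw [Complex.two_cos]
  ring_nf

variable {ν : ℝ}

theorem I_mul_pow_mul_besselKWeight (m : ℕ) {x : ℝ} (hx : 0 < x) :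
    (Complex.I * x) ^ m * besselKWeight ν x =
      Complex.I ^ m * Complex.exp (-(ν * π * Complex.I / 2)) * (x ^ m * besselK ν x : ℝ) := by
  rw [besselKWeight, Real.sign_of_pos hx, abs_of_pos hx, mul_pow]
  push_cast
  ring_nf

theorem I_mul_neg_pow_mul_besselKWeight_neg (m : ℕ) {x : ℝ} (hx : 0 < x) :
    (Complex.I * (-x : ℝ)) ^ m * besselKWeight ν (-x) =
      (-Complex.I) ^ m * Complex.exp (ν * π * Complex.I / 2) * (x ^ m * besselK ν x : ℝ) := by
  rw [besselKWeight, Real.sign_of_neg (neg_neg_of_pos hx), abs_neg, abs_of_pos hx,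
    Complex.ofReal_neg, mul_neg, ← neg_mul, mul_pow]
  push_cast
  ring_nf

theorem integrable_I_mul_pow_mul_besselKWeight {m : ℕ} (hν : |ν| < m + 1) :
    Integrable fun x : ℝ => (Complex.I * x) ^ m * besselKWeight ν x := by
  have hmellin : IntegrableOn (fun x : ℝ => ((x ^ m * besselK ν x : ℝ) : ℂ)) (Set.Ioi 0) := by
    have hreal := integrableOn_rpow_mul_besselK hν
    simp only [add_sub_cancel_right, Real.rpow_natCast] at hreal
    exact hreal.ofReal
  exact integrable_of_integrableOn_Ioi_comp_neg
    ((integrableOn_congr_fun (fun _ => I_mul_pow_mul_besselKWeight m) measurableSet_Ioi).2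
      (hmellin.const_mul _))
    ((integrableOn_congr_fun (fun _ => I_mul_neg_pow_mul_besselKWeight_neg m)
      measurableSet_Ioi).2 (hmellin.const_mul _))

theorem integral_I_mul_pow_mul_besselKWeight {m : ℕ} (hν : |ν| < m + 1) :
    ∫ x : ℝ, (Complex.I * x) ^ m * besselKWeight ν x = π * besselMoment ν m := by
  have hfold (x : ℝ) (hx : x ∈ Set.Ioi 0) :
      (Complex.I * x) ^ m * besselKWeight ν x +
        (Complex.I * (-x : ℝ)) ^ m * besselKWeight ν (-x) =
      ((2 * Real.cos (π * (ν - m) / 2) : ℝ) : ℂ) * (x ^ m * besselK ν x : ℝ) := by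
    rw [I_mul_pow_mul_besselKWeight m hx, I_mul_neg_pow_mul_besselKWeight_neg m hx, ← add_mul,
      I_pow_mul_exp_add_neg_I_pow_mul_exp]
  have hmellin := integral_rpow_mul_besselK hν
  simp only [add_sub_cancel_right, Real.rpow_natCast] at hmellin
  rw [integral_eq_integral_Ioi_add_comp_neg (integrable_I_mul_pow_mul_besselKWeight hν),
    setIntegral_congr_fun measurableSet_Ioi hfold, integral_const_mul, integral_complex_ofReal,
    hmellin, ← Complex.ofReal_mul, ← pi_mul_besselMoment (abs_lt.1 hν).2, Complex.ofReal_mul]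

theorem integrable_eval_mul_besselKWeight (hν : |ν| < 1) (Q : Polynomial ℂ) :
    Integrable fun x : ℝ => Q.eval (Complex.I * x) * besselKWeight ν x := by
  induction Q using Polynomial.induction_on' with
  | add p q hp hq =>
    simp only [Polynomial.eval_add, add_mul]
    exact hp.add hq
  | monomial k c =>
    simp only [Polynomial.eval_monomial, mul_assoc c]
    exact (integrable_I_mul_pow_mul_besselKWeight
      (hν.trans_le (le_add_of_nonneg_left k.cast_nonneg))).const_mul c

theorem integral_eval_mul_besselKWeight (hν : |ν| < 1) (Q : Polynomial ℂ) :
    ∫ x : ℝ, Q.eval (Complex.I * x) * besselKWeight ν x = π * besselFunctional ν Q := by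
  induction Q using Polynomial.induction_on' with
  | add p q hp hq =>
    simp only [Polynomial.eval_add, add_mul]
    rw [integral_add (integrable_eval_mul_besselKWeight hν p)
      (integrable_eval_mul_besselKWeight hν q), hp, hq, map_add, mul_add]
  | monomial k c =>
    simp only [Polynomial.eval_monomial, mul_assoc c]
    rw [integral_const_mul, integral_I_mul_pow_mul_besselKWeight
      (hν.trans_le (le_add_of_nonneg_left k.cast_nonneg)), besselFunctional_monomial,
      mul_left_comm]

end Weight

theorem rescaled_orthogonality_general (ν : ℝ) (hν : |ν| < 1) (a : ℝ) (ha : 0 < a) (n : ℕ)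
    (P : Polynomial ℂ) (hP : IsBesselOP ν n P) :
    ∀ j < n,
      Integrable (fun x : ℝ =>
        ((Complex.I * a) ^ n)⁻¹ * P.eval (Complex.I * a * x) * (x : ℂ) ^ j *
          Complex.exp (-(Real.sign x : ℂ) * ν * π * Complex.I / 2) *
          (besselK ν (a * |x|) : ℂ)) ∧
      ∫ x : ℝ,
        ((Complex.I * a) ^ n)⁻¹ * P.eval (Complex.I * a * x) * (x : ℂ) ^ j *
          Complex.exp (-(Real.sign x : ℂ) * ν * π * Complex.I / 2) *
          (besselK ν (a * |x|) : ℂ) = 0 := by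
  intro j hj
  set G : ℝ → ℂ := fun x =>
    (P * Polynomial.X ^ j).eval (Complex.I * x) * besselKWeight ν x with hG
  have hIa : Complex.I * (a : ℂ) ≠ 0 := mul_ne_zero Complex.I_ne_zero (by exact_mod_cast ha.ne')
  have hrescale (x : ℝ) : ((Complex.I * a) ^ n)⁻¹ * P.eval (Complex.I * a * x) * (x : ℂ) ^ j *
      Complex.exp (-(Real.sign x : ℂ) * ν * π * Complex.I / 2) * (besselK ν (a * |x|) : ℂ) =
      ((Complex.I * a) ^ n)⁻¹ * ((Complex.I * a) ^ j)⁻¹ * G (a * x) := by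
    simp only [hG, besselKWeight_mul ha, Polynomial.eval_mul, Polynomial.eval_pow,
      Polynomial.eval_X, Complex.ofReal_mul, ← mul_assoc, mul_pow _ (x : ℂ)]
    field_simp
  simp only [hrescale]
  refine ⟨((integrable_eval_mul_besselKWeight hν _).comp_mul_left' ha.ne').const_mul _, ?_⟩
  rw [integral_const_mul, Measure.integral_comp_mul_left G, integral_eval_mul_besselKWeight hν,
    hP.besselFunctional_mul_X_pow_eq_zero hj, mul_zero, smul_zero, mul_zero]

/-- **Proposition (orthogonality of the rescaled polynomials).**
For `0 < ν < 1` and `Δ_n ≠ 0`, the rescaled polynomial `P̃_n(z) = (inπ)^{-n} P_n(inπ z)`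
satisfies `∫_{-∞}^∞ P̃_n(x) x^j e^{-sgn(x) νπi/2} K_ν(nπ|x|) dx = 0` for `j = 0, …, n-1`,
the integral being absolutely convergent. -/
theorem rescaled_orthogonality (ν : ℝ) (hν0 : 0 < ν) (hν : ν < 1) (n : ℕ)
    (hΔ : hankelDet ν n ≠ 0) (P : Polynomial ℂ) (hP : IsBesselOP ν n P) :
    ∀ j < n,
      Integrable (fun x : ℝ =>
        ((Complex.I * n * π) ^ n)⁻¹ * P.eval (Complex.I * n * π * x) * (x : ℂ) ^ j *
          Complex.exp (-(Real.sign x : ℂ) * ν * π * Complex.I / 2) *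
          (besselK ν (n * π * |x|) : ℂ)) ∧
      ∫ x : ℝ,
        ((Complex.I * n * π) ^ n)⁻¹ * P.eval (Complex.I * n * π * x) * (x : ℂ) ^ j *
          Complex.exp (-(Real.sign x : ℂ) * ν * π * Complex.I / 2) *
          (besselK ν (n * π * |x|) : ℂ) = 0 := by
  intro j hj
  simpa only [Complex.ofReal_mul, Complex.ofReal_natCast, ← mul_assoc] using
    rescaled_orthogonality_general ν (abs_lt.2 ⟨by linarith, hν⟩) (n * π)
      (mul_pos (Nat.cast_pos.2 (Nat.zero_lt_of_lt hj)) Real.pi_pos) n P hP j hj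
end

section
/- Let ν > 0. For every z ∈ ℂ with Re z > 0 and Im z > 0: (ν/4)·Log(((z²−1)^{1/2}−i)/((z²−1)^{1/2}+i)) = −(νπ/2)·ψ(z) − νπi/4, and for every z with Re z > 0 and Im z < 0: (ν/4)·Log(((z²−1)^{1/2}−i)/((z²−1)^{1/2}+i)) = (νπ/2)·ψ(z) − νπi/4, where Log is the principal logarithm. -/
open Real

/-- `(z²-1)^{1/2} = z √(1 - z⁻²)`, the branch analytic on `ℂ∖[-1,1]` which is positive
for real `z > 1`. -/
noncomputable def sqBranch (z : ℂ) : ℂ := z * (1 - z⁻¹ ^ 2) ^ ((1 : ℂ) / 2)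

/-- The analytic continuation `ψ(z) = (1/π) Log((1+(1-z²)^{1/2})/z)` of the equilibrium
density, with principal branches. -/
noncomputable def psiC (z : ℂ) : ℂ :=
  (1 / (π : ℂ)) * Complex.log ((1 + (1 - z ^ 2) ^ ((1 : ℂ) / 2)) / z)

/-!
With `ζ = 1/z`, both sides are logarithms of the root `v` of `X² - 2ζX + 1` lying in the upper
half-plane, namely `v = ζ + i√(1 - ζ²)`. On the one hand, `((z²-1)^{1/2} - i)/((z²-1)^{1/2} + i)` is
`-v²`, and `Log(-v²) = 2 Log v - πi` because `0 < arg v < π`. On the other hand, comparing the signs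
of `Im z` and `Im (z²-1)^{1/2}` shows that `(1-z²)^{1/2} = ∓i (z²-1)^{1/2}` for `±Im z > 0`, so that
`(1 + (1-z²)^{1/2})/z` is the root `v⁻¹ = ζ - i√(1 - ζ²)` above the real axis and `v` below it.
-/

theorem complex_sqrt_sq (a : ℂ) : a.sqrt ^ 2 = a :=
  Complex.cpow_ofNat_inv_pow a 2

theorem complex_sqrt_eq_of_sq_eq {a b : ℂ} (ha : 0 < a.re) (h : a ^ 2 = b) : b.sqrt = a := by
  rw [← h]
  exact Complex.sq_cpow_two_inv ha

theorem complex_re_sqrt_pos {a : ℂ} (ha : a ∈ Complex.slitPlane) : 0 < a.sqrt.re := by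
  rw [Complex.sqrt, Complex.cpow_inv_two_re, Real.sqrt_pos]
  have hnorm : 0 < ‖a‖ + a.re := by
    rcases Complex.mem_slitPlane_iff.mp ha with hre | him
    · positivity
    · linarith [neg_abs_le a.re, Complex.abs_re_lt_norm.mpr him]
  positivity

theorem complex_sq_im (a : ℂ) : (a ^ 2).im = 2 * (a.re * a.im) := by
  rw [sq, Complex.mul_im]
  ring

theorem one_sub_sq_mem_slitPlane {a : ℂ} (ha : a.im ≠ 0) : 1 - a ^ 2 ∈ Complex.slitPlane := by
  rw [Complex.mem_slitPlane_iff]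
  by_cases hre : a.re = 0
  · left
    simp only [Complex.sub_re, Complex.one_re, sq, Complex.mul_re, hre]
    nlinarith [mul_self_nonneg a.im]
  · right
    simpa [complex_sq_im] using And.intro hre ha

theorem complex_ne_zero_of_im_ne_zero {z : ℂ} (hz : z.im ≠ 0) : z ≠ 0 := by
  rintro rfl
  exact hz rfl

theorem complex_inv_im_ne_zero {z : ℂ} (hz : z.im ≠ 0) : z⁻¹.im ≠ 0 := by
  rw [Complex.inv_im]
  exact div_ne_zero (neg_ne_zero.mpr hz)
    (Complex.normSq_pos.mpr (complex_ne_zero_of_im_ne_zero hz)).ne'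

theorem complex_log_neg_sq_of_im_pos {v : ℂ} (hv : 0 < v.im) :
    Complex.log (-v ^ 2) = 2 * Complex.log v - π * Complex.I := by
  have hv₀ : v ≠ 0 := complex_ne_zero_of_im_ne_zero hv.ne'
  have harg_neg : (-v).arg = v.arg - π := Complex.arg_neg_eq_arg_sub_pi_of_im_pos hv
  have hlog_neg : Complex.log (-v) = Complex.log v - π * Complex.I := by
    rw [Complex.log, Complex.log, norm_neg, harg_neg]
    push_cast
    ring
  rw [show -v ^ 2 = v * -v by ring, Complex.log_mul hv₀ (neg_ne_zero.mpr hv₀), hlog_neg]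
  · ring
  · rw [harg_neg]
    have harg_pos : 0 < v.arg := by linarith [(-v).neg_pi_lt_arg]
    constructor <;> linarith [v.arg_le_pi]

/-- The right inverse `ζ + i√(1 - ζ²)` of the Joukowski map `v ↦ (v + v⁻¹)/2`, with the principal
square root. With this choice of sign nonreal `ζ` are sent to the upper half-plane. -/
noncomputable def invJoukowski (ζ : ℂ) : ℂ := ζ + Complex.I * (1 - ζ ^ 2).sqrt

theorem inv_invJoukowski (ζ : ℂ) :
    (invJoukowski ζ)⁻¹ = ζ - Complex.I * (1 - ζ ^ 2).sqrt := by
  refine inv_eq_of_mul_eq_one_right ?_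
  rw [invJoukowski]
  linear_combination (1 - ζ ^ 2).sqrt ^ 2 * (-Complex.I_sq) + complex_sqrt_sq (1 - ζ ^ 2)

theorem invJoukowski_im_pos {ζ : ℂ} (hζ : ζ.im ≠ 0) : 0 < (invJoukowski ζ).im := by
  have hre : 0 < (1 - ζ ^ 2).sqrt.re := complex_re_sqrt_pos (one_sub_sq_mem_slitPlane hζ)
  rcases hζ.lt_or_gt with hneg | hpos
  · have hinv : (invJoukowski ζ)⁻¹.im < 0 := by
      rw [inv_invJoukowski, Complex.sub_im, Complex.I_mul_im]
      linarith
    rw [Complex.inv_im] at hinv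
    by_contra! hle
    exact hinv.not_ge (div_nonneg (neg_nonneg.mpr hle) (Complex.normSq_nonneg _))
  · rw [invJoukowski, Complex.add_im, Complex.I_mul_im]
    linarith

theorem sqBranch_eq_mul_sqrt (z : ℂ) : sqBranch z = z * (1 - z⁻¹ ^ 2).sqrt := by
  rw [sqBranch, Complex.sqrt, one_div]

theorem pi_mul_psiC (z : ℂ) :
    π * psiC z = Complex.log ((1 + (1 - z ^ 2).sqrt) / z) := by
  have hπ : (π : ℂ) ≠ 0 := Complex.ofReal_ne_zero.mpr Real.pi_ne_zero
  rw [psiC, ← mul_assoc, mul_one_div_cancel hπ, one_mul, Complex.sqrt, one_div]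

section OffRealAxis

variable {z : ℂ}

theorem sqBranch_sq (hz : z ≠ 0) : sqBranch z ^ 2 = z ^ 2 - 1 := by
  rw [sqBranch_eq_mul_sqrt, mul_pow, complex_sqrt_sq]
  field_simp

theorem im_mul_im_sqBranch_pos (hz : z.im ≠ 0) : 0 < z.im * (sqBranch z).im := by
  set t := (1 - z⁻¹ ^ 2).sqrt with ht
  have htre : 0 < t.re :=
    complex_re_sqrt_pos (one_sub_sq_mem_slitPlane (complex_inv_im_ne_zero hz))
  have hz₀ : z ≠ 0 := complex_ne_zero_of_im_ne_zero hz
  have hN : Complex.normSq z ≠ 0 := (Complex.normSq_pos.mpr hz₀).ne'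
  have hreim : z.re * z.im = Complex.normSq z ^ 2 * (t.re * t.im) := by
    have him : (t ^ 2).im = -(z⁻¹ ^ 2).im := by
      rw [ht, complex_sqrt_sq, Complex.sub_im, Complex.one_im, zero_sub]
    rw [complex_sq_im, complex_sq_im, Complex.inv_re, Complex.inv_im] at him
    field_simp at him
    linarith
  have hsum : z.im * (z * t).im = t.re * (z.im ^ 2 + (Complex.normSq z * t.im) ^ 2) := by
    rw [Complex.mul_im]
    linear_combination t.im * hreim
  rw [sqBranch_eq_mul_sqrt, hsum]
  positivity

theorem sqrt_one_sub_sq_of_im_pos (hz : 0 < z.im) :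
    (1 - z ^ 2).sqrt = -(Complex.I * sqBranch z) := by
  have hz₀ : z ≠ 0 := complex_ne_zero_of_im_ne_zero hz.ne'
  refine complex_sqrt_eq_of_sq_eq ?_ ?_
  · simpa using pos_of_mul_pos_right (im_mul_im_sqBranch_pos hz.ne') hz.le
  · rw [neg_sq, mul_pow, Complex.I_sq, sqBranch_sq hz₀]
    ring

theorem sqrt_one_sub_sq_of_im_neg (hz : z.im < 0) :
    (1 - z ^ 2).sqrt = Complex.I * sqBranch z := by
  have hz₀ : z ≠ 0 := complex_ne_zero_of_im_ne_zero hz.ne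
  refine complex_sqrt_eq_of_sq_eq ?_ ?_
  · simpa using neg_of_mul_pos_right (im_mul_im_sqBranch_pos hz.ne) hz.le
  · rw [mul_pow, Complex.I_sq, sqBranch_sq hz₀]
    ring

theorem sqBranch_sub_I_div_add_I (hz : z ≠ 0) :
    (sqBranch z - Complex.I) / (sqBranch z + Complex.I) = -invJoukowski z⁻¹ ^ 2 := by
  have hnum : sqBranch z - Complex.I = -(Complex.I * z) * invJoukowski z⁻¹ := by
    rw [sqBranch_eq_mul_sqrt, invJoukowski]
    linear_combination z * (1 - z⁻¹ ^ 2).sqrt * Complex.I_sq + Complex.I * mul_inv_cancel₀ hz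
  have hden : sqBranch z + Complex.I = Complex.I * z * (invJoukowski z⁻¹)⁻¹ := by
    rw [sqBranch_eq_mul_sqrt, inv_invJoukowski]
    linear_combination z * (1 - z⁻¹ ^ 2).sqrt * Complex.I_sq - Complex.I * mul_inv_cancel₀ hz
  have hIz : Complex.I * z ≠ 0 := mul_ne_zero Complex.I_ne_zero hz
  rw [hnum, hden, neg_mul, neg_div, mul_div_mul_left _ _ hIz, div_inv_eq_mul, sq]

theorem log_sqBranch_sub_I_div_add_I (hz : z.im ≠ 0) :
    Complex.log ((sqBranch z - Complex.I) / (sqBranch z + Complex.I)) =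
      2 * Complex.log (invJoukowski z⁻¹) - π * Complex.I := by
  rw [sqBranch_sub_I_div_add_I (complex_ne_zero_of_im_ne_zero hz),
    complex_log_neg_sq_of_im_pos (invJoukowski_im_pos (complex_inv_im_ne_zero hz))]

theorem pi_mul_psiC_of_im_pos (hz : 0 < z.im) :
    π * psiC z = -Complex.log (invJoukowski z⁻¹) := by
  have hz₀ : z ≠ 0 := complex_ne_zero_of_im_ne_zero hz.ne'
  have hroot : (1 + (1 - z ^ 2).sqrt) / z = (invJoukowski z⁻¹)⁻¹ := by
    rw [sqrt_one_sub_sq_of_im_pos hz, sqBranch_eq_mul_sqrt, inv_invJoukowski]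
    field_simp
    ring
  have him : 0 < (invJoukowski z⁻¹).im := invJoukowski_im_pos (complex_inv_im_ne_zero hz.ne')
  rw [pi_mul_psiC, hroot,
    Complex.log_inv _ (Complex.slitPlane_arg_ne_pi (Complex.mem_slitPlane_iff.mpr (.inr him.ne')))]

theorem pi_mul_psiC_of_im_neg (hz : z.im < 0) :
    π * psiC z = Complex.log (invJoukowski z⁻¹) := by
  have hz₀ : z ≠ 0 := complex_ne_zero_of_im_ne_zero hz.ne
  rw [pi_mul_psiC, sqrt_one_sub_sq_of_im_neg hz, sqBranch_eq_mul_sqrt, invJoukowski]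
  congr 1
  field_simp

end OffRealAxis

theorem logD2_eq_psi_general (ν z : ℂ) :
    (0 < z.im →
      (ν / 4) * Complex.log ((sqBranch z - Complex.I) / (sqBranch z + Complex.I)) =
        -((ν * π / 2) * psiC z) - ν * π * Complex.I / 4) ∧
    (z.im < 0 →
      (ν / 4) * Complex.log ((sqBranch z - Complex.I) / (sqBranch z + Complex.I)) =
        (ν * π / 2) * psiC z - ν * π * Complex.I / 4) := by
  constructor <;> intro hz
  · rw [log_sqBranch_sub_I_div_add_I hz.ne']
    linear_combination ν / 2 * pi_mul_psiC_of_im_pos hz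
  · rw [log_sqBranch_sub_I_div_add_I hz.ne]
    linear_combination -ν / 2 * pi_mul_psiC_of_im_neg hz

/-- **Lemma (the second Szegő function and `ψ`).**
For `ν > 0` and `Re z > 0`:
`(ν/4) Log(((z²-1)^{1/2}-i)/((z²-1)^{1/2}+i)) = ∓(νπ/2) ψ(z) - νπi/4` according to
whether `Im z > 0` or `Im z < 0`. -/
theorem logD2_eq_psi (ν : ℝ) (hν : 0 < ν) (z : ℂ) (hre : 0 < z.re) :
    (0 < z.im →
      ((ν : ℂ) / 4) * Complex.log ((sqBranch z - Complex.I) / (sqBranch z + Complex.I)) =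
        -(((ν : ℂ) * π / 2) * psiC z) - (ν : ℂ) * π * Complex.I / 4) ∧
    (z.im < 0 →
      ((ν : ℂ) / 4) * Complex.log ((sqBranch z - Complex.I) / (sqBranch z + Complex.I)) =
        ((ν : ℂ) * π / 2) * psiC z - (ν : ℂ) * π * Complex.I / 4) :=
  logD2_eq_psi_general ν z
end
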